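/- Let k > 0 and let B be a linear map with: (i) the k-weak-coupling inequality |Re⟨|A|^k ψ, Bψ⟩| ≤ c ⟨|A|^k ψ, ψ⟩ for all ψ ∈ D(|A|^k) and some c ≥ 0; (ii) constants d > 0 and 0 ≤ r < k such that ‖Bψ‖ ≤ d ‖ψ‖_{r/2} for every ψ ∈ D(|A|^{r/2}); and (iii) a non-degenerate connectedness chain S ⊆ ℕ² for (A,B). Assume a propagator assignment u ↦ (Υ^u_t) is given, associating with every T > 0 and every piecewise constant control u : [0,T] → ℝ a family of unitary operators on H with Υ^u_0 = Id, satisfying the concatenation property over subdivision of controls and such that, for initial states in D(|A|^{k/2}), trajectories stay in D(|A|^{k/2}), are absolutely continuous with a.e. derivative (A + u(t)B)Υ^u_tψ, and obey the energy estimate ‖Υ^u_tψ‖_{k/2} ≤ e^{c‖u‖_{L¹}}‖ψ‖_{k/2}. Then (A,B) is approximately simultaneously controllable for the norm ‖·‖_{s/2} for every 0 ≤ s < k: for every n ∈ ℕ, every ψ_1,…,ψ_n ∈ D(|A|^{s/2}), every unitary operator Υ̂ of H with Υ̂(ψ_1),…,Υ̂(ψ_n) ∈ D(|A|^{s/2}),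 and every ε > 0, there exist T_ε > 0 and a piecewise constant control u_ε : [0,T_ε] → ℝ such that ‖Υ̂ψ_j − Υ^{u_ε}_{T_ε} ψ_j‖_{s/2} < ε for every j = 1,…,n. -/

import Mathlib

/-!
The heart of the matter is a density statement: every unitary operator is a strong limit, in the
`p`-norm, of propagators, for each `0 ≤ p < k / 2`.

*Stability.* A propagator is an isometry of `H` and, by the energy estimate, bounded on
`D(|A|^(k/2))`. By the K-functional (`interp_op`) it obeys the same bound in every intermediate
`p`-norm. Hence the maps which are strong `p`-norm limits of propagators (`App`) are stable under
composition and strong limits. Likewise, convergence in `H` with a bounded `k/2`-norm is convergence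
in the `p`-norm (`tendsto_sNorm_of_bounded`), so that approximations need only be made in `H`. The
backward free evolution is such a limit, the forward one being almost periodic
(`Sys.app_free_symm`).

*Resonance.* The pair `(a, b)` of a non-degenerate transition is driven by the control
`h cos (ω t + α)`, `ω = |lam a - lam b|`, on a time `θ / h`. First-order averaging (`averaging`)
shows that, as `h → 0` and after the free evolution is removed, only the rotation of the plane of
`φ a, φ b` is left, the other transitions having other frequencies (`Sys.rotation_bound`,
`Sys.app_rotation`). The `L¹` norm of these controls, hence the bound on the propagators, stays
bounded. If the gap is not zero, varying `α` gives all the determinant-one transformations of the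
plane (`Edge.full`). If it is zero, a rotation of angle `π / 2` and its inverse still exchange the
two levels (`Edge.weak`).

*Propagation.* The spectrum is unbounded, so some transition of the chain has a non-zero gap.
Conjugation by exchanges along the chain carries the control of its plane to all coordinate planes
(`full_basis`), then to the planes of a finitely supported vector and a higher level (`full_span`).
When that level goes to infinity only the first coordinate matters: the complex reflection along
any unit vector of `D(|A|^p)` is a limit of propagators (`app_refl`).

*Conclusion.* The families `ψ j` and `Υ̂ (ψ j)` have the same inner products, so finitely many
complex reflections along vectors of `D(|A|^p)` carry one exactly onto the other
(`exists_app_family`).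

Two points concern the encoding. The equation is in integrated form, so the integrability of its
right-hand side and the skew-symmetry of `B` have to be recovered (`Sys.rhs_integrable`,
`Sys.B_skew_basis`). And `Aop` is a total function vanishing outside `D(A)`. When `k < 2` some
vectors of `D(|A|^(k/2))` are not in `D(A)`, and the equation, taken literally, would make them
stationary, which contradicts linearity. So the hypotheses force `2 ≤ k` (`Sys.two_le`), whence
`D(|A|^(k/2)) ⊆ D(A)`.
-/

/- STATEMENT 17 (approximate simultaneous controllability in the s/2-norm for
k-weakly-coupled systems admitting a non-degenerate connectedness chain). -/

open Filter MeasureTheory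
open scoped ComplexInnerProductSpace

noncomputable section

/-- The domain `D(|A|^s)`. -/
def domAs {H : Type*} [NormedAddCommGroup H] [InnerProductSpace ℂ H]
    (φ : HilbertBasis ℕ ℂ H) (lam : ℕ → ℝ) (s : ℝ) : Set H :=
  {ψ : H | Summable fun n => lam n ^ (2 * s) * ‖φ.repr ψ n‖ ^ 2}

/-- The `s`-norm. -/
def sNorm {H : Type*} [NormedAddCommGroup H] [InnerProductSpace ℂ H]
    (φ : HilbertBasis ℕ ℂ H) (lam : ℕ → ℝ) (s : ℝ) (ψ : H) : ℝ :=
  Real.sqrt (∑' n, lam n ^ (2 * s) * ‖φ.repr ψ n‖ ^ 2)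

/-- `|A|^s ψ = Σ_n lam_n^s ⟨φ_n,ψ⟩ φ_n`. -/
def absApow {H : Type*} [NormedAddCommGroup H] [InnerProductSpace ℂ H] [CompleteSpace H]
    (φ : HilbertBasis ℕ ℂ H) (lam : ℕ → ℝ) (s : ℝ) (ψ : H) : H :=
  ∑' n, lam n ^ s • (φ.repr ψ n • φ n)

/-- The skew-adjoint operator `Aψ = Σ_n (−iλ_n)⟨φ_n,ψ⟩φ_n`. -/
def Aop {H : Type*} [NormedAddCommGroup H] [InnerProductSpace ℂ H] [CompleteSpace H]
    (φ : HilbertBasis ℕ ℂ H) (lam : ℕ → ℝ) (ψ : H) : H :=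
  ∑' n, (-(Complex.I * (lam n : ℂ))) • (φ.repr ψ n • φ n)

/-- `u` is piecewise constant on `[0,T]`. -/
def PiecewiseConstant (u : ℝ → ℝ) (T : ℝ) : Prop :=
  ∃ (m : ℕ) (pts : Fin (m + 1) → ℝ) (vals : Fin m → ℝ),
    pts 0 = 0 ∧ pts (Fin.last m) = T ∧ Monotone pts ∧
      ∀ i : Fin m, ∀ t ∈ Set.Ico (pts i.castSucc) (pts i.succ), u t = vals i

/-- `S ⊆ ℕ²` couples the levels `j` and `l` for the system `(A,B)`. -/
def Couples {H : Type*} [NormedAddCommGroup H] [InnerProductSpace ℂ H]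
    (φ : HilbertBasis ℕ ℂ H) (B : H → H) (S : Set (ℕ × ℕ)) (j l : ℕ) : Prop :=
  ∃ (q : ℕ) (σ : Fin (q + 1) → ℕ × ℕ),
    (∀ m, σ m ∈ S) ∧ (σ 0).1 = j ∧ (σ (Fin.last q)).2 = l ∧
      (∀ m : Fin q, (σ m.castSucc).2 = (σ m.succ).1) ∧
      ∀ m, (⟪φ (σ m).1, B (φ (σ m).2)⟫ : ℂ) ≠ 0

/-- `S` is a connectedness chain for `(A,B)`. -/
def ConnectednessChain {H : Type*} [NormedAddCommGroup H] [InnerProductSpace ℂ H]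
    (φ : HilbertBasis ℕ ℂ H) (B : H → H) (S : Set (ℕ × ℕ)) : Prop :=
  ∀ j l : ℕ, Couples φ B S j l

/-- The connectedness chain `S` is non-degenerate (non-resonant). -/
def NonDegenerate {H : Type*} [NormedAddCommGroup H] [InnerProductSpace ℂ H]
    (φ : HilbertBasis ℕ ℂ H) (lam : ℕ → ℝ) (B : H → H) (S : Set (ℕ × ℕ)) : Prop :=
  ∀ p ∈ S, ∀ q : ℕ × ℕ, q ≠ p → q ≠ (p.2, p.1) →
    (⟪φ q.2, B (φ q.1)⟫ : ℂ) ≠ 0 →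
      |lam p.1 - lam p.2| ≠ |lam q.1 - lam q.2|

/-! ### Graded norms -/

section Norms
variable {H : Type*} [NormedAddCommGroup H] [InnerProductSpace ℂ H]
  (φ : HilbertBasis ℕ ℂ H) (lam : ℕ → ℝ)

lemma repr_add (x y : H) (n : ℕ) : φ.repr (x + y) n = φ.repr x n + φ.repr y n := by
  simp

lemma repr_sub (x y : H) (n : ℕ) : φ.repr (x - y) n = φ.repr x n - φ.repr y n := by
  simp

lemma repr_smul (a : ℂ) (x : H) (n : ℕ) : φ.repr (a • x) n = a * φ.repr x n := by
  simp

lemma repr_basis (m n : ℕ) : φ.repr (φ m) n = if n = m then 1 else 0 := by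
  classical
  rw [HilbertBasis.repr_self, lp.single_apply]
  simp [Pi.single_apply]

lemma inner_basis (m : ℕ) (x : H) : ⟪φ m, x⟫ = φ.repr x m := (φ.repr_apply_apply x m).symm

lemma inner_basis' (m : ℕ) (x : H) : ⟪x, φ m⟫ = (starRingEnd ℂ) (φ.repr x m) := by
  rw [← inner_basis, inner_conj_symm]

lemma inner_basis_basis (m n : ℕ) : (⟪φ m, φ n⟫ : ℂ) = if m = n then 1 else 0 := by
  rw [inner_basis, repr_basis]

lemma norm_basis (m : ℕ) : ‖φ m‖ = 1 := φ.orthonormal.1 m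

lemma hasSum_normSq (x : H) : HasSum (fun n => ‖φ.repr x n‖ ^ 2) (‖x‖ ^ 2) := by
  have h := lp.hasSum_norm (p := 2) (by norm_num) (φ.repr x)
  simpa using h

lemma norm_repr_le (x : H) (n : ℕ) : ‖φ.repr x n‖ ≤ ‖x‖ := by
  rw [← inner_basis]
  simpa [norm_basis] using norm_inner_le_norm (𝕜 := ℂ) (φ n) x

lemma ext_repr {x y : H} (h : ∀ n, φ.repr x n = φ.repr y n) : x = y := by
  apply φ.repr.injective
  ext n
  exact h n

/-- The weighted coefficient sequence whose `ℓ²` norm is the `p`-norm. -/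
def wt (p : ℝ) (x : H) : ℕ → ℂ := fun n => ((lam n ^ p : ℝ) : ℂ) * φ.repr x n

variable {lam}

lemma wt_sq (hpos : ∀ n, 0 < lam n) (p : ℝ) (x : H) (n : ℕ) :
    ‖wt φ lam p x n‖ ^ 2 = lam n ^ (2 * p) * ‖φ.repr x n‖ ^ 2 := by
  rw [wt, norm_mul, mul_pow, Complex.norm_real, Real.norm_eq_abs, sq_abs,
    mul_comm 2 p, Real.rpow_mul (hpos n).le, Real.rpow_two]

lemma mem_dom_iff (hpos : ∀ n, 0 < lam n) (p : ℝ) (x : H) :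
    x ∈ domAs φ lam p ↔ Memℓp (wt φ lam p x) 2 := by
  rw [memℓp_gen_iff (by norm_num)]
  simp only [ENNReal.toReal_ofNat, Real.rpow_two, wt_sq φ hpos]
  rfl

lemma sNorm_eq (hpos : ∀ n, 0 < lam n) (p : ℝ) (x : H) (h : Memℓp (wt φ lam p x) 2) :
    sNorm φ lam p x = ‖(⟨wt φ lam p x, h⟩ : lp (fun _ : ℕ => ℂ) 2)‖ := by
  rw [lp.norm_eq_tsum_rpow (by norm_num), sNorm, Real.sqrt_eq_rpow]
  simp only [ENNReal.toReal_ofNat, Real.rpow_two, wt_sq φ hpos]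

lemma wt_add (p : ℝ) (x y : H) : wt φ lam p (x + y) = wt φ lam p x + wt φ lam p y := by
  ext n; simp [wt, mul_add]

lemma wt_smul (p : ℝ) (a : ℂ) (x : H) : wt φ lam p (a • x) = a • wt φ lam p x := by
  ext n; simp [wt]; ring

lemma dom_add (hpos : ∀ n, 0 < lam n) {p : ℝ} {x y : H} (hx : x ∈ domAs φ lam p)
    (hy : y ∈ domAs φ lam p) : x + y ∈ domAs φ lam p := by
  rw [mem_dom_iff φ hpos] at *
  rw [wt_add]
  exact hx.add hy

lemma dom_smul (hpos : ∀ n, 0 < lam n) {p : ℝ} (a : ℂ) {x : H} (hx : x ∈ domAs φ lam p) :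
    a • x ∈ domAs φ lam p := by
  rw [mem_dom_iff φ hpos] at *
  rw [wt_smul]
  exact hx.const_smul a

lemma dom_sub (hpos : ∀ n, 0 < lam n) {p : ℝ} {x y : H} (hx : x ∈ domAs φ lam p)
    (hy : y ∈ domAs φ lam p) : x - y ∈ domAs φ lam p := by
  have := dom_add φ hpos hx (dom_smul φ hpos (-1) hy)
  simpa [sub_eq_add_neg] using this

lemma dom_zero (p : ℝ) : (0 : H) ∈ domAs φ lam p := by
  simp [domAs, summable_zero]

lemma dom_finite {p : ℝ} {x : H} (F : Finset ℕ) (hF : ∀ n ∉ F, φ.repr x n = 0) :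
    x ∈ domAs φ lam p := by
  refine summable_of_ne_finset_zero (s := F) ?_
  intro n hn
  simp [hF n hn]

lemma dom_basis (p : ℝ) (m : ℕ) : φ m ∈ domAs φ lam p :=
  dom_finite φ {m} (fun n hn => by rw [repr_basis]; simp at hn; simp [hn])

lemma dom_sum (hpos : ∀ n, 0 < lam n) {p : ℝ} {ι : Type*} (F : Finset ι) (f : ι → H)
    (h : ∀ i ∈ F, f i ∈ domAs φ lam p) : ∑ i ∈ F, f i ∈ domAs φ lam p := by
  classical
  induction F using Finset.induction_on with
  | empty => simpa using dom_zero φ p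
  | insert a s ha ih =>
    rw [Finset.sum_insert ha]
    exact dom_add φ hpos (h a (by simp)) (ih fun i hi => h i (by simp [hi]))

lemma sNorm_nonneg (p : ℝ) (x : H) : 0 ≤ sNorm φ lam p x := Real.sqrt_nonneg _

lemma sNorm_sq (hpos : ∀ n, 0 < lam n) (p : ℝ) (x : H) :
    sNorm φ lam p x ^ 2 = ∑' n, lam n ^ (2 * p) * ‖φ.repr x n‖ ^ 2 :=
  Real.sq_sqrt (tsum_nonneg fun n => mul_nonneg (Real.rpow_nonneg (hpos n).le _) (sq_nonneg _))

lemma sNorm_add_le (hpos : ∀ n, 0 < lam n) {p : ℝ} {x y : H} (hx : x ∈ domAs φ lam p)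
    (hy : y ∈ domAs φ lam p) :
    sNorm φ lam p (x + y) ≤ sNorm φ lam p x + sNorm φ lam p y := by
  have hxy := dom_add φ hpos hx hy
  rw [mem_dom_iff φ hpos] at hx hy hxy
  rw [sNorm_eq φ hpos p _ hx, sNorm_eq φ hpos p _ hy, sNorm_eq φ hpos p _ hxy]
  have : (⟨wt φ lam p (x + y), hxy⟩ : lp (fun _ : ℕ => ℂ) 2)
      = ⟨wt φ lam p x, hx⟩ + ⟨wt φ lam p y, hy⟩ := Subtype.ext (wt_add φ p x y)
  rw [this]
  exact norm_add_le _ _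

lemma sNorm_smul (p : ℝ) (a : ℂ) (x : H) :
    sNorm φ lam p (a • x) = ‖a‖ * sNorm φ lam p x := by
  have : ∀ n, lam n ^ (2 * p) * ‖φ.repr (a • x) n‖ ^ 2
      = ‖a‖ ^ 2 * (lam n ^ (2 * p) * ‖φ.repr x n‖ ^ 2) := fun n => by
    rw [repr_smul, norm_mul]; ring
  rw [sNorm, sNorm]
  simp_rw [this]
  rw [tsum_mul_left, Real.sqrt_mul (sq_nonneg _), Real.sqrt_sq (norm_nonneg _)]

lemma sNorm_neg (p : ℝ) (x : H) : sNorm φ lam p (-x) = sNorm φ lam p x := by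
  simpa using sNorm_smul φ (lam := lam) p (-1) x

lemma sNorm_zero_vec (p : ℝ) : sNorm φ lam p (0 : H) = 0 := by
  simpa using sNorm_smul φ (lam := lam) p 0 (0 : H)

lemma sNorm_sub_le (hpos : ∀ n, 0 < lam n) {p : ℝ} {x y : H} (hx : x ∈ domAs φ lam p)
    (hy : y ∈ domAs φ lam p) :
    sNorm φ lam p (x - y) ≤ sNorm φ lam p x + sNorm φ lam p y := by
  have := sNorm_add_le φ hpos hx (dom_smul φ hpos (-1) hy)
  rw [sNorm_smul] at this
  simpa [sub_eq_add_neg] using this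

/-- The triangle inequality through an intermediate vector. -/
lemma sNorm_sub_le_sub_add_sub (hpos : ∀ n, 0 < lam n) {p : ℝ} {x y z : H}
    (hx : x ∈ domAs φ lam p) (hy : y ∈ domAs φ lam p) (hz : z ∈ domAs φ lam p) :
    sNorm φ lam p (x - z) ≤ sNorm φ lam p (x - y) + sNorm φ lam p (y - z) := by
  have := sNorm_add_le φ hpos (dom_sub φ hpos hx hy) (dom_sub φ hpos hy hz)
  simpa using this

lemma sNorm_sum_le (hpos : ∀ n, 0 < lam n) {p : ℝ} {ι : Type*} (F : Finset ι) (f : ι → H)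
    (h : ∀ i ∈ F, f i ∈ domAs φ lam p) :
    sNorm φ lam p (∑ i ∈ F, f i) ≤ ∑ i ∈ F, sNorm φ lam p (f i) := by
  classical
  induction F using Finset.induction_on with
  | empty => simp [sNorm_zero_vec]
  | insert a s ha ih =>
    rw [Finset.sum_insert ha, Finset.sum_insert ha]
    have h2 : ∀ i ∈ s, f i ∈ domAs φ lam p := fun i hi => h i (by simp [hi])
    exact (sNorm_add_le φ hpos (h a (by simp)) (dom_sum φ hpos s f h2)).trans
      (by linarith [ih h2])

lemma sNorm_zero_exp (x : H) : sNorm φ lam 0 x = ‖x‖ := by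
  rw [sNorm]
  simp [(hasSum_normSq φ x).tsum_eq]

lemma dom_zero_exp (x : H) : x ∈ domAs φ lam 0 := by
  simpa [domAs] using (hasSum_normSq φ x).summable

lemma sNorm_basis (hpos : ∀ n, 0 < lam n) (p : ℝ) (m : ℕ) : sNorm φ lam p (φ m) = lam m ^ p := by
  rw [sNorm, tsum_eq_single m]
  · rw [repr_basis]
    simp only [if_true, norm_one, one_pow, mul_one]
    rw [mul_comm 2 p, Real.rpow_mul (hpos m).le, Real.rpow_two,
      Real.sqrt_sq (Real.rpow_nonneg (hpos m).le _)]
  · intro n hn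
    simp [repr_basis, hn]

/-- Interpolation with a small parameter: since `lam n → ∞`, the `p`-norm is controlled by an
arbitrarily small multiple of the `q`-norm, `q > p`, up to a multiple of the norm of `H`. -/
lemma sNorm_interp (hpos : ∀ n, 0 < lam n) (htop : Tendsto lam atTop atTop) {p q : ℝ}
    (hpq : p < q) {η : ℝ} (hη : 0 < η) :
    ∃ C : ℝ, 0 ≤ C ∧ ∀ x ∈ domAs φ lam q, x ∈ domAs φ lam p ∧
      sNorm φ lam p x ^ 2 ≤ η * sNorm φ lam q x ^ 2 + C * ‖x‖ ^ 2 := by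
  have h1 : ∀ᶠ n in atTop, lam n ^ (2 * p) ≤ η * lam n ^ (2 * q) := by
    have h2 : Tendsto (fun n => lam n ^ (-(2 * (q - p)))) atTop (nhds 0) :=
      (tendsto_rpow_neg_atTop (by linarith)).comp htop
    filter_upwards [h2.eventually (gt_mem_nhds hη)] with n hn
    have : lam n ^ (2 * p) = lam n ^ (-(2 * (q - p))) * lam n ^ (2 * q) := by
      rw [← Real.rpow_add (hpos n)]; congr 1; ring
    rw [this]
    exact mul_le_mul_of_nonneg_right hn.le (Real.rpow_nonneg (hpos n).le _)
  obtain ⟨N, hN⟩ := eventually_atTop.1 h1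
  have hnn : ∀ (e : ℝ) n, 0 ≤ lam n ^ e := fun e n => Real.rpow_nonneg (hpos n).le _
  refine ⟨∑ n ∈ Finset.range N, lam n ^ (2 * p), Finset.sum_nonneg fun n _ => hnn _ n, ?_⟩
  set C := ∑ n ∈ Finset.range N, lam n ^ (2 * p) with hC
  have hC0 : 0 ≤ C := Finset.sum_nonneg fun n _ => hnn _ n
  intro x hx
  have key : ∀ n, lam n ^ (2 * p) * ‖φ.repr x n‖ ^ 2 ≤
      η * (lam n ^ (2 * q) * ‖φ.repr x n‖ ^ 2) + C * ‖φ.repr x n‖ ^ 2 := by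
    intro n
    have : lam n ^ (2 * p) ≤ η * lam n ^ (2 * q) + C := by
      rcases lt_or_ge n N with h | h
      · have h3 : lam n ^ (2 * p) ≤ C :=
          Finset.single_le_sum (f := fun n => lam n ^ (2 * p)) (fun i _ => hnn _ i)
            (Finset.mem_range.2 h)
        have := mul_nonneg hη.le (hnn (2 * q) n)
        linarith
      · linarith [hN n h]
    nlinarith [sq_nonneg ‖φ.repr x n‖]
  have hS : Summable fun n => η * (lam n ^ (2 * q) * ‖φ.repr x n‖ ^ 2) + C * ‖φ.repr x n‖ ^ 2 :=
    (Summable.mul_left η hx).add ((hasSum_normSq φ x).summable.mul_left C)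
  have hS' : Summable fun n => lam n ^ (2 * p) * ‖φ.repr x n‖ ^ 2 :=
    Summable.of_nonneg_of_le (fun n => mul_nonneg (hnn _ n) (sq_nonneg _)) key hS
  refine ⟨hS', ?_⟩
  rw [sNorm_sq φ hpos, sNorm_sq φ hpos, ← (hasSum_normSq φ x).tsum_eq, ← tsum_mul_left,
    ← tsum_mul_left, ← Summable.tsum_add (Summable.mul_left η hx)
      ((hasSum_normSq φ x).summable.mul_left C)]
  exact Summable.tsum_le_tsum key hS' hS

lemma dom_mono (hpos : ∀ n, 0 < lam n) (htop : Tendsto lam atTop atTop) {p q : ℝ}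
    (hpq : p ≤ q) {x : H} (hx : x ∈ domAs φ lam q) : x ∈ domAs φ lam p := by
  rcases hpq.eq_or_lt with rfl | h
  · exact hx
  · obtain ⟨C, -, h2⟩ := sNorm_interp φ hpos htop h one_pos
    exact (h2 x hx).1

/-- Convergence to `0` in `H` with a bounded `q`-norm forces convergence in the `p`-norm, `p < q`. -/
lemma tendsto_sNorm_of_bounded (hpos : ∀ n, 0 < lam n) (htop : Tendsto lam atTop atTop) {p q : ℝ}
    (hpq : p < q) {α : Type*} {l : Filter α} (f : α → H) (C : ℝ)
    (hf : ∀ᶠ a in l, f a ∈ domAs φ lam q ∧ sNorm φ lam q (f a) ≤ C)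
    (h0 : Tendsto f l (nhds 0)) : Tendsto (fun a => sNorm φ lam p (f a)) l (nhds 0) := by
  rw [Metric.tendsto_nhds]
  intro ε hε
  obtain ⟨K, hK, h1⟩ := sNorm_interp φ hpos htop hpq
    (η := ε ^ 2 / (2 * (C ^ 2 + 1))) (by positivity)
  have h2 : Tendsto (fun a => K * ‖f a‖ ^ 2) l (nhds 0) := by
    have := ((h0.norm.pow 2).const_mul K)
    simpa using this
  filter_upwards [hf, h2.eventually (gt_mem_nhds (show (0 : ℝ) < ε ^ 2 / 2 by positivity))]
    with a ha hb
  have h3 := (h1 _ ha.1).2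
  have hs := sNorm_nonneg φ (lam := lam) q (f a)
  have h4 : ε ^ 2 / (2 * (C ^ 2 + 1)) * sNorm φ lam q (f a) ^ 2 ≤ ε ^ 2 / 2 := by
    have : sNorm φ lam q (f a) ^ 2 ≤ C ^ 2 + 1 := by nlinarith [ha.2]
    calc _ ≤ ε ^ 2 / (2 * (C ^ 2 + 1)) * (C ^ 2 + 1) := by gcongr
      _ = ε ^ 2 / 2 := by field_simp
  have h5 : sNorm φ lam p (f a) ^ 2 < ε ^ 2 := by linarith
  rw [Real.dist_eq, sub_zero, abs_of_nonneg (sNorm_nonneg φ _ _)]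
  exact lt_of_pow_lt_pow_left₀ 2 hε.le h5

/-! #### Truncations -/

/-- The orthogonal projection of `x` on the first `N` levels. -/
def trunc (N : ℕ) (x : H) : H := ∑ i ∈ Finset.range N, φ.repr x i • φ i

lemma repr_sum {ι : Type*} (F : Finset ι) (f : ι → H) (n : ℕ) :
    φ.repr (∑ i ∈ F, f i) n = ∑ i ∈ F, φ.repr (f i) n := by
  simp_rw [← inner_basis, inner_sum]

lemma repr_trunc (N : ℕ) (x : H) (n : ℕ) :
    φ.repr (trunc φ N x) n = if n < N then φ.repr x n else 0 := by
  rw [trunc, repr_sum]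
  simp [repr_basis, Finset.sum_ite_eq]

lemma dom_trunc (p : ℝ) (N : ℕ) (x : H) : trunc φ N x ∈ domAs φ lam p :=
  dom_finite φ (Finset.range N) fun n hn => by
    rw [repr_trunc]; simp at hn; simp [hn]

lemma sNorm_mono_repr (hpos : ∀ n, 0 < lam n) {p : ℝ} {x y : H} (hy : y ∈ domAs φ lam p)
    (h : ∀ n, ‖φ.repr x n‖ ≤ ‖φ.repr y n‖) :
    x ∈ domAs φ lam p ∧ sNorm φ lam p x ≤ sNorm φ lam p y := by
  have hle : ∀ n, lam n ^ (2 * p) * ‖φ.repr x n‖ ^ 2 ≤ lam n ^ (2 * p) * ‖φ.repr y n‖ ^ 2 :=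
    fun n => mul_le_mul_of_nonneg_left (by gcongr; exact h n) (Real.rpow_nonneg (hpos n).le _)
  have hx : x ∈ domAs φ lam p := Summable.of_nonneg_of_le
    (fun n => mul_nonneg (Real.rpow_nonneg (hpos n).le _) (sq_nonneg _)) hle hy
  exact ⟨hx, Real.sqrt_le_sqrt (Summable.tsum_le_tsum hle hx hy)⟩

lemma sNorm_congr_repr {p : ℝ} {x y : H} (h : ∀ n, ‖φ.repr x n‖ = ‖φ.repr y n‖) :
    (x ∈ domAs φ lam p ↔ y ∈ domAs φ lam p) ∧ sNorm φ lam p x = sNorm φ lam p y := by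
  simp [domAs, sNorm, h]

lemma tendsto_trunc (p : ℝ) {x : H} (hx : x ∈ domAs φ lam p) :
    Tendsto (fun N => sNorm φ lam p (x - trunc φ N x)) atTop (nhds 0) := by
  have h1 := tendsto_sum_nat_add fun n => lam n ^ (2 * p) * ‖φ.repr x n‖ ^ 2
  have h2 : ∀ N, ∑' n, lam n ^ (2 * p) * ‖φ.repr (x - trunc φ N x) n‖ ^ 2
      = ∑' n, lam (n + N) ^ (2 * p) * ‖φ.repr x (n + N)‖ ^ 2 := by
    intro N
    have h3 : Summable fun n => lam n ^ (2 * p) * ‖φ.repr (x - trunc φ N x) n‖ ^ 2 := by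
      refine Summable.congr_cofinite hx ?_
      filter_upwards [(Finset.range N).finite_toSet.compl_mem_cofinite] with n hn
      simp at hn
      rw [repr_sub, repr_trunc, if_neg (by omega), sub_zero]
    rw [← h3.sum_add_tsum_nat_add N, Finset.sum_eq_zero, zero_add]
    · refine tsum_congr fun n => ?_
      rw [repr_sub, repr_trunc, if_neg (by omega), sub_zero]
    · intro n hn
      rw [repr_sub, repr_trunc, if_pos (Finset.mem_range.1 hn)]
      simp
  have h4 := (Real.continuous_sqrt.tendsto 0).comp h1
  rw [Real.sqrt_zero] at h4
  refine h4.congr fun N => ?_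
  simp only [Function.comp, sNorm, h2]

lemma tendsto_trunc_norm (x : H) : Tendsto (fun N => trunc φ N x) atTop (nhds x) := by
  have h := tendsto_trunc φ (lam := fun _ => 1) 0 (dom_zero_exp φ x)
  simp_rw [sNorm_zero_exp] at h
  rw [tendsto_iff_norm_sub_tendsto_zero]
  simpa [norm_sub_rev] using h

lemma norm_trunc_le (N : ℕ) (x : H) : ‖trunc φ N x‖ ≤ ‖x‖ := by
  have := (sNorm_mono_repr φ (lam := fun _ => 1) (fun _ => one_pos) (p := 0)
    (x := trunc φ N x) (dom_zero_exp φ x) (fun n => by rw [repr_trunc]; split_ifs <;> simp)).2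
  simpa [sNorm_zero_exp] using this

end Norms

/-! ### Interpolation of isometries -/

section Interp
variable {H : Type*} [NormedAddCommGroup H] [InnerProductSpace ℂ H]
  (φ : HilbertBasis ℕ ℂ H) {lam : ℕ → ℝ}

lemma exists_repr_mul (x : H) (w : ℕ → ℂ) (hw : ∀ n, ‖w n‖ ≤ 1) :
    ∃ y : H, ∀ n, φ.repr y n = w n * φ.repr x n := by
  have hm : Memℓp (fun n => w n * φ.repr x n) 2 := by
    rw [memℓp_gen_iff (by norm_num)]
    refine Summable.of_nonneg_of_le (fun n => by positivity) (fun n => ?_)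
      (hasSum_normSq φ x).summable
    simp only [ENNReal.toReal_ofNat, Real.rpow_two, norm_mul]
    have := mul_le_mul_of_nonneg_right (hw n) (norm_nonneg (φ.repr x n))
    rw [one_mul] at this
    exact pow_le_pow_left₀ (by positivity) this 2
  exact ⟨φ.repr.symm ⟨_, hm⟩, fun n => by simp⟩

/-- The K-functional estimate: the quadratic form `Σ μₙ/(t+μₙ) |xₙ|²`, `μₙ = lam n ^ (2q)`, is the
infimum of `‖a‖² + t⁻¹ ‖b‖_q²` over the splittings `x = a + b`, hence grows at most by the factor
`C²` under an operator which is bounded by `1` on `H` and by `C` in the `q`-norm. -/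
lemma kFunctional_le (hpos : ∀ n, 0 < lam n) {q C : ℝ} (hC : 1 ≤ C) (U : H →ₗ[ℂ] H)
    (hU : ∀ x, ‖U x‖ = ‖x‖)
    (hUq : ∀ x ∈ domAs φ lam q, U x ∈ domAs φ lam q ∧
      sNorm φ lam q (U x) ≤ C * sNorm φ lam q x) {t : ℝ} (ht : 0 < t) (x : H) :
    ∑' n, lam n ^ (2 * q) / (t + lam n ^ (2 * q)) * ‖φ.repr (U x) n‖ ^ 2 ≤
      C ^ 2 * ∑' n, lam n ^ (2 * q) / (t + lam n ^ (2 * q)) * ‖φ.repr x n‖ ^ 2 := by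
  set μ : ℕ → ℝ := fun n => lam n ^ (2 * q) with hμ
  have hμ0 : ∀ n, 0 < μ n := fun n => Real.rpow_pos_of_pos (hpos n) _
  have hsum : ∀ y : H, Summable fun n => μ n / (t + μ n) * ‖φ.repr y n‖ ^ 2 := fun y => by
    refine Summable.of_nonneg_of_le (fun n => ?_) (fun n => ?_) (hasSum_normSq φ y).summable
    · have := hμ0 n
      positivity
    · refine mul_le_of_le_one_left (sq_nonneg _) ?_
      rw [div_le_one (by linarith [hμ0 n])]
      linarith [hμ0 n]
  obtain ⟨b, hb⟩ := exists_repr_mul φ x (fun n => ((t / (t + μ n) : ℝ) : ℂ)) (fun n => by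
    have := hμ0 n
    rw [Complex.norm_real, Real.norm_of_nonneg (by positivity), div_le_one (by linarith)]
    linarith)
  have hb2 : ∀ n, ‖φ.repr b n‖ ^ 2 = (t / (t + μ n)) ^ 2 * ‖φ.repr x n‖ ^ 2 := fun n => by
    rw [hb, norm_mul, mul_pow, Complex.norm_real, Real.norm_eq_abs, sq_abs]
  have ha2 : ∀ n, ‖φ.repr (x - b) n‖ ^ 2 = (μ n / (t + μ n)) ^ 2 * ‖φ.repr x n‖ ^ 2 := fun n => by
    have h0 : t + μ n ≠ 0 := by linarith [hμ0 n]
    have : φ.repr (x - b) n = ((μ n / (t + μ n) : ℝ) : ℂ) * φ.repr x n := by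
      rw [repr_sub, hb]
      have h1 : ((t / (t + μ n) : ℝ) : ℂ) = 1 - ((μ n / (t + μ n) : ℝ) : ℂ) := by
        rw [← Complex.ofReal_one, ← Complex.ofReal_sub]
        congr 1
        field_simp
        ring
      rw [h1]; ring
    rw [this, norm_mul, mul_pow, Complex.norm_real, Real.norm_eq_abs, sq_abs]
  have hbd : b ∈ domAs φ lam q := by
    refine Summable.of_nonneg_of_le (fun n => ?_) (fun n => ?_) ((hsum x).mul_left t)
    · have := hμ0 n
      exact mul_nonneg this.le (sq_nonneg _)
    · change μ n * ‖φ.repr b n‖ ^ 2 ≤ _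
      rw [hb2, ← mul_assoc, ← mul_assoc]
      refine mul_le_mul_of_nonneg_right ?_ (sq_nonneg _)
      have := hμ0 n
      rw [div_pow, mul_div_assoc', mul_div_assoc', div_le_div_iff₀ (by positivity) (by positivity)]
      have : 0 ≤ t * μ n * (t + μ n) * μ n := by positivity
      nlinarith
  obtain ⟨hUb, hUb'⟩ := hUq b hbd
  have hpt : ∀ n, μ n / (t + μ n) * ‖φ.repr (U x) n‖ ^ 2 ≤
      ‖φ.repr (U (x - b)) n‖ ^ 2 + t⁻¹ * (μ n * ‖φ.repr (U b) n‖ ^ 2) := fun n => by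
    have h1 : φ.repr (U x) n = φ.repr (U (x - b)) n + φ.repr (U b) n := by
      rw [← repr_add, ← map_add, sub_add_cancel]
    have h2 := norm_add_le (φ.repr (U (x - b)) n) (φ.repr (U b) n)
    rw [← h1] at h2
    set A := ‖φ.repr (U (x - b)) n‖
    set B := ‖φ.repr (U b) n‖
    have h3 : ‖φ.repr (U x) n‖ ^ 2 ≤ (A + B) ^ 2 := pow_le_pow_left₀ (norm_nonneg _) h2 2
    have h4 := hμ0 n
    have h5 : μ n / (t + μ n) * (A + B) ^ 2 ≤ A ^ 2 + t⁻¹ * (μ n * B ^ 2) := by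
      rw [div_mul_eq_mul_div, div_le_iff₀ (by positivity)]
      have : (A ^ 2 + t⁻¹ * (μ n * B ^ 2)) * (t + μ n) - μ n * (A + B) ^ 2
          = (t * A - μ n * B) ^ 2 / t := by field_simp; ring
      have h6 : 0 ≤ (t * A - μ n * B) ^ 2 / t := by positivity
      linarith
    exact (mul_le_mul_of_nonneg_left h3 (by positivity)).trans h5
  have hs1 := (hasSum_normSq φ (U (x - b)))
  have hs2 : Summable fun n => t⁻¹ * (μ n * ‖φ.repr (U b) n‖ ^ 2) := Summable.mul_left _ hUb
  have hq : ∀ y, ∑' n, μ n * ‖φ.repr y n‖ ^ 2 = sNorm φ lam q y ^ 2 := fun y =>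
    (sNorm_sq φ hpos q y).symm
  calc ∑' n, μ n / (t + μ n) * ‖φ.repr (U x) n‖ ^ 2
      ≤ ∑' n, (‖φ.repr (U (x - b)) n‖ ^ 2 + t⁻¹ * (μ n * ‖φ.repr (U b) n‖ ^ 2)) :=
        Summable.tsum_le_tsum hpt (hsum _) (hs1.summable.add hs2)
    _ = ‖x - b‖ ^ 2 + t⁻¹ * sNorm φ lam q (U b) ^ 2 := by
        rw [Summable.tsum_add hs1.summable hs2, hs1.tsum_eq, hU, tsum_mul_left, hq]
    _ ≤ C ^ 2 * ‖x - b‖ ^ 2 + t⁻¹ * (C * sNorm φ lam q b) ^ 2 := by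
        have h1 : (1 : ℝ) ≤ C ^ 2 := by nlinarith
        have h2 := sNorm_nonneg φ (lam := lam) q (U b)
        gcongr
        nlinarith [sq_nonneg ‖x - b‖]
    _ = C ^ 2 * (‖x - b‖ ^ 2 + t⁻¹ * sNorm φ lam q b ^ 2) := by ring
    _ = C ^ 2 * ∑' n, μ n / (t + μ n) * ‖φ.repr x n‖ ^ 2 := by
        have hs3 := hasSum_normSq φ (x - b)
        have hs4 : Summable fun n => t⁻¹ * (μ n * ‖φ.repr b n‖ ^ 2) := Summable.mul_left _ hbd
        rw [← hq, ← hs3.tsum_eq, ← tsum_mul_left, ← Summable.tsum_add hs3.summable hs4]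
        congr 1
        refine tsum_congr fun n => ?_
        have := hμ0 n
        rw [ha2, hb2]
        field_simp
        ring

/-- Interpolation of operators: an isometry of `H` bounded by `C ≥ 1` in the `q`-norm is bounded
by `C` in each `p`-norm with `0 ≤ p < q`. -/
lemma interp_op (hpos : ∀ n, 0 < lam n) {p q C : ℝ} (hp : 0 ≤ p) (hpq : p < q) (hC : 1 ≤ C)
    (U : H →ₗ[ℂ] H) (hU : ∀ x, ‖U x‖ = ‖x‖)
    (hUq : ∀ x ∈ domAs φ lam q, U x ∈ domAs φ lam q ∧
      sNorm φ lam q (U x) ≤ C * sNorm φ lam q x) (x : H) (hx : x ∈ domAs φ lam p) :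
    U x ∈ domAs φ lam p ∧ sNorm φ lam p (U x) ≤ C * sNorm φ lam p x := by
  rcases hp.eq_or_lt with rfl | hp
  · rw [sNorm_zero_exp, sNorm_zero_exp, hU]
    exact ⟨dom_zero_exp φ _, le_mul_of_one_le_left (norm_nonneg _) hC⟩
  have hq : 0 < q := hp.trans hpq
  have hθ : p / q ∈ Set.Ioo (0 : ℝ) 1 := ⟨by positivity, (div_lt_one hq).2 hpq⟩
  set θ := p / q with hθd
  set μ : ℕ → ℝ := fun n => lam n ^ (2 * q) with hμ
  have hμ0 : ∀ n, 0 < μ n := fun n => Real.rpow_pos_of_pos (hpos n) _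
  have hμθ : ∀ n, μ n ^ θ = lam n ^ (2 * p) := fun n => by
    rw [hμ, ← Real.rpow_mul (hpos n).le]
    congr 1
    rw [hθd]; field_simp
  set c0 : ℝ := ∫ t in Set.Ioi 0, Real.rpowIntegrand₀₁ θ t 1 with hc0
  have hc0p : 0 < c0 := Real.integral_rpowIntegrand₀₁_one_pos hθ
  have hI : ∀ t : ℝ, 0 < t → ∀ n, Real.rpowIntegrand₀₁ θ t (μ n)
      = t ^ (θ - 1) * (μ n / (t + μ n)) := fun t ht n => by
    have := hμ0 n
    rw [Real.rpowIntegrand₀₁, Real.rpow_sub ht, Real.rpow_one]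
    field_simp
    ring
  -- the square of the `p`-norm as an integral of K-functionals
  have key : ∀ y : H, ENNReal.ofReal c0 *
      ∑' n, ENNReal.ofReal (lam n ^ (2 * p) * ‖φ.repr y n‖ ^ 2)
      = ∫⁻ t in Set.Ioi (0 : ℝ), ENNReal.ofReal (t ^ (θ - 1) *
          ∑' n, μ n / (t + μ n) * ‖φ.repr y n‖ ^ 2) := fun y => by
    have hint : ∀ n, ENNReal.ofReal c0 * ENNReal.ofReal (lam n ^ (2 * p) * ‖φ.repr y n‖ ^ 2)
        = ∫⁻ t in Set.Ioi (0 : ℝ),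
            ENNReal.ofReal (Real.rpowIntegrand₀₁ θ t (μ n) * ‖φ.repr y n‖ ^ 2) := fun n => by
      rw [← ofReal_integral_eq_lintegral_ofReal]
      · rw [integral_mul_const, Real.integral_rpowIntegrand₀₁_eq_rpow_mul_const hθ (hμ0 n).le,
          hμθ, ← ENNReal.ofReal_mul hc0p.le]
        congr 1
        ring
      · exact (Real.integrableOn_rpowIntegrand₀₁_Ioi hθ (hμ0 n).le).mul_const _
      · exact ae_restrict_of_forall_mem measurableSet_Ioi fun t ht => mul_nonneg
          (Real.rpowIntegrand₀₁_nonneg hθ.1 (le_of_lt ht) (hμ0 n).le) (sq_nonneg _)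
    rw [← ENNReal.tsum_mul_left]
    simp_rw [hint]
    rw [← lintegral_tsum]
    · refine setLIntegral_congr_fun measurableSet_Ioi fun t ht => ?_
      have ht : 0 < t := ht
      have hsum : Summable fun n => μ n / (t + μ n) * ‖φ.repr y n‖ ^ 2 := by
        refine Summable.of_nonneg_of_le (fun n => ?_) (fun n => ?_) (hasSum_normSq φ y).summable
        · have := hμ0 n
          positivity
        · refine mul_le_of_le_one_left (sq_nonneg _) ?_
          rw [div_le_one (by linarith [hμ0 n])]
          linarith [hμ0 n]
      rw [← tsum_mul_left, ENNReal.ofReal_tsum_of_nonneg]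
      · refine tsum_congr fun n => ?_
        rw [hI t ht]; ring_nf
      · intro n
        have := hμ0 n
        positivity
      · exact hsum.mul_left _
    · intro n
      exact ((Real.integrableOn_rpowIntegrand₀₁_Ioi hθ
        (hμ0 n).le).mul_const _).aestronglyMeasurable.aemeasurable.ennreal_ofReal
  have hE : ENNReal.ofReal c0 * ∑' n, ENNReal.ofReal (lam n ^ (2 * p) * ‖φ.repr (U x) n‖ ^ 2) ≤
      ENNReal.ofReal (C ^ 2) * (ENNReal.ofReal c0 *
        ∑' n, ENNReal.ofReal (lam n ^ (2 * p) * ‖φ.repr x n‖ ^ 2)) := by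
    rw [key, key, ← lintegral_const_mul' _ _ ENNReal.ofReal_ne_top]
    refine setLIntegral_mono' measurableSet_Ioi fun t ht => ?_
    have ht : 0 < t := ht
    rw [← ENNReal.ofReal_mul (sq_nonneg C)]
    refine ENNReal.ofReal_le_ofReal ?_
    have h1 := kFunctional_le φ hpos hC U hU hUq ht x
    have h2 : 0 ≤ t ^ (θ - 1) := by positivity
    calc _ ≤ t ^ (θ - 1) * (C ^ 2 * ∑' n, μ n / (t + μ n) * ‖φ.repr x n‖ ^ 2) :=
          mul_le_mul_of_nonneg_left h1 h2
      _ = _ := by ring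
  have hc0' : ENNReal.ofReal c0 ≠ 0 := by simpa using hc0p
  have hE2 : ∑' n, ENNReal.ofReal (lam n ^ (2 * p) * ‖φ.repr (U x) n‖ ^ 2) ≤
      ENNReal.ofReal (C ^ 2) * ∑' n, ENNReal.ofReal (lam n ^ (2 * p) * ‖φ.repr x n‖ ^ 2) := by
    rw [mul_left_comm] at hE
    exact (ENNReal.mul_le_mul_iff_right hc0' ENNReal.ofReal_ne_top).1 hE
  have hnn : ∀ (y : H) n, 0 ≤ lam n ^ (2 * p) * ‖φ.repr y n‖ ^ 2 := fun y n =>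
    mul_nonneg (Real.rpow_nonneg (hpos n).le _) (sq_nonneg _)
  rw [← ENNReal.ofReal_tsum_of_nonneg (hnn x) hx, ← ENNReal.ofReal_mul (sq_nonneg C)] at hE2
  have hUx : U x ∈ domAs φ lam p := by
    have h3 := ENNReal.summable_toReal (ne_top_of_le_ne_top ENNReal.ofReal_ne_top hE2)
    refine h3.congr fun n => ?_
    rw [ENNReal.toReal_ofReal (hnn _ n)]
  refine ⟨hUx, ?_⟩
  rw [← ENNReal.ofReal_tsum_of_nonneg (hnn (U x)) hUx, ENNReal.ofReal_le_ofReal_iff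
    (mul_nonneg (sq_nonneg _) (tsum_nonneg (hnn x))), ← sNorm_sq φ hpos, ← sNorm_sq φ hpos,
    ← mul_pow] at hE2
  exact le_of_sq_le_sq hE2 (mul_nonneg (by linarith) (sNorm_nonneg _ _ _))

end Interp

/-! ### Controlled systems -/

section System

/-- The standing hypotheses: spectral data `φ, lam`, a linear coupling `B` that is bounded
relatively to `|A|^(r/2)` with `r < k`, and a propagator assignment `Υ`. -/
structure Sys {H : Type*} [NormedAddCommGroup H] [InnerProductSpace ℂ H] [CompleteSpace H]
    (φ : HilbertBasis ℕ ℂ H) (lam : ℕ → ℝ) (k : ℝ) (B : H → H) (c d r : ℝ)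
    (Υ : (ℝ → ℝ) → ℝ → (H ≃ₗᵢ[ℂ] H)) : Prop where
  hpos : ∀ n, 0 < lam n
  htop : Tendsto lam atTop atTop
  hk : 0 < k
  hBlin : IsLinearMap ℂ B
  hc : 0 ≤ c
  hd : 0 < d
  hr : 0 ≤ r
  hrk : r < k
  hB : ∀ ψ ∈ domAs φ lam (r / 2), ‖B ψ‖ ≤ d * sNorm φ lam (r / 2) ψ
  hzero : ∀ u, Υ u 0 = LinearIsometryEquiv.refl ℂ H
  hconcat : ∀ (u₁ u₂ : ℝ → ℝ) (T₁ : ℝ), 0 ≤ T₁ → ∀ t : ℝ, 0 ≤ t → ∀ ψ : H,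
    Υ (fun τ => if τ < T₁ then u₁ τ else u₂ (τ - T₁)) (T₁ + t) ψ = Υ u₂ t (Υ u₁ T₁ ψ)
  htraj : ∀ T > (0 : ℝ), ∀ u : ℝ → ℝ, PiecewiseConstant u T →
    ∀ ψ ∈ domAs φ lam (k / 2), ∀ t ∈ Set.Icc (0 : ℝ) T,
      Υ u t ψ ∈ domAs φ lam (k / 2) ∧
        Υ u t ψ = ψ + ∫ τ in (0 : ℝ)..t, (Aop φ lam (Υ u τ ψ) + u τ • B (Υ u τ ψ)) ∧
        sNorm φ lam (k / 2) (Υ u t ψ) ≤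
          Real.exp (c * ∫ τ in (0 : ℝ)..T, |u τ|) * sNorm φ lam (k / 2) ψ

variable {H : Type*} [NormedAddCommGroup H] [InnerProductSpace ℂ H] [CompleteSpace H]
  (φ : HilbertBasis ℕ ℂ H) {lam : ℕ → ℝ}

lemma aop_summable_iff (hpos : ∀ n, 0 < lam n) (x : H) :
    (Summable fun n => (-(Complex.I * (lam n : ℂ))) • (φ.repr x n • φ n)) ↔
      x ∈ domAs φ lam 1 := by
  have h := (φ.orthonormal.orthogonalFamily).summable_iff_norm_sq_summable
    (fun n => (-(Complex.I * (lam n : ℂ))) * φ.repr x n)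
  simp only [LinearIsometry.toSpanSingleton_apply, mul_smul] at h
  rw [h, domAs, Set.mem_ofPred_eq]
  refine summable_congr fun n => ?_
  rw [norm_mul, norm_neg, norm_mul, Complex.norm_I, Complex.norm_real, one_mul, mul_pow,
    Real.norm_eq_abs, sq_abs]
  norm_num

lemma aop_of_notMem (hpos : ∀ n, 0 < lam n) {x : H} (hx : x ∉ domAs φ lam 1) :
    Aop φ lam x = 0 := by
  rw [Aop, tsum_eq_zero_of_not_summable]
  rwa [aop_summable_iff φ hpos]

lemma repr_aop (hpos : ∀ n, 0 < lam n) {x : H} (hx : x ∈ domAs φ lam 1) (j : ℕ) :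
    φ.repr (Aop φ lam x) j = -(Complex.I * lam j) * φ.repr x j := by
  have h := ((aop_summable_iff φ hpos x).2 hx).hasSum
  have h2 := h.mapL (innerSL ℂ (φ j))
  rw [← inner_basis]
  refine h2.unique ?_
  have h3 := hasSum_ite_eq j (-(Complex.I * lam j) * φ.repr x j)
  refine h3.congr_fun fun n => ?_
  simp only [innerSL_apply_apply, inner_smul_right, inner_basis_basis]
  split_ifs with h1 h2 h2
  · subst h1; ring
  · exact absurd h1.symm h2
  · exact absurd h2.symm h1
  · ring

lemma norm_aop (hpos : ∀ n, 0 < lam n) {x : H} (hx : x ∈ domAs φ lam 1) :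
    ‖Aop φ lam x‖ = sNorm φ lam 1 x := by
  rw [sNorm, ← Real.sqrt_sq (norm_nonneg (Aop φ lam x)), ← (hasSum_normSq φ _).tsum_eq]
  congr 1
  refine tsum_congr fun n => ?_
  rw [repr_aop φ hpos hx, norm_mul, norm_neg, norm_mul, Complex.norm_I, Complex.norm_real,
    one_mul, mul_pow, Real.norm_eq_abs, sq_abs]
  norm_num

lemma aop_sub (hpos : ∀ n, 0 < lam n) {x y : H} (hx : x ∈ domAs φ lam 1)
    (hy : y ∈ domAs φ lam 1) : Aop φ lam (x - y) = Aop φ lam x - Aop φ lam y := by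
  refine ext_repr φ fun n => ?_
  rw [repr_aop φ hpos (dom_sub φ hpos hx hy), repr_sub, repr_sub, repr_aop φ hpos hx,
    repr_aop φ hpos hy]
  ring

/-- Bounds in a strong norm give bounds in each weaker norm. -/
lemma exists_weaker_bound (hpos : ∀ n, 0 < lam n) (htop : Tendsto lam atTop atTop) {p q : ℝ}
    (hpq : p ≤ q) (K M : ℝ) : ∃ K' : ℝ, 0 ≤ K' ∧ ∀ x ∈ domAs φ lam q, sNorm φ lam q x ≤ K →
      ‖x‖ ≤ M → sNorm φ lam p x ≤ K' := by
  rcases hpq.eq_or_lt with rfl | h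
  · exact ⟨|K|, abs_nonneg _, fun x _ h _ => h.trans (le_abs_self _)⟩
  · obtain ⟨C, hC, h2⟩ := sNorm_interp φ hpos htop h one_pos
    refine ⟨Real.sqrt (K ^ 2 + C * M ^ 2), Real.sqrt_nonneg _, fun x hx hK hM => ?_⟩
    refine Real.le_sqrt_of_sq_le ((h2 x hx).2.trans ?_)
    have := sNorm_nonneg φ (lam := lam) q x
    rw [one_mul]
    gcongr

lemma pwc_const (a T : ℝ) (hT : 0 ≤ T) : PiecewiseConstant (fun _ => a) T := by
  refine ⟨1, ![0, T], fun _ => a, by simp, by simp [Fin.last], ?_, fun _ _ _ => rfl⟩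
  intro i j hij
  fin_cases i <;> fin_cases j <;> simp_all

variable {φ} {k c d r : ℝ} {B : H → H} {Υ : (ℝ → ℝ) → ℝ → (H ≃ₗᵢ[ℂ] H)}

lemma Sys.free_add (hS : Sys φ lam k B c d r Υ) {s t : ℝ} (hs : 0 ≤ s) (ht : 0 ≤ t) (x : H) :
    Υ (fun _ => 0) (s + t) x = Υ (fun _ => 0) t (Υ (fun _ => 0) s x) := by
  have := hS.hconcat (fun _ => 0) (fun _ => 0) s hs t ht x
  simpa using this

lemma Sys.free_eq (hS : Sys φ lam k B c d r Υ) {t : ℝ} (ht : 0 ≤ t) {x : H}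
    (hx : x ∈ domAs φ lam (k / 2)) : Υ (fun _ => 0) t x ∈ domAs φ lam (k / 2) ∧
    Υ (fun _ => 0) t x = x + ∫ τ in (0 : ℝ)..t, Aop φ lam (Υ (fun _ => 0) τ x) := by
  obtain ⟨h1, h2, -⟩ := hS.htraj (t + 1) (by linarith) (fun _ => 0)
    (pwc_const 0 _ (by linarith)) x hx t ⟨ht, by linarith⟩
  refine ⟨h1, ?_⟩
  simpa using h2

end System

/-! ### The exponent is at least two -/

section LowRegularity

variable {H : Type*} [NormedAddCommGroup H] [InnerProductSpace ℂ H] [CompleteSpace H]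
  (φ : HilbertBasis ℕ ℂ H) {lam : ℕ → ℝ}

/-- For `k < 2` the form domain `D(|A|^(k/2))` is not contained in `D(A)`. -/
lemma exists_mem_notMem (hpos : ∀ n, 0 < lam n) (htop : Tendsto lam atTop atTop) {k : ℝ}
    (hk : 0 < k) (hk2 : k < 2) : ∃ x ∈ domAs φ lam (k / 2), x ∉ domAs φ lam 1 := by
  have h1 : ∀ i : ℕ, ∀ᶠ n in atTop, 2 ^ i ≤ lam n ^ (2 - k) ∧ 1 ≤ lam n := fun i =>
    (((tendsto_rpow_atTop (by linarith : 0 < 2 - k)).comp htop).eventually_ge_atTop _).and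
      (htop.eventually_ge_atTop _)
  obtain ⟨ν, hν, h2⟩ := extraction_forall_of_eventually h1
  classical
  set w : ℕ → ℂ := fun n => if n ∈ Set.range ν then (((lam n)⁻¹ : ℝ) : ℂ) else 0 with hw
  have hwν : ∀ i, w (ν i) = (((lam (ν i))⁻¹ : ℝ) : ℂ) := fun i => by simp [hw]
  have hsupp : ∀ (p : ℝ), ∀ n ∉ Set.range ν, lam n ^ p * ‖w n‖ ^ 2 = 0 := fun p n hn => by
    simp only [hw, if_neg hn]; simp
  have hval : ∀ (p : ℝ) i, lam (ν i) ^ p * ‖w (ν i)‖ ^ 2 = lam (ν i) ^ (p - 2) := fun p i => by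
    rw [hwν, Complex.norm_real, Real.norm_eq_abs, sq_abs, Real.rpow_sub (hpos _), Real.rpow_two,
      inv_pow, div_eq_mul_inv]
  have hS : ∀ p : ℝ, p ≤ k → Summable fun n => lam n ^ p * ‖w n‖ ^ 2 := fun p hp => by
    rw [← hν.injective.summable_iff (hsupp p)]
    refine Summable.of_nonneg_of_le (fun i => ?_) (fun i => ?_) summable_geometric_two
    · simp only [Function.comp, hval]; exact (Real.rpow_pos_of_pos (hpos _) _).le
    · simp only [Function.comp, hval]
      obtain ⟨h3, h4⟩ := h2 i
      calc lam (ν i) ^ (p - 2) ≤ lam (ν i) ^ (-(2 - k)) :=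
            Real.rpow_le_rpow_of_exponent_le h4 (by linarith)
        _ = (lam (ν i) ^ (2 - k))⁻¹ := Real.rpow_neg (hpos _).le _
        _ ≤ (2 ^ i)⁻¹ := inv_anti₀ (by positivity) h3
        _ = _ := by simp
  have hmem : Memℓp w 2 := by
    rw [memℓp_gen_iff (by norm_num)]
    simpa using hS 0 hk.le
  refine ⟨φ.repr.symm ⟨w, hmem⟩, ?_, ?_⟩
  · have := hS k le_rfl
    simp only [domAs, Set.mem_ofPred_eq, LinearIsometryEquiv.apply_symm_apply]
    convert this using 4
    ring
  · simp only [domAs, Set.mem_ofPred_eq, LinearIsometryEquiv.apply_symm_apply]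
    intro h
    have h3 := (h.comp_injective hν.injective).tendsto_atTop_zero
    have h4 : ∀ i, ((fun n => lam n ^ (2 * (1 : ℝ)) * ‖w n‖ ^ 2) ∘ ν) i = 1 := fun i => by
      simp only [Function.comp, hval]; norm_num
    have h5 := h3.congr h4
    exact zero_ne_one (tendsto_nhds_unique h5 tendsto_const_nhds)

/-- A function with quadratically small increments is constant. -/
lemma eq_of_quadratic {F : ℝ → ℝ} {T C : ℝ}
    (h : ∀ s ∈ Set.Icc 0 T, ∀ t ∈ Set.Icc 0 T, s ≤ t → |F t - F s| ≤ C * (t - s) ^ 2) :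
    ∀ t ∈ Set.Icc 0 T, F t = F 0 := by
  have hsym : ∀ s ∈ Set.Icc 0 T, ∀ t ∈ Set.Icc 0 T, |F t - F s| ≤ C * (t - s) ^ 2 := by
    intro s hs t ht
    rcases le_total s t with hst | hst
    · exact h s hs t ht hst
    · rw [abs_sub_comm]; convert h t ht s hs hst using 1; ring
  have hd : ∀ s ∈ Set.Icc 0 T, HasDerivWithinAt F 0 (Set.Icc 0 T) s := by
    intro s hs
    rw [hasDerivWithinAt_iff_isLittleO]
    have h1 : (fun t => F t - F s - (t - s) • (0 : ℝ)) =O[nhdsWithin s (Set.Icc 0 T)]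
        fun t => (t - s) ^ 2 := by
      refine Asymptotics.IsBigO.of_bound C ?_
      filter_upwards [self_mem_nhdsWithin] with t ht
      simpa using hsym s hs t ht
    refine h1.trans_isLittleO ?_
    have h2 : (fun t : ℝ => (t - s) ^ 2) =o[nhds s] fun t => t - s := by
      have := Asymptotics.isLittleO_pow_sub_sub s (m := 2) (by norm_num)
      simpa using this
    exact h2.mono nhdsWithin_le_nhds
  intro t ht
  have hT : 0 ≤ T := ht.1.trans ht.2
  refine constant_of_has_deriv_right_zero (fun s hs => (hd s hs).continuousWithinAt)
    (fun s hs => ?_) t ht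
  have := hd s ⟨hs.1, hs.2.le⟩
  exact this.mono_of_mem_nhdsWithin (Icc_mem_nhdsGE_of_mem hs)

variable {φ} {k c d r : ℝ} {B : H → H} {Υ : (ℝ → ℝ) → ℝ → (H ≃ₗᵢ[ℂ] H)}

/-- Outside `D(A)`, the junk value `Aop = 0` forces the free evolution to be stationary: the
moduli of the components are conserved, so the trajectory never enters `D(A)`. -/
lemma Sys.stationary (hS : Sys φ lam k B c d r Υ) {x : H} (hx : x ∈ domAs φ lam (k / 2))
    (hx1 : x ∉ domAs φ lam 1) {t : ℝ} (ht : 0 ≤ t) : Υ (fun _ => 0) t x = x := by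
  set U : ℝ → H := fun t => Υ (fun _ => 0) t x with hU
  set f : ℝ → H := fun τ => Aop φ lam (U τ) with hf
  have hUeq : ∀ t, 0 ≤ t → U t = x + ∫ τ in (0 : ℝ)..t, f τ := fun t ht => (hS.free_eq ht hx).2
  by_cases hint : ∀ T, 0 ≤ T → IntervalIntegrable f volume 0 T
  · have hcomp : ∀ j, ∀ t, 0 ≤ t → ‖φ.repr (U t) j‖ = ‖φ.repr x j‖ := by
      intro j T hT
      set g : ℝ → ℂ := fun t => φ.repr (U t) j with hg
      set h : ℝ → ℂ := fun t => φ.repr (f t) j with hh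
      set L : ℝ := lam j * ‖x‖ with hL
      have hL0 : 0 ≤ L := mul_nonneg (hS.hpos j).le (norm_nonneg _)
      have hgh : ∀ τ, (starRingEnd ℂ (g τ) * h τ).re = 0 ∧ ‖h τ‖ ≤ L := by
        intro τ
        by_cases hm : U τ ∈ domAs φ lam 1
        · have : h τ = -(Complex.I * lam j) * g τ := repr_aop φ hS.hpos hm j
          rw [this]
          constructor
          · simp [Complex.mul_re, Complex.mul_im]; ring
          · rw [norm_mul, norm_neg, norm_mul, Complex.norm_I, Complex.norm_real, one_mul,
              Real.norm_eq_abs, abs_of_pos (hS.hpos j), hL]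
            have := norm_repr_le φ (U τ) j
            have h2 : ‖U τ‖ = ‖x‖ := LinearIsometryEquiv.norm_map _ _
            have := (hS.hpos j).le
            gcongr
            linarith
        · have : h τ = 0 := by
            simp only [hh, hf]; rw [aop_of_notMem φ hS.hpos hm]; simp
          rw [this]; simpa using hL0
      have hhint : ∀ s t, 0 ≤ s → 0 ≤ t → IntervalIntegrable h volume s t := by
        intro s t hs ht
        have h1 := (hint s hs).symm.trans (hint t ht)
        have a1 := (innerSL ℂ (φ j)).integrable_comp h1.1
        have a2 := (innerSL ℂ (φ j)).integrable_comp h1.2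
        simp only [innerSL_apply_apply, inner_basis] at a1 a2
        exact ⟨a1, a2⟩
      have hinc : ∀ s t, 0 ≤ s → 0 ≤ t → g t - g s = ∫ τ in s..t, h τ := by
        intro s t hs ht
        have h1 := (hint s hs).symm.trans (hint t ht)
        have h2 := ContinuousLinearMap.intervalIntegral_comp_comm (innerSL ℂ (φ j)) h1
        simp only [innerSL_apply_apply, inner_basis] at h2
        rw [h2, hg, ← intervalIntegral.integral_interval_sub_left (hint t ht) (hint s hs),
          repr_sub]
        simp only
        rw [hUeq t ht, hUeq s hs, repr_add, repr_add]
        ring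
      have hLip : ∀ s t, 0 ≤ s → s ≤ t → ‖g t - g s‖ ≤ L * (t - s) := by
        intro s t hs hst
        rw [hinc s t hs (hs.trans hst)]
        have := intervalIntegral.norm_integral_le_of_norm_le_const (a := s) (b := t) (f := h)
          (C := L) (fun τ _ => (hgh τ).2)
        rwa [abs_of_nonneg (by linarith)] at this
      have hq : ∀ s ∈ Set.Icc 0 T, ∀ t ∈ Set.Icc 0 T, s ≤ t →
          |‖g t‖ ^ 2 - ‖g s‖ ^ 2| ≤ (2 * L * L) * (t - s) ^ 2 := by
        intro s hs t ht hst
        have e1 : ‖g t‖ ^ 2 - ‖g s‖ ^ 2 = (starRingEnd ℂ (g t + g s) * (g t - g s)).re := by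
          rw [← Complex.normSq_eq_norm_sq, ← Complex.normSq_eq_norm_sq]
          simp [Complex.normSq_apply, Complex.mul_re]; ring
        have e2 : starRingEnd ℂ (g t + g s) * (g t - g s)
            = ∫ τ in s..t, starRingEnd ℂ (g t + g s) * h τ := by
          rw [hinc s t hs.1 ht.1, intervalIntegral.integral_const_mul]
        have e3 : (∫ τ in s..t, starRingEnd ℂ (g t + g s) * h τ).re
            = ∫ τ in s..t, (starRingEnd ℂ (g t + g s) * h τ).re := by
          have := ContinuousLinearMap.intervalIntegral_comp_comm Complex.reCLM
            ((hhint s t hs.1 ht.1).const_mul (starRingEnd ℂ (g t + g s)))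
          simpa using this.symm
        rw [e1, e2, e3]
        have := intervalIntegral.norm_integral_le_of_norm_le_const (a := s) (b := t)
          (f := fun τ => (starRingEnd ℂ (g t + g s) * h τ).re)
          (C := 2 * L * (t - s) * L) (fun τ hτ => ?_)
        · rw [Real.norm_eq_abs, abs_of_nonneg (by linarith : 0 ≤ t - s)] at this
          refine this.trans (le_of_eq ?_); ring
        · rw [Set.uIoc_of_le hst] at hτ
          have e4 : (starRingEnd ℂ (g t + g s) * h τ).re
              = (starRingEnd ℂ ((g t - g τ) - (g τ - g s)) * h τ).re := by
            have := (hgh τ).1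
            have e5 : starRingEnd ℂ ((g t - g τ) - (g τ - g s)) * h τ
              = starRingEnd ℂ (g t + g s) * h τ - 2 * (starRingEnd ℂ (g τ) * h τ) := by
              simp; ring
            rw [e5, Complex.sub_re]
            simp only [Complex.mul_re] at this ⊢
            simp at this ⊢
            linarith
          rw [e4, Real.norm_eq_abs]
          refine (Complex.abs_re_le_norm _).trans ?_
          rw [norm_mul, RCLike.norm_conj]
          have a1 := hLip τ t (hs.1.trans hτ.1.le) hτ.2
          have a2 := hLip s τ hs.1 hτ.1.le
          have a3 := norm_sub_le (g t - g τ) (g τ - g s)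
          have a4 := (hgh τ).2
          have a5 : ‖(g t - g τ) - (g τ - g s)‖ ≤ 2 * L * (t - s) := by nlinarith
          exact mul_le_mul a5 a4 (norm_nonneg _) (by have := sub_nonneg.2 hst; positivity)
      have h0 := eq_of_quadratic hq T ⟨hT, le_rfl⟩
      have hg0 : g 0 = φ.repr x j := by simp [hg, hU, hS.hzero]
      simp only [hg0] at h0
      exact (sq_eq_sq₀ (norm_nonneg _) (norm_nonneg _)).1 h0
    have hf0 : ∀ τ, 0 ≤ τ → f τ = 0 := fun τ hτ => by
      refine aop_of_notMem φ hS.hpos ?_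
      rw [(sNorm_congr_repr φ fun j => hcomp j τ hτ).1]
      exact hx1
    have := hUeq t ht
    rw [intervalIntegral.integral_congr (g := fun _ => (0 : H))] at this
    · simpa using this
    · intro τ hτ
      rw [Set.uIcc_of_le ht] at hτ
      exact hf0 τ hτ.1
  · push Not at hint
    obtain ⟨T, hT, hint⟩ := hint
    have h1 : ∀ t, T ≤ t → U t = x := fun t hTt => by
      rw [hUeq t (hT.trans hTt), intervalIntegral.integral_undef, add_zero]
      intro h
      exact hint (h.mono_set (by
        rw [Set.uIcc_of_le hT, Set.uIcc_of_le (hT.trans hTt)]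
        exact Set.Icc_subset_Icc_right hTt))
    have h2 := hS.free_add hT ht x
    have h3 : Υ (fun _ => 0) T x = x := h1 T le_rfl
    rw [h3] at h2
    exact h2.symm.trans (h1 (T + t) (by linarith))

/-- The hypotheses are contradictory for `k < 2`: if `x ∉ D(A)` then `x` and `x + φ 0` would both be
stationary, hence also the eigenvector `φ 0`, although it has a non-zero eigenvalue. -/
lemma Sys.two_le (hS : Sys φ lam k B c d r Υ) : 2 ≤ k := by
  by_contra hk2
  push Not at hk2
  obtain ⟨x, hx, hx1⟩ := exists_mem_notMem φ hS.hpos hS.htop hS.hk hk2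
  have hb := dom_basis φ (lam := lam) (k / 2) 0
  have hb1 := dom_basis φ (lam := lam) 1 0
  have h1 : ∀ t, 0 ≤ t → Υ (fun _ => 0) t (φ 0) = φ 0 := by
    intro t ht
    have a1 := hS.stationary hx hx1 ht
    have a2 := hS.stationary (dom_add φ hS.hpos hx hb) (fun h => hx1 (by
      simpa using dom_sub φ hS.hpos h hb1)) ht
    rw [map_add, a1] at a2
    exact add_left_cancel a2
  have h2 := (hS.free_eq zero_le_one hb).2
  rw [h1 1 zero_le_one, intervalIntegral.integral_congr (g := fun _ => Aop φ lam (φ 0))] at h2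
  · simp only [intervalIntegral.integral_const, sub_zero, one_smul] at h2
    have h3 : Aop φ lam (φ 0) = 0 := by simpa using h2.symm
    have h4 := repr_aop φ hS.hpos hb1 0
    rw [h3, repr_basis] at h4
    have := (hS.hpos 0).ne'
    simp [this] at h4
  · intro τ hτ
    rw [Set.uIcc_of_le zero_le_one] at hτ
    simp only
    rw [h1 τ hτ.1]

end LowRegularity

/-! ### Regularity of trajectories -/

section Trajectories

variable {H : Type*} [NormedAddCommGroup H] [InnerProductSpace ℂ H] [CompleteSpace H]
  {φ : HilbertBasis ℕ ℂ H} {lam : ℕ → ℝ}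
  {k c d r : ℝ} {B : H → H} {Υ : (ℝ → ℝ) → ℝ → (H ≃ₗᵢ[ℂ] H)}

lemma Sys.dom_one (hS : Sys φ lam k B c d r Υ) {x : H} (hx : x ∈ domAs φ lam (k / 2)) :
    x ∈ domAs φ lam 1 := dom_mono φ hS.hpos hS.htop (by linarith [hS.two_le]) hx

lemma Sys.dom_r (hS : Sys φ lam k B c d r Υ) {x : H} (hx : x ∈ domAs φ lam (k / 2)) :
    x ∈ domAs φ lam (r / 2) := dom_mono φ hS.hpos hS.htop (by linarith [hS.hrk]) hx

lemma Sys.B_sub (hS : Sys φ lam k B c d r Υ) (x y : H) : B (x - y) = B x - B y :=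
  (IsLinearMap.mk' B hS.hBlin).map_sub x y

lemma Sys.B_trunc (hS : Sys φ lam k B c d r Υ) (N : ℕ) (x : H) :
    B (trunc φ N x) = ∑ i ∈ Finset.range N, φ.repr x i • B (φ i) := by
  have := map_sum (IsLinearMap.mk' B hS.hBlin) (fun i => φ.repr x i • φ i) (Finset.range N)
  simp only [IsLinearMap.mk'_apply, hS.hBlin.map_smul] at this
  exact this

lemma Sys.tendsto_B_trunc (hS : Sys φ lam k B c d r Υ) {x : H}
    (hx : x ∈ domAs φ lam (r / 2)) :
    Tendsto (fun N => ∑ i ∈ Finset.range N, φ.repr x i • B (φ i)) atTop (nhds (B x)) := by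
  rw [tendsto_iff_norm_sub_tendsto_zero]
  have h := (tendsto_trunc φ (lam := lam) (r / 2) hx).const_mul d
  rw [mul_zero] at h
  refine squeeze_zero (fun _ => norm_nonneg _) (fun N => ?_) h
  rw [← hS.B_trunc, norm_sub_rev, ← hS.B_sub]
  exact hS.hB _ (dom_sub φ hS.hpos hx (dom_trunc φ _ N x))

lemma Sys.tendsto_A_trunc (hS : Sys φ lam k B c d r Υ) {x : H} (hx : x ∈ domAs φ lam 1) :
    Tendsto (fun N => ∑ i ∈ Finset.range N, φ.repr x i • Aop φ lam (φ i)) atTop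
      (nhds (Aop φ lam x)) := by
  have h := ((aop_summable_iff φ hS.hpos x).2 hx).hasSum.tendsto_sum_nat
  refine h.congr fun N => Finset.sum_congr rfl fun i _ => ?_
  refine ext_repr φ fun n => ?_
  rw [repr_smul, repr_smul, repr_smul, repr_aop φ hS.hpos (dom_basis φ _ i), repr_basis]
  split_ifs with h
  · subst h; ring
  · ring

/-- A pointwise limit of partial sums built on the components of a measurable map is measurable. -/
lemma aesm_of_series {α : Type*} [MeasurableSpace α] {μ : Measure α} {x : α → H}
    (hx : AEStronglyMeasurable x μ) (e : ℕ → H) {y : α → H}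
    (h : ∀ᵐ a ∂μ, Tendsto (fun N => ∑ i ∈ Finset.range N, φ.repr (x a) i • e i) atTop
      (nhds (y a))) : AEStronglyMeasurable y μ := by
  refine aestronglyMeasurable_of_tendsto_ae atTop (fun N => ?_) h
  refine Finset.aestronglyMeasurable_fun_sum _ fun i _ => ?_
  have h1 := (innerSL ℂ (φ i)).continuous.comp_aestronglyMeasurable hx
  simp only [innerSL_apply_apply, inner_basis] at h1
  exact h1.smul_const _

/-- A piecewise constant control that is moreover bounded and measurable on the whole line, as
the controls used below are. -/
structure Ctrl (u : ℝ → ℝ) (T : ℝ) : Prop where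
  pos : 0 < T
  pwc : PiecewiseConstant u T
  meas : Measurable u
  bdd : ∃ M, ∀ t, |u t| ≤ M

/-- The right-hand side of the Schrödinger equation along a trajectory. -/
def rhs (φ : HilbertBasis ℕ ℂ H) (lam : ℕ → ℝ) (B : H → H) (Υ : (ℝ → ℝ) → ℝ → (H ≃ₗᵢ[ℂ] H))
    (u : ℝ → ℝ) (x : H) (τ : ℝ) : H :=
  Aop φ lam (Υ u τ x) + u τ • B (Υ u τ x)

lemma Sys.rhs_bdd (hS : Sys φ lam k B c d r Υ) {u : ℝ → ℝ} {T : ℝ} (hu : Ctrl u T) {x : H}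
    (hx : x ∈ domAs φ lam (k / 2)) :
    ∃ K, ∀ τ ∈ Set.Icc 0 T, ‖rhs φ lam B Υ u x τ‖ ≤ K := by
  obtain ⟨M, hM⟩ := hu.bdd
  set K := Real.exp (c * ∫ τ in (0 : ℝ)..T, |u τ|) * sNorm φ lam (k / 2) x
  obtain ⟨K1, hK1, h1⟩ := exists_weaker_bound φ hS.hpos hS.htop
    (by linarith [hS.two_le] : (1 : ℝ) ≤ k / 2) K ‖x‖
  obtain ⟨K2, hK2, h2⟩ := exists_weaker_bound φ hS.hpos hS.htop
    (by linarith [hS.hrk] : r / 2 ≤ k / 2) K ‖x‖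
  refine ⟨K1 + M * (d * K2), fun τ hτ => ?_⟩
  obtain ⟨a1, -, a3⟩ := hS.htraj T hu.pos u hu.pwc x hx τ hτ
  have a4 : ‖Υ u τ x‖ ≤ ‖x‖ := (LinearIsometryEquiv.norm_map _ _).le
  refine (norm_add_le _ _).trans (add_le_add ?_ ?_)
  · rw [norm_aop φ hS.hpos (hS.dom_one a1)]
    exact h1 _ a1 a3 a4
  · rw [norm_smul]
    have b1 := h2 _ a1 a3 a4
    have b2 := hS.hB _ (hS.dom_r a1)
    have b3 := hM τ
    rw [← Real.norm_eq_abs] at b3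
    exact mul_le_mul b3 (b2.trans (mul_le_mul_of_nonneg_left b1 hS.hd.le)) (norm_nonneg _)
      ((norm_nonneg _).trans b3)

lemma Sys.aesm_rhs (hS : Sys φ lam k B c d r Υ) {u : ℝ → ℝ} {T : ℝ} (hu : Ctrl u T) {x : H}
    (hx : x ∈ domAs φ lam (k / 2)) {I : Set ℝ} (hI : MeasurableSet I) (hIT : I ⊆ Set.Icc 0 T)
    (hm : AEStronglyMeasurable (fun τ => Υ u τ x) (volume.restrict I)) :
    AEStronglyMeasurable (rhs φ lam B Υ u x) (volume.restrict I) := by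
  have hdom : ∀ᵐ τ ∂(volume.restrict I), Υ u τ x ∈ domAs φ lam (k / 2) :=
    ae_restrict_of_forall_mem hI fun τ hτ => (hS.htraj T hu.pos u hu.pwc x hx τ (hIT hτ)).1
  have hB : AEStronglyMeasurable (fun τ => B (Υ u τ x)) (volume.restrict I) := by
    refine aesm_of_series (φ := φ) hm (fun i => B (φ i)) ?_
    filter_upwards [hdom] with τ hτ using hS.tendsto_B_trunc (hS.dom_r hτ)
  have hu' : AEStronglyMeasurable u (volume.restrict I) := hu.meas.aestronglyMeasurable
  refine AEStronglyMeasurable.add ?_ (hu'.smul hB)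
  · refine aesm_of_series (φ := φ) hm (fun i => Aop φ lam (φ i)) ?_
    filter_upwards [hdom] with τ hτ using hS.tendsto_A_trunc (hS.dom_one hτ)

/-- The right-hand side is integrable. Beyond the supremum `s` of the times up to which it is
integrable, the junk value of the integral would make the trajectory constant, while before `s`
the trajectory is continuous; so it is measurable and bounded in any case. -/
lemma Sys.rhs_integrable (hS : Sys φ lam k B c d r Υ) {u : ℝ → ℝ} {T : ℝ} (hu : Ctrl u T)
    {x : H} (hx : x ∈ domAs φ lam (k / 2)) :
    IntegrableOn (rhs φ lam B Υ u x) (Set.Icc 0 T) := by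
  set f := rhs φ lam B Υ u x with hf
  have heq : ∀ t ∈ Set.Icc 0 T, Υ u t x = x + ∫ τ in (0 : ℝ)..t, f τ := fun t ht =>
    (hS.htraj T hu.pos u hu.pwc x hx t ht).2.1
  set Z : Set ℝ := {t | t ∈ Set.Icc 0 T ∧ IntegrableOn f (Set.Icc 0 t)} with hZ
  have h0Z : (0 : ℝ) ∈ Z := ⟨⟨le_rfl, hu.pos.le⟩, by simp⟩
  have hZb : BddAbove Z := ⟨T, fun t ht => ht.1.2⟩
  set s := sSup Z with hs
  have hs0 : 0 ≤ s := le_csSup hZb h0Z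
  have hsT : s ≤ T := csSup_le ⟨0, h0Z⟩ fun t ht => ht.1.2
  have hcont : ContinuousOn (fun τ => Υ u τ x) (Set.Ico 0 s) := by
    intro t ht
    obtain ⟨b, hb, htb⟩ := exists_lt_of_lt_csSup ⟨0, h0Z⟩ ht.2
    have hc1 : ContinuousOn (fun t => x + ∫ τ in (0 : ℝ)..t, f τ) (Set.Icc 0 b) := by
      have := intervalIntegral.continuousOn_primitive_interval (μ := volume) (f := f)
        (a := 0) (b := b) (by rw [Set.uIcc_of_le hb.1.1]; exact hb.2)
      rw [Set.uIcc_of_le hb.1.1] at this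
      exact continuousOn_const.add this
    have hc2 : ContinuousOn (fun τ => Υ u τ x) (Set.Icc 0 b) := hc1.congr fun τ hτ =>
      heq τ ⟨hτ.1, hτ.2.trans hb.1.2⟩
    have hc3 := hc2 t ⟨ht.1, htb.le⟩
    refine hc3.mono_of_mem_nhdsWithin ?_
    have : Set.Iic b ∈ nhds t := Iic_mem_nhds htb
    filter_upwards [self_mem_nhdsWithin, mem_nhdsWithin_of_mem_nhds this] with τ h1 h2
    exact ⟨h1.1, h2⟩
  have hm1 : AEStronglyMeasurable f (volume.restrict (Set.Ico 0 s)) :=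
    hS.aesm_rhs hu hx measurableSet_Ico (fun t ht => ⟨ht.1, ht.2.le.trans hsT⟩)
      (hcont.aestronglyMeasurable measurableSet_Ico)
  have hm2 : AEStronglyMeasurable f (volume.restrict (Set.Ioc s T)) := by
    refine hS.aesm_rhs hu hx measurableSet_Ioc (fun t ht => ⟨hs0.trans ht.1.le, ht.2⟩) ?_
    refine (aestronglyMeasurable_const (b := x)).congr ?_
    refine ae_restrict_of_forall_mem measurableSet_Ioc fun t ht => ?_
    have ht0 : 0 ≤ t := hs0.trans ht.1.le
    change x = Υ u t x
    rw [heq t ⟨ht0, ht.2⟩, intervalIntegral.integral_undef, add_zero]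
    intro hint
    rw [intervalIntegrable_iff_integrableOn_Icc_of_le ht0] at hint
    exact absurd (le_csSup hZb (show t ∈ Z from ⟨⟨ht0, ht.2⟩, hint⟩)) (not_le.2 ht.1)
  have hm3 : AEStronglyMeasurable f (volume.restrict {s}) := by
    rw [Measure.restrict_eq_zero.2 (by simp)]
    exact aestronglyMeasurable_zero_measure f
  have hm : AEStronglyMeasurable f (volume.restrict (Set.Icc 0 T)) := by
    have := aestronglyMeasurable_union_iff.2 ⟨aestronglyMeasurable_union_iff.2 ⟨hm1, hm3⟩, hm2⟩
    refine this.mono_measure (Measure.restrict_mono (fun t ht => ?_) le_rfl)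
    rcases lt_trichotomy t s with h | h | h
    · exact Or.inl (Or.inl ⟨ht.1, h⟩)
    · exact Or.inl (Or.inr h)
    · exact Or.inr ⟨h, ht.2⟩
  obtain ⟨K, hK⟩ := hS.rhs_bdd hu hx
  exact Integrable.of_bound hm K (ae_restrict_of_forall_mem measurableSet_Icc hK)

lemma Sys.traj_cont (hS : Sys φ lam k B c d r Υ) {u : ℝ → ℝ} {T : ℝ} (hu : Ctrl u T) {x : H}
    (hx : x ∈ domAs φ lam (k / 2)) : ContinuousOn (fun τ => Υ u τ x) (Set.Icc 0 T) := by
  have h := hS.rhs_integrable hu hx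
  have := intervalIntegral.continuousOn_primitive_interval (μ := volume)
    (f := rhs φ lam B Υ u x) (a := 0) (b := T) (by rwa [Set.uIcc_of_le hu.pos.le])
  rw [Set.uIcc_of_le hu.pos.le] at this
  exact (continuousOn_const.add this).congr fun τ hτ =>
    (hS.htraj T hu.pos u hu.pwc x hx τ hτ).2.1

lemma Sys.B_traj_cont (hS : Sys φ lam k B c d r Υ) {u : ℝ → ℝ} {T : ℝ} (hu : Ctrl u T) {x : H}
    (hx : x ∈ domAs φ lam (k / 2)) : ContinuousOn (fun τ => B (Υ u τ x)) (Set.Icc 0 T) := by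
  intro t ht
  have h0 := hS.traj_cont hu hx t ht
  set K := Real.exp (c * ∫ τ in (0 : ℝ)..T, |u τ|) * sNorm φ lam (k / 2) x
  obtain ⟨a1, -, a3⟩ := hS.htraj T hu.pos u hu.pwc x hx t ht
  have h1 : Tendsto (fun τ => sNorm φ lam (r / 2) (Υ u τ x - Υ u t x))
      (nhdsWithin t (Set.Icc 0 T)) (nhds 0) := by
    refine tendsto_sNorm_of_bounded φ hS.hpos hS.htop (q := k / 2) (by linarith [hS.hrk]) _
      (K + K) ?_ ?_
    · filter_upwards [self_mem_nhdsWithin] with τ hτ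
      obtain ⟨b1, -, b3⟩ := hS.htraj T hu.pos u hu.pwc x hx τ hτ
      exact ⟨dom_sub φ hS.hpos b1 a1,
        (sNorm_sub_le φ hS.hpos b1 a1).trans (add_le_add b3 a3)⟩
    · have := h0.tendsto.sub_const (Υ u t x)
      simpa using this
  have h2 := h1.const_mul d
  rw [mul_zero] at h2
  rw [ContinuousWithinAt, tendsto_iff_norm_sub_tendsto_zero]
  refine squeeze_zero' (Eventually.of_forall fun _ => norm_nonneg _) ?_ h2
  filter_upwards [self_mem_nhdsWithin] with τ hτ
  rw [← hS.B_sub]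
  exact hS.hB _ (dom_sub φ hS.hpos (hS.dom_r (hS.htraj T hu.pos u hu.pwc x hx τ hτ).1)
    (hS.dom_r a1))

/-- The components of a trajectory solve the equation pointwise from the right, wherever the
control is right-continuous. -/
lemma Sys.traj_deriv (hS : Sys φ lam k B c d r Υ) {u : ℝ → ℝ} {T : ℝ} (hu : Ctrl u T) {x : H}
    (hx : x ∈ domAs φ lam (k / 2)) {t : ℝ} (ht : t ∈ Set.Ico 0 T)
    (hut : ContinuousWithinAt u (Set.Ici t) t) (j : ℕ) :
    HasDerivWithinAt (fun τ => φ.repr (Υ u τ x) j)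
      (-(Complex.I * lam j) * φ.repr (Υ u t x) j + u t * φ.repr (B (Υ u t x)) j)
      (Set.Ici t) t := by
  set f := rhs φ lam B Υ u x with hf
  have htT : t ∈ Set.Icc 0 T := ⟨ht.1, ht.2.le⟩
  have hint : IntervalIntegrable f volume 0 T :=
    (intervalIntegrable_iff_integrableOn_Icc_of_le hu.pos.le).2 (hS.rhs_integrable hu hx)
  have hsub : ∀ s ∈ Set.Icc 0 T, IntervalIntegrable f volume 0 s := fun s hs =>
    hint.mono_set (by
      rw [Set.uIcc_of_le hs.1, Set.uIcc_of_le hu.pos.le]; exact Set.Icc_subset_Icc_right hs.2)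
  set h : ℝ → ℂ := fun τ => φ.repr (f τ) j with hh
  have hhint : ∀ s ∈ Set.Icc 0 T, IntervalIntegrable h volume 0 s := fun s hs => by
    have a1 := (innerSL ℂ (φ j)).integrable_comp (hsub s hs).1
    have a2 := (innerSL ℂ (φ j)).integrable_comp (hsub s hs).2
    simp only [innerSL_apply_apply, inner_basis] at a1 a2
    exact ⟨a1, a2⟩
  have hval : ∀ s ∈ Set.Icc 0 T, φ.repr (Υ u s x) j = φ.repr x j + ∫ τ in (0 : ℝ)..s, h τ :=
    fun s hs => by
      have := ContinuousLinearMap.intervalIntegral_comp_comm (innerSL ℂ (φ j)) (hsub s hs)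
      simp only [innerSL_apply_apply, inner_basis] at this
      rw [this, ← repr_add]
      exact congrArg (fun z => φ.repr z j) (hS.htraj T hu.pos u hu.pwc x hx s hs).2.1
  have hform : ∀ τ ∈ Set.Icc 0 T, h τ
      = -(Complex.I * lam j) * φ.repr (Υ u τ x) j + u τ * φ.repr (B (Υ u τ x)) j := fun τ hτ => by
    have hd := (hS.htraj T hu.pos u hu.pwc x hx τ hτ).1
    simp only [hh, hf, rhs]
    rw [repr_add, repr_aop φ hS.hpos (hS.dom_one hd), ← Complex.coe_smul, repr_smul]
  have hnear : Set.Icc 0 T ∈ nhdsWithin t (Set.Ici t) := Icc_mem_nhdsGE_of_mem ht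
  have hcont : ContinuousWithinAt h (Set.Ici t) t := by
    have c1 : ContinuousWithinAt (fun τ => φ.repr (Υ u τ x) j) (Set.Ici t) t := by
      have := ((innerSL ℂ (φ j)).continuous.continuousAt.comp_continuousWithinAt
        (hS.traj_cont hu hx t htT)).mono_of_mem_nhdsWithin hnear
      simpa only [Function.comp_def, innerSL_apply_apply, inner_basis] using this
    have c2 : ContinuousWithinAt (fun τ => φ.repr (B (Υ u τ x)) j) (Set.Ici t) t := by
      have := ((innerSL ℂ (φ j)).continuous.continuousAt.comp_continuousWithinAt
        (hS.B_traj_cont hu hx t htT)).mono_of_mem_nhdsWithin hnear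
      simpa only [Function.comp_def, innerSL_apply_apply, inner_basis] using this
    have c3 : ContinuousWithinAt (fun τ => (u τ : ℂ)) (Set.Ici t) t :=
      Complex.continuous_ofReal.continuousAt.comp_continuousWithinAt hut
    refine (((continuousWithinAt_const (b := -(Complex.I * lam j))).mul c1).add
      (c3.mul c2)).congr_of_eventuallyEq ?_ (hform t htT)
    filter_upwards [hnear] with τ hτ using hform τ hτ
  have hFTC : HasDerivWithinAt (fun s => ∫ τ in (0 : ℝ)..s, h τ) (h t) (Set.Ici t) t := by
    refine intervalIntegral.integral_hasDerivWithinAt_right (hhint t htT)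
      (t := Set.Ioi t) ?_ (hcont.mono Set.Ioi_subset_Ici_self)
    refine ⟨Set.Icc 0 T, mem_of_superset (Ioc_mem_nhdsGT ht.2) (fun τ hτ =>
      ⟨ht.1.trans hτ.1.le, hτ.2⟩), ?_⟩
    have := (hhint T ⟨hu.pos.le, le_rfl⟩)
    rw [intervalIntegrable_iff_integrableOn_Icc_of_le hu.pos.le] at this
    exact this.aestronglyMeasurable
  rw [← hform t htT]
  refine (hFTC.const_add (φ.repr x j)).congr_of_eventuallyEq ?_ (hval t htT)
  filter_upwards [hnear] with τ hτ using hval τ hτ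

end Trajectories

/-! ### Skew-symmetry of the coupling and the free evolution -/

section Skew

variable {H : Type*} [NormedAddCommGroup H] [InnerProductSpace ℂ H] [CompleteSpace H]
  {φ : HilbertBasis ℕ ℂ H} {lam : ℕ → ℝ}
  {k c d r : ℝ} {B : H → H} {Υ : (ℝ → ℝ) → ℝ → (H ≃ₗᵢ[ℂ] H)}

lemma ctrl_const (a : ℝ) {T : ℝ} (hT : 0 < T) : Ctrl (fun _ => a) T :=
  ⟨hT, pwc_const a T hT.le, measurable_const, ⟨|a|, fun _ => le_rfl⟩⟩

/-- The coupling is skew-symmetric on the basis. This is the infinitesimal form of the unitarity of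
the propagator of the control `1`. -/
lemma Sys.B_skew_basis (hS : Sys φ lam k B c d r Υ) (j l : ℕ) :
    φ.repr (B (φ l)) j = -starRingEnd ℂ (φ.repr (B (φ j)) l) := by
  have hu := ctrl_const 1 one_pos
  set u : ℝ → ℝ := fun _ => 1
  have hb : ∀ i, ∃ K, 0 ≤ K ∧ ∀ t ∈ Set.Icc (0 : ℝ) 1, ‖Υ u t (φ i) - φ i‖ ≤ K * t := by
    intro i
    obtain ⟨K, hK⟩ := hS.rhs_bdd hu (dom_basis φ _ i)
    refine ⟨K, (norm_nonneg _).trans (hK 0 ⟨le_rfl, zero_le_one⟩), fun t ht => ?_⟩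
    have h1 := (hS.htraj 1 one_pos u hu.pwc (φ i) (dom_basis φ _ i) t ht).2.1
    rw [h1, add_sub_cancel_left]
    have := intervalIntegral.norm_integral_le_of_norm_le_const (a := 0) (b := t) (C := K)
      (f := rhs φ lam B Υ u (φ i)) (fun τ hτ => by
        rw [Set.uIoc_of_le ht.1] at hτ
        exact hK τ ⟨hτ.1.le, hτ.2.trans ht.2⟩)
    rwa [sub_zero, abs_of_nonneg ht.1] at this
  have hd : ∀ i n, HasDerivWithinAt (fun τ => φ.repr (Υ u τ (φ i)) n)
      (-(Complex.I * lam n) * (if n = i then 1 else 0) + φ.repr (B (φ i)) n)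
      (Set.Ici 0) 0 := by
    intro i n
    have := hS.traj_deriv hu (dom_basis φ _ i) (t := 0) ⟨le_rfl, one_pos⟩
      continuousWithinAt_const n
    simpa [hS.hzero, repr_basis, u] using this
  obtain ⟨K1, hK1, h1⟩ := hb j
  obtain ⟨K2, hK2, h2⟩ := hb l
  -- `P` is quadratically small at `0`; by unitarity it is also affine in the components of the
  -- trajectories, and the vanishing of the derivative of that expression is the claim
  set P : ℝ → ℂ := fun t => ⟪Υ u t (φ j) - φ j, Υ u t (φ l) - φ l⟫ with hP
  have hP0 : HasDerivWithinAt P 0 (Set.Ici 0) 0 := by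
    rw [hasDerivWithinAt_iff_isLittleO]
    have e1 : P 0 = 0 := by simp [hP, hS.hzero]
    have e2 : (fun t => P t - P 0 - (t - 0) • (0 : ℂ)) =O[nhdsWithin 0 (Set.Ici 0)]
        fun t => (t - 0) ^ 2 := by
      refine Asymptotics.IsBigO.of_bound (K1 * K2) ?_
      filter_upwards [Icc_mem_nhdsGE (zero_lt_one' ℝ)] with t ht
      rw [e1]
      simp only [smul_zero, sub_zero]
      refine (norm_inner_le_norm _ _).trans ?_
      refine (mul_le_mul (h1 t ht) (h2 t ht) (norm_nonneg _) (mul_nonneg hK1 ht.1)).trans ?_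
      rw [Real.norm_eq_abs, abs_of_nonneg (sq_nonneg t)]
      exact le_of_eq (by ring)
    refine e2.trans_isLittleO ?_
    have h2 : (fun t : ℝ => (t - 0) ^ 2) =o[nhds 0] fun t => t - 0 := by
      have := Asymptotics.isLittleO_pow_sub_sub (0 : ℝ) (m := 2) (by norm_num)
      simpa using this
    exact h2.mono nhdsWithin_le_nhds
  have hPeq : ∀ t, P t = 2 * ⟪φ j, φ l⟫ - φ.repr (Υ u t (φ l)) j
      - starRingEnd ℂ (φ.repr (Υ u t (φ j)) l) := by
    intro t
    simp only [hP, inner_sub_left, inner_sub_right, LinearIsometryEquiv.inner_map_map,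
      inner_basis, inner_basis']
    ring
  have hP1 := ((hd l j).const_sub (2 * ⟪φ j, φ l⟫)).sub ((hd j l).star)
  have hP2 := hP1.congr_of_mem (fun t _ => hPeq t) Set.self_mem_Ici
  have h3 := (uniqueDiffWithinAt_Ici (0 : ℝ)).eq_deriv _ hP0 hP2
  simp only [RCLike.star_def, map_add, map_mul, map_neg, Complex.conj_I, Complex.conj_ofReal] at h3
  by_cases hjl : j = l
  · subst hjl
    simp at h3 ⊢
    linear_combination h3
  · simp [hjl, Ne.symm hjl] at h3
    linear_combination h3

lemma Sys.B_skew (hS : Sys φ lam k B c d r Υ) (j : ℕ) {x : H} (hx : x ∈ domAs φ lam (r / 2)) :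
    φ.repr (B x) j = -⟪B (φ j), x⟫ := by
  have h1 := ((innerSL ℂ (φ j)).continuous.tendsto _).comp (hS.tendsto_B_trunc hx)
  have h2 := ((innerSL ℂ (B (φ j))).continuous.tendsto _).comp (tendsto_trunc_norm φ x)
  simp only [innerSL_apply_apply, Function.comp_def] at h1 h2
  rw [← inner_basis]
  refine tendsto_nhds_unique h1 (h2.neg.congr fun N => ?_)
  rw [trunc, inner_sum, inner_sum, ← Finset.sum_neg_distrib]
  refine Finset.sum_congr rfl fun i _ => ?_
  rw [inner_smul_right, inner_smul_right, inner_basis, inner_basis', hS.B_skew_basis j i]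
  ring

/-- The free evolution is diagonal. -/
lemma Sys.repr_free (hS : Sys φ lam k B c d r Υ) {t : ℝ} (ht : 0 ≤ t) (x : H) (n : ℕ) :
    φ.repr (Υ (fun _ => 0) t x) n = Complex.exp (-(Complex.I * lam n * t)) * φ.repr x n := by
  have key : ∀ y ∈ domAs φ lam (k / 2), φ.repr (Υ (fun _ => 0) t y) n
      = Complex.exp (-(Complex.I * lam n * t)) * φ.repr y n := by
    intro y hy
    have hu := ctrl_const 0 (by linarith : 0 < t + 1)
    set g : ℝ → ℂ := fun τ => Complex.exp (Complex.I * lam n * τ) *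
      φ.repr (Υ (fun _ => 0) τ y) n with hg
    have hexp : ∀ τ : ℝ, HasDerivAt (fun τ : ℝ => Complex.exp (Complex.I * lam n * τ))
        (Complex.exp (Complex.I * lam n * τ) * (Complex.I * lam n)) τ := fun τ => by
      have h1 : HasDerivAt (fun τ : ℝ => Complex.I * lam n * (τ : ℂ)) (Complex.I * lam n) τ := by
        simpa using (Complex.ofRealCLM.hasDerivAt (x := τ)).const_mul (Complex.I * lam n)
      exact h1.cexp
    have h1 := constant_of_has_deriv_right_zero (f := g) (a := 0) (b := t) ?_ ?_ t ⟨ht, le_rfl⟩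
    · simp only [hg, hS.hzero] at h1
      simp only [Complex.ofReal_zero, mul_zero, Complex.exp_zero, one_mul,
        LinearIsometryEquiv.coe_refl, id] at h1
      rw [← h1, ← mul_assoc, ← Complex.exp_add]
      simp
    · have h2 := (innerSL ℂ (φ n)).continuous.comp_continuousOn (hS.traj_cont hu hy)
      simp only [innerSL_apply_apply, inner_basis, Function.comp_def] at h2
      refine ContinuousOn.mul (fun τ _ => (hexp τ).continuousAt.continuousWithinAt)
        (h2.mono (Set.Icc_subset_Icc_right (by linarith)))
    · intro τ hτ
      have h2 := hS.traj_deriv hu hy (t := τ) ⟨hτ.1, by linarith [hτ.2]⟩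
        continuousWithinAt_const n
      have h3 := (hexp τ).hasDerivWithinAt.mul h2
      refine h3.congr_deriv ?_
      simp
      ring
  have h1 := ((innerSL ℂ (φ n)).continuous.tendsto _).comp
    (((Υ (fun _ => 0) t).continuous.tendsto _).comp (tendsto_trunc_norm φ x))
  have h2 := ((innerSL ℂ (φ n)).continuous.tendsto _).comp (tendsto_trunc_norm φ x)
  simp only [innerSL_apply_apply, Function.comp_def, inner_basis] at h1 h2
  refine tendsto_nhds_unique h1 ((h2.const_mul _).congr fun N => ?_)
  exact (key _ (dom_trunc φ _ N x)).symm

end Skew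

/-! ### Strong limits of propagators -/

section Concatenation

lemma pwc_iff (u : ℝ → ℝ) (T : ℝ) : PiecewiseConstant u T ↔
    ∃ (m : ℕ) (p v : ℕ → ℝ), p 0 = 0 ∧ p m = T ∧ Monotone p ∧
      ∀ i < m, ∀ t ∈ Set.Ico (p i) (p (i + 1)), u t = v i := by
  constructor
  · rintro ⟨m, pts, vals, h0, hm, hmono, hv⟩
    refine ⟨m, fun i => pts ⟨min i m, by omega⟩,
      fun i => if h : i < m then vals ⟨i, h⟩ else 0, ?_, ?_, ?_, ?_⟩
    · simpa using h0
    · rw [← hm]; simp [Fin.last]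
    · intro i j hij
      apply hmono
      simp only [Fin.mk_le_mk]
      omega
    · intro i hi t ht
      simp only [hi, dif_pos]
      refine hv ⟨i, hi⟩ t ?_
      have e1 : min i m = i := by omega
      have e2 : min (i + 1) m = i + 1 := by omega
      simpa only [e1, e2, Fin.castSucc_mk, Fin.succ_mk] using ht
  · rintro ⟨m, p, v, h0, hm, hmono, hv⟩
    exact ⟨m, fun i => p i, fun i => v i, by simpa using h0, by simpa using hm,
      fun i j hij => hmono hij, fun i t ht => hv i i.2 t (by simpa using ht)⟩

lemma pwc_concat {u₁ u₂ : ℝ → ℝ} {T₁ T₂ : ℝ} (h₁ : PiecewiseConstant u₁ T₁)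
    (h₂ : PiecewiseConstant u₂ T₂) :
    PiecewiseConstant (fun τ => if τ < T₁ then u₁ τ else u₂ (τ - T₁)) (T₁ + T₂) := by
  rw [pwc_iff] at *
  obtain ⟨m, p, v, h0, hm, hmono, hv⟩ := h₁
  obtain ⟨n, q, w, g0, gn, gmono, gw⟩ := h₂
  have hQ : ∀ i, m ≤ i → (if i ≤ m then p i else T₁ + q (i - m)) = T₁ + q (i - m) := by
    intro i hi
    split_ifs with h
    · obtain rfl : i = m := le_antisymm h hi
      simp [g0, hm]
    · rfl
  refine ⟨m + n, fun i => if i ≤ m then p i else T₁ + q (i - m),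
    fun i => if i < m then v i else w (i - m), by simpa using h0, ?_, ?_, ?_⟩
  · exact (hQ (m + n) (by omega)).trans (by simp [gn])
  · refine monotone_nat_of_le_succ fun i => ?_
    by_cases h : i < m
    · rw [if_pos h.le, if_pos (by omega)]
      exact hmono (by omega)
    · rw [hQ i (by omega), hQ (i + 1) (by omega)]
      have := gmono (show i - m ≤ i + 1 - m by omega)
      linarith
  · intro i hi t ht
    simp only at ht ⊢
    by_cases h : i < m
    · rw [if_pos h.le, if_pos (by omega)] at ht
      have : t < T₁ := ht.2.trans_le (hm ▸ hmono (by omega))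
      rw [if_pos this, if_pos h]
      exact hv i h t ht
    · rw [hQ i (by omega), hQ (i + 1) (by omega)] at ht
      have h0' : 0 ≤ q (i - m) := g0 ▸ gmono (Nat.zero_le _)
      rw [if_neg (by linarith [ht.1]), if_neg h]
      refine gw (i - m) (by omega) _ ⟨by linarith [ht.1], ?_⟩
      have := ht.2
      rw [show i + 1 - m = i - m + 1 by omega] at this
      linarith

end Concatenation

section Approximation

variable {H : Type*} [NormedAddCommGroup H] [InnerProductSpace ℂ H] [CompleteSpace H]
  {φ : HilbertBasis ℕ ℂ H} {lam : ℕ → ℝ}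
  {k c d r p : ℝ} {B : H → H} {Υ : (ℝ → ℝ) → ℝ → (H ≃ₗᵢ[ℂ] H)}

/-- `W` preserves `D(|A|^p)` and lies in the strong `p`-norm closure of the propagators of
piecewise constant controls. -/
def App (φ : HilbertBasis ℕ ℂ H) (lam : ℕ → ℝ) (Υ : (ℝ → ℝ) → ℝ → (H ≃ₗᵢ[ℂ] H)) (p : ℝ)
    (W : H → H) : Prop :=
  (∀ x ∈ domAs φ lam p, W x ∈ domAs φ lam p) ∧
    ∀ F : Set H, F.Finite → (∀ x ∈ F, x ∈ domAs φ lam p) → ∀ ε > (0 : ℝ), ∃ T > (0 : ℝ),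
      ∃ u : ℝ → ℝ, PiecewiseConstant u T ∧ ∀ x ∈ F, sNorm φ lam p (W x - Υ u T x) < ε

lemma Sys.one_le_exp (hS : Sys φ lam k B c d r Υ) (u : ℝ → ℝ) {T : ℝ} (hT : 0 ≤ T) :
    1 ≤ Real.exp (c * ∫ τ in (0 : ℝ)..T, |u τ|) :=
  Real.one_le_exp (mul_nonneg hS.hc
    (intervalIntegral.integral_nonneg hT fun _ _ => abs_nonneg _))

/-- Propagators are bounded in the intermediate norms. -/
lemma Sys.prop_bound (hS : Sys φ lam k B c d r Υ) (hp : 0 ≤ p) (hpk : p < k / 2) {u : ℝ → ℝ}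
    {T : ℝ} (hT : 0 < T) (hu : PiecewiseConstant u T) {x : H} (hx : x ∈ domAs φ lam p) :
    Υ u T x ∈ domAs φ lam p ∧ sNorm φ lam p (Υ u T x) ≤
      Real.exp (c * ∫ τ in (0 : ℝ)..T, |u τ|) * sNorm φ lam p x :=
  interp_op φ hS.hpos hp hpk (hS.one_le_exp u hT.le) (Υ u T).toLinearEquiv.toLinearMap
    (fun _ => LinearIsometryEquiv.norm_map _ _) (fun x hx =>
      have h := hS.htraj T hT u hu x hx T ⟨hT.le, le_rfl⟩
      ⟨h.1, h.2.2⟩) x hx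

lemma Sys.app_prop (hS : Sys φ lam k B c d r Υ) (hp : 0 ≤ p) (hpk : p < k / 2) {u : ℝ → ℝ}
    {T : ℝ} (hT : 0 < T) (hu : PiecewiseConstant u T) : App φ lam Υ p (Υ u T) :=
  ⟨fun _ hx => (hS.prop_bound hp hpk hT hu hx).1, fun F _ _ ε hε => ⟨T, hT, u, hu, fun x _ => by
    rw [sub_self, sNorm_zero_vec]; exact hε⟩⟩

/-- The error made by the first factor is amplified by the `p`-norm bound of the second propagator
only, which is therefore chosen first. -/
lemma Sys.app_comp (hS : Sys φ lam k B c d r Υ) (hp : 0 ≤ p) (hpk : p < k / 2) {W₁ W₂ : H → H}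
    (h₂ : App φ lam Υ p W₂) (h₁ : App φ lam Υ p W₁) :
    App φ lam Υ p (fun x => W₂ (W₁ x)) := by
  refine ⟨fun x hx => h₂.1 _ (h₁.1 _ hx), fun F hF hFd ε hε => ?_⟩
  obtain ⟨T₂, hT₂, u₂, hu₂, hb₂⟩ := h₂.2 (W₁ '' F) (hF.image _)
    (by rintro _ ⟨x, hx, rfl⟩; exact h₁.1 _ (hFd x hx)) (ε / 2) (by positivity)
  set C := Real.exp (c * ∫ τ in (0 : ℝ)..T₂, |u₂ τ|) with hC
  have hC0 : 0 < C := Real.exp_pos _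
  obtain ⟨T₁, hT₁, u₁, hu₁, hb₁⟩ := h₁.2 F hF hFd (ε / (2 * C)) (by positivity)
  refine ⟨T₁ + T₂, by linarith, _, pwc_concat hu₁ hu₂, fun x hx => ?_⟩
  rw [hS.hconcat u₁ u₂ T₁ hT₁.le T₂ hT₂.le x]
  have d1 := h₁.1 _ (hFd x hx)
  have d2 := (hS.prop_bound hp hpk hT₁ hu₁ (hFd x hx)).1
  have b1 := hb₂ _ ⟨x, hx, rfl⟩
  have b2 := (hS.prop_bound hp hpk hT₂ hu₂ (dom_sub φ hS.hpos d1 d2)).2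
  rw [map_sub] at b2
  have b3 := sNorm_sub_le_sub_add_sub φ hS.hpos (h₂.1 _ d1)
    (hS.prop_bound hp hpk hT₂ hu₂ d1).1 (hS.prop_bound hp hpk hT₂ hu₂ d2).1
  have b4 := mul_lt_mul_of_pos_left (hb₁ x hx) hC0
  have b5 : C * (ε / (2 * C)) = ε / 2 := by field_simp
  linarith

lemma Sys.app_limit (hS : Sys φ lam k B c d r Υ) (hp : 0 ≤ p) (hpk : p < k / 2) {W : H → H}
    (hW : ∀ x ∈ domAs φ lam p, W x ∈ domAs φ lam p)
    (h : ∀ F : Set H, F.Finite → (∀ x ∈ F, x ∈ domAs φ lam p) → ∀ ε > (0 : ℝ), ∃ W' : H → H,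
      App φ lam Υ p W' ∧ ∀ x ∈ F, sNorm φ lam p (W x - W' x) < ε) : App φ lam Υ p W := by
  refine ⟨hW, fun F hF hFd ε hε => ?_⟩
  obtain ⟨W', hW', hb⟩ := h F hF hFd (ε / 2) (by positivity)
  obtain ⟨T, hT, u, hu, hb'⟩ := hW'.2 F hF hFd (ε / 2) (by positivity)
  refine ⟨T, hT, u, hu, fun x hx => ?_⟩
  have := sNorm_sub_le_sub_add_sub φ hS.hpos (hW _ (hFd x hx)) (hW'.1 _ (hFd x hx))
    (hS.prop_bound hp hpk hT hu (hFd x hx)).1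
  linarith [hb x hx, hb' x hx]

/-- Limits along a filter of approximable maps are approximable. -/
lemma Sys.app_tendsto (hS : Sys φ lam k B c d r Υ) (hp : 0 ≤ p) (hpk : p < k / 2) {W : H → H}
    (hW : ∀ x ∈ domAs φ lam p, W x ∈ domAs φ lam p) {α : Type*} {l : Filter α} [l.NeBot]
    (V : α → H → H) (hV : ∀ᶠ a in l, App φ lam Υ p (V a))
    (h : ∀ x ∈ domAs φ lam p, Tendsto (fun a => sNorm φ lam p (W x - V a x)) l (nhds 0)) :
    App φ lam Υ p W := by
  refine hS.app_limit hp hpk hW fun F hF hFd ε hε => ?_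
  have h1 : ∀ᶠ a in l, ∀ x ∈ F, sNorm φ lam p (W x - V a x) < ε :=
    (eventually_all_finite hF).2 fun x hx => (h x (hFd x hx)).eventually (gt_mem_nhds hε)
  obtain ⟨a, ha1, ha2⟩ := (hV.and h1).exists
  exact ⟨V a, ha1, ha2⟩

/-- Recurrence in the compact group of phase sequences: some positive power of a sequence of phases
is close to its inverse in the first `N` entries. -/
lemma recurrence (z : ℕ → Circle) (N : ℕ) {δ : ℝ} (hδ : 0 < δ) :
    ∃ m : ℕ, 1 ≤ m ∧ ∀ n < N, ‖((z n : ℂ)) ^ m - (z n : ℂ)⁻¹‖ < δ := by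
  have h := mapClusterPt_self_zpow_atTop_pow z (-1)
  rw [mapClusterPt_iff_frequently] at h
  have hU : {w : ℕ → Circle | ∀ n < N, ‖(w n : ℂ) - (z n : ℂ)⁻¹‖ < δ} ∈ nhds (z ^ (-1 : ℤ)) := by
    refine IsOpen.mem_nhds ?_ ?_
    · have : {w : ℕ → Circle | ∀ n < N, ‖(w n : ℂ) - (z n : ℂ)⁻¹‖ < δ}
          = ⋂ n ∈ Finset.range N, {w : ℕ → Circle | ‖(w n : ℂ) - (z n : ℂ)⁻¹‖ < δ} := by
        ext w; simp
      rw [this]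
      refine isOpen_biInter_finset fun n _ => ?_
      refine isOpen_lt ?_ continuous_const
      exact (((continuous_subtype_val (p := fun z : ℂ => z ∈ Submonoid.unitSphere ℂ)).comp
        (continuous_apply n)).sub continuous_const).norm
    · intro n _
      simpa using hδ
  obtain ⟨m, hm, hm1⟩ := ((h _ hU).and_eventually (eventually_ge_atTop 1)).exists
  exact ⟨m, hm1, fun n hn => by simpa using hm n hn⟩

/-- The backward free evolution is approximable, by almost periodicity of the forward one. -/
lemma Sys.app_free_symm (hS : Sys φ lam k B c d r Υ) (hp : 0 ≤ p) (hpk : p < k / 2) {t : ℝ}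
    (ht : 0 < t) : App φ lam Υ p (Υ (fun _ => 0) t).symm := by
  set z : ℕ → Circle := fun n => Circle.exp (-(lam n * t)) with hz
  have hz1 : ∀ n, (z n : ℂ) = Complex.exp (-(Complex.I * lam n * t)) := fun n => by
    rw [hz, Circle.coe_exp]; congr 1; push_cast; ring
  have hsymm : ∀ x n, φ.repr ((Υ (fun _ => 0) t).symm x) n = (z n : ℂ)⁻¹ * φ.repr x n := by
    intro x n
    have := hS.repr_free ht.le ((Υ (fun _ => 0) t).symm x) n
    rw [LinearIsometryEquiv.apply_symm_apply, ← hz1] at this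
    rw [this, inv_mul_cancel_left₀ (Circle.coe_ne_zero _)]
  have hpow : ∀ (m : ℕ) x n, φ.repr (Υ (fun _ => 0) (m * t) x) n
      = (z n : ℂ) ^ m * φ.repr x n := by
    intro m x n
    rw [hS.repr_free (by positivity), hz1, ← Complex.exp_nat_mul]
    congr 2
    push_cast; ring
  refine hS.app_limit hp hpk (fun x hx => ?_) fun F hF hFd ε hε => ?_
  · refine ((sNorm_congr_repr φ (lam := lam) fun n => ?_).1).2 hx
    rw [hsymm, norm_mul, norm_inv, Circle.norm_coe, inv_one, one_mul]
  · have h1 : ∀ᶠ N in atTop, ∀ x ∈ F, sNorm φ lam p (x - trunc φ N x) < ε / 4 :=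
      (eventually_all_finite hF).2 fun x hx =>
        (tendsto_trunc φ p (hFd x hx)).eventually (gt_mem_nhds (by positivity))
    obtain ⟨N, hN⟩ := h1.exists
    have h2 : ∃ δ : ℝ, 0 < δ ∧ ∀ x ∈ F, δ * sNorm φ lam p x < ε / 2 := by
      have : ∀ᶠ δ in nhdsWithin (0 : ℝ) (Set.Ioi 0), ∀ x ∈ F, δ * sNorm φ lam p x < ε / 2 :=
        (eventually_all_finite hF).2 fun x _ => by
          have : Tendsto (fun δ : ℝ => δ * sNorm φ lam p x) (nhdsWithin 0 (Set.Ioi 0))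
              (nhds 0) := by
            have := (continuous_mul_const (sNorm φ lam p x)).tendsto 0
            rw [zero_mul] at this
            exact this.mono_left nhdsWithin_le_nhds
          exact this.eventually (gt_mem_nhds (by positivity))
      obtain ⟨δ, h3, h4⟩ := (this.and self_mem_nhdsWithin).exists
      exact ⟨δ, h4, h3⟩
    obtain ⟨δ, hδ, hδF⟩ := h2
    obtain ⟨m, hm, hmz⟩ := recurrence z N hδ
    have hmt : 0 < (m : ℝ) * t := mul_pos (by exact_mod_cast hm) ht
    refine ⟨_, hS.app_prop hp hpk hmt (pwc_const 0 _ hmt.le), fun x hx => ?_⟩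
    set y := (Υ (fun _ => 0) t).symm x - Υ (fun _ => 0) (m * t) x with hy
    have hyn : ∀ n, ‖φ.repr y n‖ = ‖(z n : ℂ) ^ m - (z n : ℂ)⁻¹‖ * ‖φ.repr x n‖ := by
      intro n
      rw [hy, repr_sub, hsymm, hpow, ← sub_mul, norm_mul, norm_sub_rev]
    -- low modes are treated by recurrence, high modes by the smallness of the tail of `x`
    have hyd1 := sNorm_mono_repr φ hS.hpos (x := trunc φ N y) (dom_smul φ hS.hpos (δ : ℂ)
      (hFd x hx)) (fun n => by
        rw [repr_trunc, repr_smul, norm_mul, Complex.norm_real, Real.norm_eq_abs, abs_of_pos hδ]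
        split_ifs with hn
        · rw [hyn]; exact mul_le_mul_of_nonneg_right (hmz n hn).le (norm_nonneg _)
        · rw [norm_zero]; positivity)
    have hyd2 := sNorm_mono_repr φ hS.hpos (x := y - trunc φ N y) (dom_smul φ hS.hpos (2 : ℂ)
      (dom_sub φ hS.hpos (hFd x hx) (dom_trunc φ p N x))) (fun n => by
        rw [repr_sub φ y, repr_trunc, repr_smul, repr_sub φ x, repr_trunc, norm_mul]
        split_ifs with hn
        · simp
        · rw [sub_zero, sub_zero, hyn]
          refine mul_le_mul_of_nonneg_right ((norm_sub_le _ _).trans ?_) (norm_nonneg _)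
          rw [norm_pow, norm_inv, Circle.norm_coe]
          norm_num)
    have h3 := sNorm_add_le φ hS.hpos hyd1.1 hyd2.1
    rw [add_sub_cancel] at h3
    rw [sNorm_smul, Complex.norm_real, Real.norm_eq_abs, abs_of_pos hδ] at hyd1
    rw [sNorm_smul] at hyd2
    have h4 := hyd1.2
    have h5 := hyd2.2
    have h6 := hδF x hx
    have h7 := hN x hx
    norm_num at h5
    linarith

end Approximation

/-! ### First-order averaging -/

section Averaging

/-- Once its mean is removed, `exp (i μ t)` has a bounded primitive. -/
lemma exp_antideriv (μ : ℝ) : ∃ (Γ : ℝ → ℂ) (K : ℝ),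
    (∀ t : ℝ, HasDerivAt Γ (Complex.exp (Complex.I * μ * t) - if μ = 0 then 1 else 0) t) ∧
      ∀ t, ‖Γ t‖ ≤ K := by
  by_cases h : μ = 0
  · refine ⟨fun _ => 0, 0, fun t => ?_, fun t => by simp⟩
    simpa [h] using hasDerivAt_const t (0 : ℂ)
  · have hI : Complex.I * μ ≠ 0 := mul_ne_zero Complex.I_ne_zero (by exact_mod_cast h)
    refine ⟨fun t => Complex.exp (Complex.I * μ * t) / (Complex.I * μ), ‖(Complex.I * μ)⁻¹‖,
      fun t => ?_, fun t => ?_⟩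
    · have h1 : HasDerivAt (fun τ : ℝ => Complex.I * μ * (τ : ℂ)) (Complex.I * μ) t := by
        simpa using (Complex.ofRealCLM.hasDerivAt (x := t)).const_mul (Complex.I * μ)
      have h2 := h1.cexp.div_const (Complex.I * μ)
      rw [mul_div_assoc, div_self hI, mul_one] at h2
      simpa [h] using h2
    · rw [norm_div, mul_assoc, mul_comm, ← Complex.ofReal_mul, Complex.norm_exp_ofReal_mul_I,
        norm_inv, one_div, mul_comm]

/-- The mean value of `cos (ω t + α) * exp (i ν t)` over the real line. -/
def mean (ω α ν : ℝ) : ℂ :=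
  (Complex.exp (Complex.I * α) * (if ν + ω = 0 then 1 else 0)
    + Complex.exp (-(Complex.I * α)) * (if ν - ω = 0 then 1 else 0)) / 2

/-- Once its mean is removed, `cos (ω t + α) * exp (i ν t)` has a bounded primitive. -/
lemma cos_antideriv (ω α ν : ℝ) : ∃ (Γ : ℝ → ℂ) (K : ℝ), 0 ≤ K ∧
    (∀ t : ℝ, HasDerivAt Γ
      ((Real.cos (ω * t + α) : ℂ) * Complex.exp (Complex.I * ν * t) - mean ω α ν) t) ∧
      ∀ t, ‖Γ t‖ ≤ K := by
  obtain ⟨Γ₁, K₁, hd₁, hb₁⟩ := exp_antideriv (ν + ω)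
  obtain ⟨Γ₂, K₂, hd₂, hb₂⟩ := exp_antideriv (ν - ω)
  set e := Complex.exp (Complex.I * α)
  set f := Complex.exp (-(Complex.I * α))
  refine ⟨fun t => (e * Γ₁ t + f * Γ₂ t) / 2, (‖e‖ * K₁ + ‖f‖ * K₂) / 2, ?_, fun t => ?_,
    fun t => ?_⟩
  · have := (norm_nonneg _).trans (hb₁ 0)
    have := (norm_nonneg _).trans (hb₂ 0)
    positivity
  · refine ((((hd₁ t).const_mul e).add ((hd₂ t).const_mul f)).div_const 2).congr_deriv ?_
    have h1 : (Real.cos (ω * t + α) : ℂ) * Complex.exp (Complex.I * ν * t)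
        = (e * Complex.exp (Complex.I * (ν + ω : ℝ) * t)
          + f * Complex.exp (Complex.I * (ν - ω : ℝ) * t)) / 2 := by
      rw [Complex.ofReal_cos, Complex.cos, ← Complex.exp_add, ← Complex.exp_add,
        div_mul_eq_mul_div, add_mul, ← Complex.exp_add, ← Complex.exp_add]
      congr 3 <;> · push_cast; ring_nf
    rw [h1, mean]
    ring
  · have h3 := norm_add_le (e * Γ₁ t) (f * Γ₂ t)
    rw [norm_mul, norm_mul] at h3
    have h4 := mul_le_mul_of_nonneg_left (hb₁ t) (norm_nonneg e)
    have h5 := mul_le_mul_of_nonneg_left (hb₂ t) (norm_nonneg f)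
    rw [norm_div, Complex.norm_ofNat]
    linarith

lemma mean_neg (ω α ν : ℝ) : mean ω α (-ν) = starRingEnd ℂ (mean ω α ν) := by
  have e1 : (-ν + ω = 0) ↔ (ν - ω = 0) := by constructor <;> intro h <;> linarith
  have e2 : (-ν - ω = 0) ↔ (ν + ω = 0) := by constructor <;> intro h <;> linarith
  simp only [mean, e1, e2, map_div₀, map_add, map_mul, ← Complex.exp_conj, map_neg,
    Complex.conj_I, Complex.conj_ofReal, apply_ite (starRingEnd ℂ), map_one, map_zero, neg_mul,
    neg_neg]
  rw [add_comm, show starRingEnd ℂ 2 = 2 from map_ofNat _ 2]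

lemma mean_ne_zero_abs {ω α ν : ℝ} (hω : 0 ≤ ω) (h : mean ω α ν ≠ 0) : |ν| = ω := by
  by_contra hne
  apply h
  have h1 : ν + ω ≠ 0 := fun h => hne (by rw [show ν = -ω by linarith, abs_neg, abs_of_nonneg hω])
  have h2 : ν - ω ≠ 0 := fun h => hne (by rw [show ν = ω by linarith, abs_of_nonneg hω])
  simp [mean, h1, h2]

/-- First-order averaging: if `w · x` varies, up to an error `h * E`, only through the oscillating
coefficients `γ = Γ'` with bounded primitives, then it is almost constant on times of order
`1/h`. The primitives are used as a near-identity correction of `w · x`. -/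
lemma averaging (J L : Finset ℕ) {h T E b0 : ℝ} (hh : 0 < h) (hT : 0 ≤ T)
    (w w' x x' : ℕ → ℝ → ℂ) (Γ γ : ℕ → ℕ → ℝ → ℂ) (K : ℕ → ℕ → ℝ) (bx : ℕ → ℝ)
    (hw : ∀ j t, HasDerivAt (w j) (w' j t) t)
    (hxc : ∀ j, ContinuousOn (x j) (Set.Icc 0 T))
    (hx : ∀ j, ∀ t ∈ Set.Ico 0 T, HasDerivWithinAt (x j) (x' j t) (Set.Ici t) t)
    (hΓ : ∀ j l t, HasDerivAt (Γ j l) (γ j l t) t)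
    (bw : ∀ j t, ‖w j t‖ ≤ 1) (bw' : ∀ j t, ‖w' j t‖ ≤ h * b0)
    (bxx : ∀ j, ∀ t ∈ Set.Icc 0 T, ‖x j t‖ ≤ 1)
    (bx' : ∀ j, ∀ t ∈ Set.Ico 0 T, ‖x' j t‖ ≤ h * bx j)
    (bΓ : ∀ j l t, ‖Γ j l t‖ ≤ K j l)
    (hmain : ∀ t ∈ Set.Ico 0 T, ‖∑ j ∈ J, (w' j t * x j t + w j t * x' j t)
      + h * ∑ j ∈ J, ∑ l ∈ L, w j t * γ j l t * x l t‖ ≤ h * E) :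
    ‖∑ j ∈ J, w j T * x j T - ∑ j ∈ J, w j 0 * x j 0‖ ≤
      h * T * (E + h * ∑ j ∈ J, ∑ l ∈ L, K j l * (b0 + bx l))
        + 2 * h * ∑ j ∈ J, ∑ l ∈ L, K j l := by
  -- `h * R` is the near-identity correction: differentiating `Γ` in it produces exactly the
  -- oscillating terms that `hmain` adds to the derivative of `∑ w j * x j`
  set R : ℝ → ℂ := fun t => ∑ j ∈ J, ∑ l ∈ L, w j t * Γ j l t * x l t with hR
  set Θ : ℝ → ℂ := fun t => ∑ j ∈ J, w j t * x j t + h * R t with hΘ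
  set Θ' : ℝ → ℂ := fun t => ∑ j ∈ J, (w' j t * x j t + w j t * x' j t)
      + h * ∑ j ∈ J, ∑ l ∈ L, ((w' j t * Γ j l t + w j t * γ j l t) * x l t
        + w j t * Γ j l t * x' l t) with hΘ'
  have hK0 : ∀ j l, 0 ≤ K j l := fun j l => (norm_nonneg _).trans (bΓ j l 0)
  have hcont : ContinuousOn Θ (Set.Icc 0 T) := by
    have hwc : ∀ j, ContinuousOn (w j) (Set.Icc 0 T) := fun j t _ =>
      (hw j t).continuousAt.continuousWithinAt
    have hΓc : ∀ j l, ContinuousOn (Γ j l) (Set.Icc 0 T) := fun j l t _ =>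
      (hΓ j l t).continuousAt.continuousWithinAt
    refine ContinuousOn.add (continuousOn_finsetSum _ fun j _ => (hwc j).mul (hxc j)) ?_
    exact continuousOn_const.mul (continuousOn_finsetSum _ fun j _ =>
      continuousOn_finsetSum _ fun l _ => ((hwc j).mul (hΓc j l)).mul (hxc l))
  have hder : ∀ t ∈ Set.Ico 0 T, HasDerivWithinAt Θ (Θ' t) (Set.Ici t) t := by
    intro t ht
    refine HasDerivWithinAt.add (HasDerivWithinAt.fun_sum fun j _ =>
      (hw j t).hasDerivWithinAt.mul (hx j t ht)) (HasDerivWithinAt.const_mul _ ?_)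
    exact HasDerivWithinAt.fun_sum fun j _ => HasDerivWithinAt.fun_sum fun l _ =>
      ((hw j t).hasDerivWithinAt.mul (hΓ j l t).hasDerivWithinAt).mul (hx l t ht)
  have hbd : ∀ t ∈ Set.Ico 0 T, ‖Θ' t‖ ≤
      h * (E + h * ∑ j ∈ J, ∑ l ∈ L, K j l * (b0 + bx l)) := by
    intro t ht
    have htc : t ∈ Set.Icc 0 T := ⟨ht.1, ht.2.le⟩
    have e1 : Θ' t = (∑ j ∈ J, (w' j t * x j t + w j t * x' j t)
        + h * ∑ j ∈ J, ∑ l ∈ L, w j t * γ j l t * x l t)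
        + h * ∑ j ∈ J, ∑ l ∈ L, (w' j t * Γ j l t * x l t + w j t * Γ j l t * x' l t) := by
      simp only [hΘ']
      rw [add_assoc, ← mul_add, ← Finset.sum_add_distrib]
      congr 2
      refine Finset.sum_congr rfl fun j _ => ?_
      rw [← Finset.sum_add_distrib]
      refine Finset.sum_congr rfl fun l _ => ?_
      ring
    rw [e1, mul_add]
    refine (norm_add_le _ _).trans (add_le_add (hmain t ht) ?_)
    rw [norm_mul, Complex.norm_real, Real.norm_eq_abs, abs_of_pos hh]
    refine mul_le_mul_of_nonneg_left ?_ hh.le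
    rw [Finset.mul_sum]
    refine norm_sum_le_of_le _ fun j _ => ?_
    rw [Finset.mul_sum]
    refine norm_sum_le_of_le _ fun l _ => ?_
    refine (norm_add_le _ _).trans ?_
    rw [norm_mul, norm_mul, norm_mul, norm_mul]
    have a1 : ‖w' j t‖ * ‖Γ j l t‖ * ‖x l t‖ ≤ h * b0 * K j l * 1 := by
      have := (norm_nonneg _).trans (bw' j t)
      have := hK0 j l
      gcongr
      · exact bw' j t
      · exact bΓ j l t
      · exact bxx l t htc
    have a2 : ‖w j t‖ * ‖Γ j l t‖ * ‖x' l t‖ ≤ 1 * K j l * (h * bx l) := by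
      have := (norm_nonneg _).trans (bx' l t ht)
      have := hK0 j l
      gcongr
      · exact bw j t
      · exact bΓ j l t
      · exact bx' l t ht
    linarith
  have hΘd := norm_image_sub_le_of_norm_deriv_right_le_segment hcont hder hbd T ⟨hT, le_rfl⟩
  have hRb : ∀ t ∈ Set.Icc 0 T, ‖R t‖ ≤ ∑ j ∈ J, ∑ l ∈ L, K j l := by
    intro t ht
    refine norm_sum_le_of_le _ fun j _ => norm_sum_le_of_le _ fun l _ => ?_
    rw [norm_mul, norm_mul]
    calc ‖w j t‖ * ‖Γ j l t‖ * ‖x l t‖ ≤ 1 * K j l * 1 := by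
          have := hK0 j l
          gcongr
          · exact bw j t
          · exact bΓ j l t
          · exact bxx l t ht
      _ = _ := by ring
  have e2 : ∑ j ∈ J, w j T * x j T - ∑ j ∈ J, w j 0 * x j 0
      = (Θ T - Θ 0) - h * R T + h * R 0 := by simp only [hΘ]; ring
  rw [e2]
  have n1 : ‖(h : ℂ) * R T‖ ≤ h * ∑ j ∈ J, ∑ l ∈ L, K j l := by
    rw [norm_mul, Complex.norm_real, Real.norm_eq_abs, abs_of_pos hh]
    exact mul_le_mul_of_nonneg_left (hRb T ⟨hT, le_rfl⟩) hh.le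
  have n2 : ‖(h : ℂ) * R 0‖ ≤ h * ∑ j ∈ J, ∑ l ∈ L, K j l := by
    rw [norm_mul, Complex.norm_real, Real.norm_eq_abs, abs_of_pos hh]
    exact mul_le_mul_of_nonneg_left (hRb 0 ⟨le_rfl, hT⟩) hh.le
  have n3 := norm_add_le ((Θ T - Θ 0) - h * R T) (h * R 0)
  have n4 := norm_sub_le (Θ T - Θ 0) (h * R T)
  rw [sub_zero] at hΘd
  linarith

/-- A piecewise constant approximation, with step `h`, of the slowly acting resonant control
`h * cos (ω t + α)`. -/
def stepCtrl (h ω α : ℝ) (t : ℝ) : ℝ := h * Real.cos (ω * (h * ⌊t / h⌋) + α)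

lemma stepCtrl_abs_le {h : ℝ} (hh : 0 < h) (ω α t : ℝ) : |stepCtrl h ω α t| ≤ h := by
  rw [stepCtrl, abs_mul, abs_of_pos hh]
  exact mul_le_of_le_one_right hh.le (Real.abs_cos_le_one _)

lemma stepCtrl_close {h ω : ℝ} (hh : 0 < h) (hω : 0 ≤ ω) (α t : ℝ) :
    |h * Real.cos (ω * t + α) - stepCtrl h ω α t| ≤ h * (h * ω) := by
  rw [stepCtrl, ← mul_sub, abs_mul, abs_of_pos hh]
  refine mul_le_mul_of_nonneg_left ?_ hh.le
  refine (Real.abs_cos_sub_cos_le _ _).trans ?_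
  have h1 := Int.floor_le (t / h)
  have h2 := (Int.lt_floor_add_one (t / h)).le
  rw [le_div_iff₀ hh] at h1
  rw [div_le_iff₀ hh] at h2
  rw [show ω * t + α - (ω * (h * ⌊t / h⌋) + α) = ω * (t - h * ⌊t / h⌋) by ring, abs_mul,
    abs_of_nonneg hω, abs_of_nonneg (by linarith), mul_comm]
  exact mul_le_mul_of_nonneg_right (by linarith) hω

lemma stepCtrl_rightCont {h : ℝ} (hh : 0 < h) (ω α t : ℝ) :
    ContinuousWithinAt (stepCtrl h ω α) (Set.Ici t) t := by
  refine (continuousWithinAt_const (b := stepCtrl h ω α t)).congr_of_eventuallyEq ?_ rfl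
  have h1 : t < h * (⌊t / h⌋ + 1) := by
    have := Int.lt_floor_add_one (t / h)
    rw [div_lt_iff₀ hh] at this
    linarith
  filter_upwards [Ico_mem_nhdsGE h1] with s hs
  have : ⌊s / h⌋ = ⌊t / h⌋ := by
    rw [Int.floor_eq_iff]
    constructor
    · exact (Int.floor_le _).trans (div_le_div_of_nonneg_right hs.1 hh.le)
    · rw [div_lt_iff₀ hh]; linarith [hs.2]
  rw [stepCtrl, stepCtrl, this]

lemma stepCtrl_ctrl {h : ℝ} (hh : 0 < h) (ω α : ℝ) {T : ℝ} (hT : 0 < T) :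
    Ctrl (stepCtrl h ω α) T := by
  refine ⟨hT, ?_, ?_, ⟨h, stepCtrl_abs_le hh ω α⟩⟩
  · rw [pwc_iff]
    refine ⟨⌈T / h⌉₊, fun i => min (i * h) T, fun i => h * Real.cos (ω * (h * i) + α), ?_, ?_,
      ?_, ?_⟩
    · simpa using hT.le
    · have := Nat.le_ceil (T / h)
      rw [div_le_iff₀ hh] at this
      exact min_eq_right this
    · intro i j hij
      have : (i : ℝ) ≤ j := by exact_mod_cast hij
      exact min_le_min_right _ (mul_le_mul_of_nonneg_right this hh.le)
    · intro i _ t ht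
      have h1 : t < T := ht.2.trans_le (min_le_right _ _)
      have h2 : t < (i + 1 : ℕ) * h := ht.2.trans_le (min_le_left _ _)
      have h3 : i * h ≤ t := by
        rcases min_le_iff.1 ht.1 with h | h
        · exact h
        · linarith
      have : ⌊t / h⌋ = (i : ℤ) := by
        rw [Int.floor_eq_iff]
        constructor
        · rw [le_div_iff₀ hh]; exact_mod_cast h3
        · rw [div_lt_iff₀ hh]; exact_mod_cast h2
      rw [stepCtrl, this]
      simp
  · have : Measurable fun t : ℝ => ((⌊t / h⌋ : ℤ) : ℝ) :=
      (measurable_from_top (f := fun z : ℤ => (z : ℝ))).comp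
        (Int.measurable_floor.comp (measurable_id.div_const h))
    exact ((Real.measurable_cos.comp (((this.const_mul h).const_mul ω).add_const α)).const_mul h)

end Averaging

/-! ### Plane transformations -/

section Givens

variable {H : Type*} [NormedAddCommGroup H] [InnerProductSpace ℂ H]

/-- The map acting on the plane spanned by an orthonormal pair `g, h` through the matrix with rows
`(α, β)` and `(-conj β, conj α)`, and trivially on the orthogonal complement. -/
def G (g h : H) (α β : ℂ) (ψ : H) : H :=
  ψ + ((α - 1) * ⟪g, ψ⟫ + β * ⟪h, ψ⟫) • g
    + (-(starRingEnd ℂ β) * ⟪g, ψ⟫ + (starRingEnd ℂ α - 1) * ⟪h, ψ⟫) • h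

lemma G_one (g h ψ : H) : G g h 1 0 ψ = ψ := by simp [G]

lemma G_add (g h : H) (α β : ℂ) (x y : H) : G g h α β (x + y) = G g h α β x + G g h α β y := by
  simp only [G, inner_add_right]
  module

lemma G_smul (g h : H) (α β z : ℂ) (x : H) : G g h α β (z • x) = z • G g h α β x := by
  simp only [G, inner_smul_right]
  module

lemma inner_G_left {g h : H} (hg : ‖g‖ = 1) (hgh : ⟪g, h⟫ = 0) (α β : ℂ) (ψ : H) :
    ⟪g, G g h α β ψ⟫ = α * ⟪g, ψ⟫ + β * ⟪h, ψ⟫ := by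
  simp only [G, inner_add_right, inner_smul_right, hgh, inner_self_eq_norm_sq_to_K, hg]
  simp
  ring

lemma inner_G_right {g h : H} (hh : ‖h‖ = 1) (hgh : ⟪g, h⟫ = 0) (α β : ℂ) (ψ : H) :
    ⟪h, G g h α β ψ⟫ = -(starRingEnd ℂ β) * ⟪g, ψ⟫ + starRingEnd ℂ α * ⟪h, ψ⟫ := by
  have hhg : ⟪h, g⟫ = 0 := inner_eq_zero_symm.1 hgh
  simp only [G, inner_add_right, inner_smul_right, hhg, inner_self_eq_norm_sq_to_K, hh]
  simp
  ring

lemma G_comp {g h : H} (hg : ‖g‖ = 1) (hh : ‖h‖ = 1) (hgh : ⟪g, h⟫ = 0) (α β α' β' : ℂ) (ψ : H) :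
    G g h α β (G g h α' β' ψ) = G g h (α * α' - β * starRingEnd ℂ β')
      (α * β' + β * starRingEnd ℂ α') ψ := by
  rw [G, inner_G_left hg hgh, inner_G_right hh hgh]
  simp only [G, map_sub, map_add, map_mul, Complex.conj_conj]
  module

lemma inner_G_adjoint (g h : H) (α β : ℂ) (x y : H) :
    ⟪G g h α β x, y⟫ = ⟪x, G g h (starRingEnd ℂ α) (-β) y⟫ := by
  simp only [G, inner_add_right, inner_add_left, inner_smul_right, inner_smul_left, map_add,
    map_mul, map_sub, map_neg, map_one, Complex.conj_conj, inner_conj_symm]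
  ring

lemma norm_G {g h : H} (hg : ‖g‖ = 1) (hh : ‖h‖ = 1) (hgh : ⟪g, h⟫ = 0) {α β : ℂ}
    (hab : ‖α‖ ^ 2 + ‖β‖ ^ 2 = 1) (x : H) : ‖G g h α β x‖ = ‖x‖ := by
  have h1 : ⟪G g h α β x, G g h α β x⟫ = ⟪x, x⟫ := by
    rw [inner_G_adjoint, G_comp hg hh hgh]
    have e1 : starRingEnd ℂ α * α - -β * starRingEnd ℂ β = 1 := by
      rw [Complex.conj_mul', neg_mul, sub_neg_eq_add, Complex.mul_conj']
      exact_mod_cast hab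
    have e2 : starRingEnd ℂ α * β + -β * starRingEnd ℂ α = 0 := by ring
    rw [e1, e2, G_one]
  rw [inner_self_eq_norm_sq_to_K, inner_self_eq_norm_sq_to_K] at h1
  have h2 : ‖G g h α β x‖ ^ 2 = ‖x‖ ^ 2 := by exact_mod_cast h1
  exact (sq_eq_sq₀ (norm_nonneg _) (norm_nonneg _)).1 h2

variable [CompleteSpace H] (φ : HilbertBasis ℕ ℂ H) {lam : ℕ → ℝ}

lemma dom_G (hpos : ∀ n, 0 < lam n) {p : ℝ} {g h : H} (hg : g ∈ domAs φ lam p)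
    (hh : h ∈ domAs φ lam p) (α β : ℂ) {x : H} (hx : x ∈ domAs φ lam p) :
    G g h α β x ∈ domAs φ lam p :=
  dom_add φ hpos (dom_add φ hpos hx (dom_smul φ hpos _ hg)) (dom_smul φ hpos _ hh)

lemma repr_G_basis (a b m j : ℕ) (α β : ℂ) : φ.repr (G (φ a) (φ b) α β (φ m)) j =
    (if j = m then 1 else 0)
      + ((α - 1) * (if a = m then 1 else 0) + β * (if b = m then 1 else 0))
        * (if j = a then 1 else 0)
      + (-(starRingEnd ℂ β) * (if a = m then 1 else 0)
        + (starRingEnd ℂ α - 1) * (if b = m then 1 else 0)) * (if j = b then 1 else 0) := by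
  simp only [G, repr_add, repr_smul, repr_basis, inner_basis_basis]

end Givens

section Resonance

variable {H : Type*} [NormedAddCommGroup H] [InnerProductSpace ℂ H] [CompleteSpace H]
  {φ : HilbertBasis ℕ ℂ H} {lam : ℕ → ℝ}
  {k c d r p : ℝ} {B : H → H} {Υ : (ℝ → ℝ) → ℝ → (H ≃ₗᵢ[ℂ] H)}

/-- The derivative of `t ↦ conj ((G …) φ_m)_j`, for the rotation of angle `κ t` and phase `η`. -/
lemma hasDerivAt_G_coord {a b : ℕ} (hab : a ≠ b) (m j : ℕ) {η : ℂ} (hη : ‖η‖ = 1) (κ t : ℝ) :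
    HasDerivAt (fun t : ℝ => starRingEnd ℂ
        (φ.repr (G (φ a) (φ b) (Real.cos (κ * t)) (η * Real.sin (κ * t)) (φ m)) j))
      ((if j = a then κ * starRingEnd ℂ η * starRingEnd ℂ
          (φ.repr (G (φ a) (φ b) (Real.cos (κ * t)) (η * Real.sin (κ * t)) (φ m)) b) else 0)
      - if j = b then κ * η * starRingEnd ℂ
          (φ.repr (G (φ a) (φ b) (Real.cos (κ * t)) (η * Real.sin (κ * t)) (φ m)) a) else 0) t := by
  have hC : HasDerivAt (fun t : ℝ => ((Real.cos (κ * t) : ℝ) : ℂ))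
      (-(κ * Real.sin (κ * t) : ℝ) : ℂ) t := by
    have := (((hasDerivAt_id t).const_mul κ).cos).ofReal_comp
    refine this.congr_deriv ?_
    simp only [id]
    push_cast
    ring
  have hD : HasDerivAt (fun t : ℝ => ((Real.sin (κ * t) : ℝ) : ℂ))
      ((κ * Real.cos (κ * t) : ℝ) : ℂ) t := by
    have := (((hasDerivAt_id t).const_mul κ).sin).ofReal_comp
    refine this.congr_deriv ?_
    simp only [id]
    push_cast
    ring
  have hηη : η * starRingEnd ℂ η = 1 := by rw [Complex.mul_conj', hη]; norm_num
  simp only [repr_G_basis, map_add, map_mul, map_sub, map_neg, Complex.conj_conj,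
    Complex.conj_ofReal, apply_ite (starRingEnd ℂ), map_one, map_zero]
  have h1 := ((((hC.sub_const 1).mul_const (if a = m then (1 : ℂ) else 0)).add
    ((hD.const_mul (starRingEnd ℂ η)).mul_const (if b = m then (1 : ℂ) else 0))).mul_const
    (if j = a then (1 : ℂ) else 0)).const_add (if j = m then (1 : ℂ) else 0)
  have h2 := ((((hD.const_mul η).neg.mul_const (if a = m then (1 : ℂ) else 0)).add
    ((hC.sub_const 1).mul_const (if b = m then (1 : ℂ) else 0))).mul_const
    (if j = b then (1 : ℂ) else 0))
  refine (h1.add h2).congr_deriv ?_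
  have ea : b ≠ a := hab.symm
  simp only [hab, ea, if_true, if_false, if_true, mul_one, mul_zero, add_zero]
  push_cast
  by_cases hja : j = a
  · have hjb : j ≠ b := fun h => hab (hja ▸ h)
    simp only [hja, hab, if_true, if_false, mul_one, mul_zero, add_zero, sub_zero]
    linear_combination (κ * Complex.sin (κ * t) * (if a = m then (1 : ℂ) else 0)) * hηη
  · by_cases hjb : j = b
    · simp only [hjb, ea, if_true, if_false, mul_one, mul_zero, add_zero, zero_sub, zero_add]
      linear_combination (κ * Complex.sin (κ * t) * (if b = m then (1 : ℂ) else 0)) * hηη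
    · simp [hja, hjb]

end Resonance

/-! ### Resonant driving -/

section Resonance

variable {H : Type*} [NormedAddCommGroup H] [InnerProductSpace ℂ H] [CompleteSpace H]
  {φ : HilbertBasis ℕ ℂ H} {lam : ℕ → ℝ}
  {k c d r p : ℝ} {B : H → H} {Υ : (ℝ → ℝ) → ℝ → (H ≃ₗᵢ[ℂ] H)}

/-- The matrix of time averages seen by the resonant control `cos (ω t + α)`. -/
def avg (φ : HilbertBasis ℕ ℂ H) (lam : ℕ → ℝ) (B : H → H) (ω α : ℝ) (l j : ℕ) : ℂ :=
  φ.repr (B (φ j)) l * mean ω α (lam l - lam j)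

/-- The averaged matrix couples only the levels `a` and `b`, with strength `β`. -/
def Resonant (φ : HilbertBasis ℕ ℂ H) (lam : ℕ → ℝ) (B : H → H) (ω α : ℝ) (a b : ℕ) (β : ℂ) :
    Prop :=
  ∀ l j, avg φ lam B ω α l j = if l = a ∧ j = b then β
    else if l = b ∧ j = a then -(starRingEnd ℂ β) else 0

/-- The trajectory from `φ m` under the resonant control, pulled back by the free evolution, is at
time `θ / h` close to the rotation of the plane of `φ a, φ b` by the angle `κ θ`. The squared error
is `O(h)` plus the tails of `B (φ j)`, `j ∈ {a, b, m}`, beyond the level `L`. Since both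
vectors have norm one, it suffices to bound the variation of their inner product, in which `B` may be
moved to the finitely supported rotated vector. -/
lemma Sys.rotation_bound (hS : Sys φ lam k B c d r Υ) {a b : ℕ} (hab : a ≠ b) {ω α : ℝ}
    (hω : 0 ≤ ω) {β η : ℂ} {κ : ℝ} (hκ : 0 ≤ κ) (hη : ‖η‖ = 1) (hβ : β = κ * η)
    (hres : Resonant φ lam B ω α a b β) (m L : ℕ) (haL : a < L) (hbL : b < L) :
    ∃ C₁ C₂ : ℝ, ∀ h > (0 : ℝ), ∀ θ > (0 : ℝ),
      ‖(Υ (fun _ => 0) (θ / h)).symm (Υ (stepCtrl h ω α) (θ / h) (φ m))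
        - G (φ a) (φ b) (Real.cos (κ * θ)) (η * Real.sin (κ * θ)) (φ m)‖ ^ 2 ≤
      2 * (θ * (∑ j ∈ {a, b, m}, ‖B (φ j) - trunc φ L (B (φ j))‖ + h * C₁) + h * C₂) := by
  set bb : ℕ → ℕ → ℂ := fun l j => φ.repr (B (φ j)) l with hbb
  choose Γ K hK hΓ hΓb using fun l j => cos_antideriv ω α (lam l - lam j)
  set J : Finset ℕ := {a, b, m} with hJ
  set tl : ℕ → ℝ := fun j => ‖B (φ j) - trunc φ L (B (φ j))‖ with htl
  refine ⟨ω * ∑ j ∈ J, ∑ l ∈ Finset.range L, ‖bb l j‖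
      + ∑ j ∈ J, ∑ l ∈ Finset.range L, ‖bb l j‖ * K l j * (κ + ‖B (φ l)‖),
    2 * ∑ j ∈ J, ∑ l ∈ Finset.range L, ‖bb l j‖ * K l j, fun h hh θ hθ => ?_⟩
  set T := θ / h with hT
  have hT0 : 0 < T := div_pos hθ hh
  set u := stepCtrl h ω α with hu
  have huc : Ctrl u T := stepCtrl_ctrl hh ω α hT0
  have hm : φ m ∈ domAs φ lam (k / 2) := dom_basis φ _ m
  set ψ : ℝ → H := fun t => Υ u t (φ m) with hψ
  set V : ℝ → H := fun t =>
    G (φ a) (φ b) (Real.cos (κ * h * t)) (η * Real.sin (κ * h * t)) (φ m) with hV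
  have hG1 : ∀ t, ‖V t‖ = 1 := by
    intro t
    simp only [hV]
    rw [norm_G (norm_basis φ a) (norm_basis φ b) (by simp [inner_basis_basis, hab]), norm_basis]
    rw [norm_mul, hη, one_mul, Complex.norm_real, Complex.norm_real, Real.norm_eq_abs,
      Real.norm_eq_abs, sq_abs, sq_abs, Real.cos_sq_add_sin_sq]
  -- `w` holds the conjugate components of the rotated vector, `x` those of the trajectory in the
  -- interaction picture
  set w : ℕ → ℝ → ℂ := fun j t => starRingEnd ℂ (φ.repr (V t) j) with hw
  set w' : ℕ → ℝ → ℂ := fun j t =>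
    (if j = a then h * starRingEnd ℂ β * w b t else 0) - if j = b then h * β * w a t else 0
    with hw'
  set e : ℕ → ℝ → ℂ := fun j t => Complex.exp (Complex.I * lam j * t) with he
  set x : ℕ → ℝ → ℂ := fun j t => e j t * φ.repr (ψ t) j with hx
  set x' : ℕ → ℝ → ℂ := fun j t => u t * (e j t * φ.repr (B (ψ t)) j) with hx'
  have hen : ∀ j t, ‖e j t‖ = 1 := fun j t => by
    rw [he]
    simp only
    rw [mul_assoc, mul_comm, ← Complex.ofReal_mul, Complex.norm_exp_ofReal_mul_I]
  have hec : ∀ j t, starRingEnd ℂ (e j t) = Complex.exp (-(Complex.I * lam j * t)) := fun j t => by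
    simp only [he, ← Complex.exp_conj, map_mul, Complex.conj_I, Complex.conj_ofReal, neg_mul]
  have hee : ∀ j t, starRingEnd ℂ (e j t) * e j t = 1 := fun j t => by
    rw [Complex.conj_mul', hen]; norm_num
  have hed : ∀ j t, HasDerivAt (e j) (Complex.I * lam j * e j t) t := by
    intro j t
    have h1 : HasDerivAt (fun τ : ℝ => Complex.I * lam j * (τ : ℂ)) (Complex.I * lam j) t := by
      simpa using (Complex.ofRealCLM.hasDerivAt (x := t)).const_mul (Complex.I * lam j)
    exact h1.cexp.congr_deriv (mul_comm _ _)
  have hψn : ∀ t, ‖ψ t‖ = 1 := fun t => by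
    simp only [hψ]
    rw [LinearIsometryEquiv.norm_map, norm_basis]
  have hψd : ∀ t ∈ Set.Icc 0 T, ψ t ∈ domAs φ lam (r / 2) := fun t ht =>
    hS.dom_r (hS.htraj T hT0 u huc.pwc _ hm t ht).1
  have hskew : ∀ j, ∀ t ∈ Set.Icc 0 T, φ.repr (B (ψ t)) j = -⟪B (φ j), ψ t⟫ := fun j t ht =>
    hS.B_skew j (hψd t ht)
  have hua : ∀ t, ‖(u t : ℂ)‖ ≤ h := fun t => by
    rw [Complex.norm_real, Real.norm_eq_abs]; exact stepCtrl_abs_le hh ω α t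
  have hinner : ∀ j t, ⟪B (φ j), ψ t⟫ = ∑ l ∈ Finset.range L, starRingEnd ℂ (bb l j) *
      (starRingEnd ℂ (e l t) * x l t) + ⟪B (φ j) - trunc φ L (B (φ j)), ψ t⟫ := by
    intro j t
    rw [inner_sub_left]
    have : ⟪trunc φ L (B (φ j)), ψ t⟫ = ∑ l ∈ Finset.range L, starRingEnd ℂ (bb l j) *
      (starRingEnd ℂ (e l t) * x l t) := by
      rw [trunc, sum_inner]
      refine Finset.sum_congr rfl fun l _ => ?_
      rw [inner_smul_left, inner_basis]
      simp only [hx]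
      rw [← mul_assoc (starRingEnd ℂ (e l t)), hee, one_mul]
    rw [this]
    ring
  have key := averaging J (Finset.range L) hh hT0.le w w' x x'
    (fun j l t => starRingEnd ℂ (bb l j * Γ l j t))
    (fun j l t => starRingEnd ℂ (bb l j * ((Real.cos (ω * t + α) : ℂ)
      * Complex.exp (Complex.I * (lam l - lam j : ℝ) * t) - mean ω α (lam l - lam j))))
    (fun j l => ‖bb l j‖ * K l j) (fun j => ‖B (φ j)‖) (E := ∑ j ∈ J, tl j
      + h * (ω * ∑ j ∈ J, ∑ l ∈ Finset.range L, ‖bb l j‖)) (b0 := κ)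
    ?_ ?_ ?_ ?_ ?_ ?_ ?_ ?_ ?_ ?_
  · set y := (Υ (fun _ => 0) T).symm (ψ T) with hy
    have hyr : ∀ j, φ.repr y j = x j T := by
      intro j
      have h1 := hS.repr_free hT0.le y j
      rw [hy, LinearIsometryEquiv.apply_symm_apply, ← hec] at h1
      simp only [hx]
      rw [h1, ← mul_assoc, mul_comm (e j T), hee, one_mul]
    have hyn : ‖y‖ = 1 := by rw [hy, LinearIsometryEquiv.norm_map, hψn]
    have hVT : V T = G (φ a) (φ b) (Real.cos (κ * θ)) (η * Real.sin (κ * θ)) (φ m) := by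
      simp only [hV]
      rw [show κ * h * T = κ * θ by rw [hT]; field_simp]
    have hwJ : ∀ j ∉ J, φ.repr (V T) j = 0 := by
      intro j hj
      simp only [hJ, Finset.mem_insert, Finset.mem_singleton, not_or] at hj
      simp only [hV]
      rw [repr_G_basis]
      simp [hj.1, hj.2.1, hj.2.2]
    have hVe : V T = ∑ j ∈ J, φ.repr (V T) j • φ j := by
      refine ext_repr φ fun j => ?_
      rw [repr_sum]
      simp only [repr_smul, repr_basis, mul_ite, mul_one, mul_zero, Finset.sum_ite_eq]
      split_ifs with hj
      · rfl
      · exact hwJ j hj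
    have hsum : ⟪V T, y⟫ = ∑ j ∈ J, w j T * x j T := by
      rw [hVe, sum_inner]
      refine Finset.sum_congr rfl fun j _ => ?_
      rw [inner_smul_left, inner_basis, hyr]
    have h0 : ∑ j ∈ J, w j 0 * x j 0 = 1 := by
      have h1 : ∀ j, w j 0 * x j 0 = if j = m then 1 else 0 := by
        intro j
        simp only [hw, hx, hV, hψ, he, hS.hzero, mul_zero, Complex.ofReal_zero, Real.cos_zero,
          Real.sin_zero, Complex.ofReal_one, G_one, LinearIsometryEquiv.coe_refl, id,
          Complex.exp_zero, repr_basis]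
        split_ifs <;> simp
      rw [Finset.sum_congr rfl fun j _ => h1 j, Finset.sum_ite_eq', if_pos (by simp [hJ])]
    rw [h0, ← hsum] at key
    have h2 : ‖y - V T‖ ^ 2 ≤ 2 * ‖⟪V T, y⟫ - 1‖ := by
      rw [norm_sub_rev, norm_sub_sq (𝕜 := ℂ), hG1, hyn]
      have h3 := Complex.abs_re_le_norm (⟪V T, y⟫ - 1)
      rw [Complex.sub_re, Complex.one_re, abs_le] at h3
      have : RCLike.re ⟪V T, y⟫ = (⟪V T, y⟫).re := rfl
      rw [this]
      linarith [h3.1]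
    rw [← hVT]
    refine h2.trans (mul_le_mul_of_nonneg_left (key.trans (le_of_eq ?_)) zero_le_two)
    rw [show h * T = θ by rw [hT]; field_simp]
    ring
  · intro j t
    refine (hasDerivAt_G_coord hab m j hη (κ * h) t).congr_deriv ?_
    simp only [hw', hw, hV, hβ, map_mul, Complex.conj_ofReal]
    push_cast
    congr 1 <;> · split_ifs <;> ring
  · intro j
    have h1 : ContinuousOn (fun t => φ.repr (ψ t) j) (Set.Icc 0 T) := by
      have h2 : Continuous fun v : H => φ.repr v j := by
        simp only [← inner_basis]
        exact continuous_const.inner continuous_id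
      exact h2.comp_continuousOn (hS.traj_cont huc hm)
    exact ContinuousOn.mul (fun t _ => (hed j t).continuousAt.continuousWithinAt) h1
  · intro j t ht
    have h1 := hS.traj_deriv huc hm ht (stepCtrl_rightCont hh ω α t) j
    refine ((hed j t).hasDerivWithinAt.mul h1).congr_deriv ?_
    simp only [hx', hψ]
    ring
  · intro j l t
    exact ((hΓ l j t).const_mul (bb l j)).star
  · intro j t
    simp only [hw, RCLike.norm_conj]
    exact (norm_repr_le φ _ _).trans (hG1 t).le
  · intro j t
    have hwb : ∀ j, ‖w j t‖ ≤ 1 := fun j => by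
      simp only [hw, RCLike.norm_conj]
      exact (norm_repr_le φ _ _).trans (hG1 t).le
    have hβn : ‖β‖ = κ := by
      rw [hβ, norm_mul, hη, mul_one, Complex.norm_real, Real.norm_eq_abs, abs_of_nonneg hκ]
    have hhn : ‖(h : ℂ)‖ = h := by rw [Complex.norm_real, Real.norm_eq_abs, abs_of_pos hh]
    have hhκ : 0 ≤ h * κ := mul_nonneg hh.le hκ
    simp only [hw']
    by_cases hja : j = a
    · have hjb : j ≠ b := fun h => hab (hja ▸ h)
      rw [if_pos hja, if_neg hjb, sub_zero, norm_mul, norm_mul, RCLike.norm_conj, hβn, hhn]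
      exact mul_le_of_le_one_right hhκ (hwb b)
    · by_cases hjb : j = b
      · rw [if_neg hja, if_pos hjb, zero_sub, norm_neg, norm_mul, norm_mul, hβn, hhn]
        exact mul_le_of_le_one_right hhκ (hwb a)
      · rw [if_neg hja, if_neg hjb, sub_zero, norm_zero]
        exact hhκ
  · intro j t _
    simp only [hx]
    rw [norm_mul, hen, one_mul]
    exact (norm_repr_le φ _ _).trans (hψn t).le
  · intro j t ht
    simp only [hx']
    rw [norm_mul, norm_mul, hen, one_mul, hskew j t ⟨ht.1, ht.2.le⟩, norm_neg]
    refine mul_le_mul (hua t) ?_ (norm_nonneg _) hh.le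
    exact (norm_inner_le_norm _ _).trans (by rw [hψn, mul_one])
  · intro j l t
    rw [RCLike.norm_conj, norm_mul]
    exact mul_le_mul_of_nonneg_left (hΓb l j t) (norm_nonneg _)
  · intro t ht
    have htc : t ∈ Set.Icc 0 T := ⟨ht.1, ht.2.le⟩
    have hxn : ∀ l, ‖x l t‖ ≤ 1 := fun l => by
      simp only [hx]
      rw [norm_mul, hen, one_mul]
      exact (norm_repr_le φ _ _).trans (hψn t).le
    have hwn : ∀ l, ‖w l t‖ ≤ 1 := fun l => by
      simp only [hw, RCLike.norm_conj]
      exact (norm_repr_le φ _ _).trans (hG1 t).le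
    have hee' : ∀ j l, Complex.exp (Complex.I * (lam l - lam j : ℝ) * t)
        = e l t * starRingEnd ℂ (e j t) := by
      intro j l
      rw [hec, he]
      simp only
      rw [← Complex.exp_add]
      congr 1
      push_cast
      ring
    -- the rotated vector solves the averaged equation, so the mean values cancel
    have hcanc : ∑ j ∈ J, (w' j t * x j t - h * (w j t * ∑ l ∈ Finset.range L,
        starRingEnd ℂ (avg φ lam B ω α l j) * x l t)) = 0 := by
      have h1 : ∀ j, ∑ l ∈ Finset.range L, starRingEnd ℂ (avg φ lam B ω α l j) * x l t
          = (if j = b then starRingEnd ℂ β * x a t else 0)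
            - if j = a then β * x b t else 0 := by
        intro j
        have h2 : ∀ l, starRingEnd ℂ (avg φ lam B ω α l j) * x l t
            = (if l = a then (if j = b then starRingEnd ℂ β * x a t else 0) else 0)
              - if l = b then (if j = a then β * x b t else 0) else 0 := by
          intro l
          rw [hres l j]
          by_cases hla : l = a
          · have hlb : l ≠ b := fun h => hab (hla ▸ h)
            by_cases hjb : j = b <;> simp [hla, hab, hjb]
          · by_cases hlb : l = b
            · by_cases hja : j = a <;> simp [hlb, hab.symm, hja]
            · simp [hla, hlb]
        rw [Finset.sum_congr rfl fun l _ => h2 l, Finset.sum_sub_distrib, Finset.sum_ite_eq',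
          Finset.sum_ite_eq', if_pos (Finset.mem_range.2 haL), if_pos (Finset.mem_range.2 hbL)]
      have h3 : ∀ j, w' j t * x j t - h * (w j t * ∑ l ∈ Finset.range L,
          starRingEnd ℂ (avg φ lam B ω α l j) * x l t)
          = (if j = a then h * (starRingEnd ℂ β * w b t * x a t + β * w a t * x b t) else 0)
            - if j = b then h * (starRingEnd ℂ β * w b t * x a t + β * w a t * x b t)
              else 0 := by
        intro j
        rw [h1 j]
        simp only [hw']
        by_cases hja : j = a
        · simp [hja, hab]
          ring
        · by_cases hjb : j = b
          · simp [hjb, hab.symm]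
            ring
          · simp [hja, hjb]
      have haJ : a ∈ J := by simp [hJ]
      have hbJ : b ∈ J := by simp [hJ]
      rw [Finset.sum_congr rfl fun j _ => h3 j, Finset.sum_sub_distrib, Finset.sum_ite_eq',
        Finset.sum_ite_eq', if_pos haJ, if_pos hbJ, sub_self]
    have hrem : ∑ j ∈ J, (w' j t * x j t + w j t * x' j t)
        + h * ∑ j ∈ J, ∑ l ∈ Finset.range L, w j t * starRingEnd ℂ (bb l j
          * ((Real.cos (ω * t + α) : ℂ) * Complex.exp (Complex.I * (lam l - lam j : ℝ) * t)
            - mean ω α (lam l - lam j))) * x l t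
        = ∑ j ∈ J, w j t * (∑ l ∈ Finset.range L, starRingEnd ℂ (bb l j) * (e j t
            * starRingEnd ℂ (e l t)) * x l t * (h * Real.cos (ω * t + α) - u t : ℝ)
          - u t * (e j t * ⟪B (φ j) - trunc φ L (B (φ j)), ψ t⟫)) := by
      rw [Finset.mul_sum, ← Finset.sum_add_distrib, ← sub_eq_zero, ← Finset.sum_sub_distrib,
        ← hcanc]
      refine Finset.sum_congr rfl fun j _ => ?_
      have h1 : (h : ℂ) * ∑ l ∈ Finset.range L, w j t * starRingEnd ℂ (bb l j
          * ((Real.cos (ω * t + α) : ℂ) * Complex.exp (Complex.I * (lam l - lam j : ℝ) * t)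
            - mean ω α (lam l - lam j))) * x l t
          = w j t * (∑ l ∈ Finset.range L, starRingEnd ℂ (bb l j) * (e j t
            * starRingEnd ℂ (e l t)) * x l t * (h * Real.cos (ω * t + α) - u t : ℝ))
          + w j t * (u t * (e j t * ∑ l ∈ Finset.range L, starRingEnd ℂ (bb l j)
            * (starRingEnd ℂ (e l t) * x l t)))
          - h * (w j t * ∑ l ∈ Finset.range L,
            starRingEnd ℂ (avg φ lam B ω α l j) * x l t) := by
        simp only [Finset.mul_sum]
        rw [← Finset.sum_add_distrib, ← Finset.sum_sub_distrib]
        refine Finset.sum_congr rfl fun l _ => ?_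
        rw [hee', avg]
        simp only [map_mul, map_sub, Complex.conj_conj, Complex.conj_ofReal, hbb]
        push_cast
        ring
      have h2 := hskew j t htc
      rw [hinner] at h2
      rw [h1]
      simp only [hx', h2]
      ring
    rw [hrem, mul_add]
    have hbound : ∀ j, ‖w j t * (∑ l ∈ Finset.range L, starRingEnd ℂ (bb l j) * (e j t
            * starRingEnd ℂ (e l t)) * x l t * (h * Real.cos (ω * t + α) - u t : ℝ)
          - u t * (e j t * ⟪B (φ j) - trunc φ L (B (φ j)), ψ t⟫))‖
        ≤ h * (h * (ω * ∑ l ∈ Finset.range L, ‖bb l j‖)) + h * tl j := by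
      intro j
      rw [norm_mul]
      refine (mul_le_of_le_one_left (norm_nonneg _) (hwn j)).trans ?_
      refine (norm_sub_le _ _).trans (add_le_add ?_ ?_)
      · rw [Finset.mul_sum, Finset.mul_sum, Finset.mul_sum]
        refine norm_sum_le_of_le _ fun l _ => ?_
        rw [norm_mul, norm_mul, norm_mul, norm_mul, RCLike.norm_conj, RCLike.norm_conj, hen, hen,
          mul_one, mul_one, Complex.norm_real, Real.norm_eq_abs]
        have h1 := stepCtrl_close hh hω α t
        calc ‖bb l j‖ * ‖x l t‖ * |h * Real.cos (ω * t + α) - u t|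
            ≤ ‖bb l j‖ * 1 * (h * (h * ω)) := by
              gcongr
              exact hxn l
          _ = _ := by ring
      · rw [norm_mul, norm_mul, hen, one_mul]
        refine mul_le_mul (hua t) ?_ (norm_nonneg _) hh.le
        exact (norm_inner_le_norm _ _).trans (by rw [hψn, mul_one])
    refine (norm_sum_le_of_le _ fun j _ => hbound j).trans (le_of_eq ?_)
    rw [Finset.sum_add_distrib]
    simp only [← Finset.mul_sum]
    ring

end Resonance

/-! ### Approximation of plane rotations -/

section ResonanceLimit

variable {H : Type*} [NormedAddCommGroup H] [InnerProductSpace ℂ H] [CompleteSpace H]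
  {φ : HilbertBasis ℕ ℂ H} {lam : ℕ → ℝ}
  {k c d r p : ℝ} {B : H → H} {Υ : (ℝ → ℝ) → ℝ → (H ≃ₗᵢ[ℂ] H)}

/-- `G` as a linear map. -/
def Glin (g h : H) (α β : ℂ) : H →ₗ[ℂ] H :=
  IsLinearMap.mk' (G g h α β) ⟨G_add g h α β, G_smul g h α β⟩

/-- In `Sys.rotation_bound`, the level `L` is chosen first, and then `h` tends to `0`. -/
lemma Sys.rotation_tendsto (hS : Sys φ lam k B c d r Υ) {a b : ℕ} (hab : a ≠ b) {ω α : ℝ}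
    (hω : 0 ≤ ω) {β η : ℂ} {κ : ℝ} (hκ : 0 ≤ κ) (hη : ‖η‖ = 1) (hβ : β = κ * η)
    (hres : Resonant φ lam B ω α a b β) (m : ℕ) {θ : ℝ} (hθ : 0 < θ) :
    Tendsto (fun h => G (φ a) (φ b) (Real.cos (κ * θ)) (η * Real.sin (κ * θ)) (φ m)
      - (Υ (fun _ => 0) (θ / h)).symm (Υ (stepCtrl h ω α) (θ / h) (φ m)))
      (nhdsWithin 0 (Set.Ioi 0)) (nhds 0) := by
  rw [Metric.tendsto_nhds]
  intro ε hε
  have h1 : Tendsto (fun L => 2 * (θ * ∑ j ∈ {a, b, m}, ‖B (φ j) - trunc φ L (B (φ j))‖))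
      atTop (nhds (2 * (θ * ∑ j ∈ ({a, b, m} : Finset ℕ), ‖B (φ j) - B (φ j)‖))) := by
    refine Tendsto.const_mul _ (Tendsto.const_mul _ (tendsto_finsetSum _ fun j _ => ?_))
    exact (tendsto_const_nhds.sub (tendsto_trunc_norm φ _)).norm
  simp only [sub_self, norm_zero, Finset.sum_const_zero, mul_zero] at h1
  obtain ⟨L, hL1, hL2⟩ := ((h1.eventually (gt_mem_nhds (show 0 < ε ^ 2 by positivity))).and
    (eventually_gt_atTop (max a b))).exists
  obtain ⟨C₁, C₂, hb⟩ := hS.rotation_bound hab hω hκ hη hβ hres m L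
    ((le_max_left _ _).trans_lt hL2) ((le_max_right _ _).trans_lt hL2)
  have h2 : Tendsto (fun h : ℝ => 2 * (θ * (∑ j ∈ {a, b, m}, ‖B (φ j) - trunc φ L (B (φ j))‖
      + h * C₁) + h * C₂)) (nhdsWithin 0 (Set.Ioi 0))
      (nhds (2 * (θ * (∑ j ∈ {a, b, m}, ‖B (φ j) - trunc φ L (B (φ j))‖
      + 0 * C₁) + 0 * C₂))) := by
    refine Tendsto.mono_left (Continuous.tendsto (by fun_prop) 0) nhdsWithin_le_nhds
  simp only [zero_mul, add_zero] at h2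
  filter_upwards [h2.eventually (gt_mem_nhds hL1), self_mem_nhdsWithin] with h h3 h4
  rw [dist_zero_right, norm_sub_rev]
  exact lt_of_pow_lt_pow_left₀ 2 hε.le ((hb h h4 θ hθ).trans_lt h3)

/-- On times of order `1/h`, slow resonant driving followed by the backward free evolution realises
the rotations of the plane spanned by the two resonant levels. -/
lemma Sys.app_rotation (hS : Sys φ lam k B c d r Υ) (hp : 0 ≤ p) (hpk : p < k / 2) {a b : ℕ}
    (hab : a ≠ b) {ω α : ℝ}
    (hω : 0 ≤ ω) {β η : ℂ} {κ : ℝ} (hκ : 0 < κ) (hη : ‖η‖ = 1) (hβ : β = κ * η)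
    (hres : Resonant φ lam B ω α a b β) {τ : ℝ} (hτ : 0 < τ) :
    App φ lam Υ p (G (φ a) (φ b) (Real.cos τ) (η * Real.sin τ)) := by
  set θ := τ / κ with hθ
  have hθ0 : 0 < θ := div_pos hτ hκ
  have hκθ : κ * θ = τ := by rw [hθ]; field_simp
  set W := G (φ a) (φ b) (Real.cos τ) (η * Real.sin τ) with hW
  set V : ℝ → H → H := fun h x =>
    (Υ (fun _ => 0) (θ / h)).symm (Υ (stepCtrl h ω α) (θ / h) x) with hV
  have hWd : ∀ q, ∀ x ∈ domAs φ lam q, W x ∈ domAs φ lam q := fun q x hx =>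
    dom_G φ hS.hpos (dom_basis φ _ a) (dom_basis φ _ b) _ _ hx
  have hsymm : ∀ {t : ℝ}, 0 ≤ t → ∀ x n,
      ‖φ.repr ((Υ (fun _ => 0) t).symm x) n‖ = ‖φ.repr x n‖ := by
    intro t ht x n
    have := hS.repr_free ht ((Υ (fun _ => 0) t).symm x) n
    rw [LinearIsometryEquiv.apply_symm_apply] at this
    rw [this, norm_mul, mul_assoc, ← mul_neg, mul_comm Complex.I, ← Complex.ofReal_mul,
      ← Complex.ofReal_neg, Complex.norm_exp_ofReal_mul_I, one_mul]
  have hexp : ∀ {h : ℝ}, 0 < h →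
      Real.exp (c * ∫ t in (0 : ℝ)..(θ / h), |stepCtrl h ω α t|) ≤ Real.exp (c * θ) := by
    intro h hh
    refine Real.exp_le_exp.2 (mul_le_mul_of_nonneg_left ?_ hS.hc)
    have h1 := intervalIntegral.norm_integral_le_of_norm_le_const (a := 0) (b := θ / h) (C := h)
      (f := fun t => |stepCtrl h ω α t|) fun t _ => by
        rw [Real.norm_eq_abs, abs_abs]; exact stepCtrl_abs_le hh ω α t
    rw [sub_zero, abs_of_pos (div_pos hθ0 hh), mul_div_cancel₀ _ hh.ne'] at h1
    exact (Real.le_norm_self _).trans h1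
  have hVp : ∀ {h : ℝ}, 0 < h → ∀ x ∈ domAs φ lam p, V h x ∈ domAs φ lam p ∧
      sNorm φ lam p (V h x) ≤ Real.exp (c * θ) * sNorm φ lam p x := by
    intro h hh x hx
    have hT := div_pos hθ0 hh
    have h1 := hS.prop_bound hp hpk hT (stepCtrl_ctrl hh ω α hT).pwc hx
    have h2 := sNorm_congr_repr φ (lam := lam) (p := p)
      (hsymm hT.le (Υ (stepCtrl h ω α) (θ / h) x))
    refine ⟨h2.1.2 h1.1, h2.2.trans_le (h1.2.trans ?_)⟩
    exact mul_le_mul_of_nonneg_right (hexp hh) (sNorm_nonneg φ p x)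
  -- on the basis, convergence in `H` is upgraded to the `p`-norm by the bound in the `k/2`-norm
  have hbasis : ∀ m, Tendsto (fun h => sNorm φ lam p (W (φ m) - V h (φ m)))
      (nhdsWithin 0 (Set.Ioi 0)) (nhds 0) := by
    intro m
    refine tendsto_sNorm_of_bounded φ hS.hpos hS.htop hpk _
      (sNorm φ lam (k / 2) (W (φ m)) + Real.exp (c * θ) * sNorm φ lam (k / 2) (φ m)) ?_ ?_
    · filter_upwards [self_mem_nhdsWithin] with h hh
      have hT := div_pos hθ0 hh
      have hm : φ m ∈ domAs φ lam (k / 2) := dom_basis φ _ m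
      have h1 := hS.htraj _ hT _ (stepCtrl_ctrl hh ω α hT).pwc _ hm _ ⟨hT.le, le_rfl⟩
      have h2 := sNorm_congr_repr φ (lam := lam) (p := k / 2)
        (hsymm hT.le (Υ (stepCtrl h ω α) (θ / h) (φ m)))
      have h3 : V h (φ m) ∈ domAs φ lam (k / 2) := h2.1.2 h1.1
      refine ⟨dom_sub φ hS.hpos (hWd _ _ hm) h3,
        (sNorm_sub_le φ hS.hpos (hWd _ _ hm) h3).trans (add_le_add le_rfl ?_)⟩
      refine h2.2.trans_le (h1.2.2.trans ?_)
      exact mul_le_mul_of_nonneg_right (hexp hh) (sNorm_nonneg φ _ _)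
    · have := hS.rotation_tendsto hab hω hκ.le hη hβ hres m hθ0
      rw [hκθ] at this
      exact this
  have hfin : ∀ N x, Tendsto (fun h => sNorm φ lam p (W (trunc φ N x) - V h (trunc φ N x)))
      (nhdsWithin 0 (Set.Ioi 0)) (nhds 0) := by
    intro N x
    have h1 : Tendsto (fun h => ∑ m ∈ Finset.range N,
        ‖φ.repr x m‖ * sNorm φ lam p (W (φ m) - V h (φ m))) (nhdsWithin 0 (Set.Ioi 0))
        (nhds (∑ m ∈ Finset.range N, ‖φ.repr x m‖ * 0)) :=
      tendsto_finsetSum _ fun m _ => (hbasis m).const_mul _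
    simp only [mul_zero, Finset.sum_const_zero] at h1
    refine squeeze_zero' (Eventually.of_forall fun _ => sNorm_nonneg φ _ _) ?_ h1
    filter_upwards [self_mem_nhdsWithin] with h hh
    have e1 : W (trunc φ N x) - V h (trunc φ N x)
        = ∑ m ∈ Finset.range N, φ.repr x m • (W (φ m) - V h (φ m)) := by
      have e2 : W (trunc φ N x) = ∑ m ∈ Finset.range N, φ.repr x m • W (φ m) := by
        have := map_sum (Glin (φ a) (φ b) (Real.cos τ) (η * Real.sin τ))
          (fun m => φ.repr x m • φ m) (Finset.range N)
        simp only [map_smul] at this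
        exact this
      have e3 : V h (trunc φ N x) = ∑ m ∈ Finset.range N, φ.repr x m • V h (φ m) := by
        simp only [hV, trunc, map_sum, map_smul]
      rw [e2, e3, ← Finset.sum_sub_distrib]
      simp only [smul_sub]
    have hd : ∀ m, W (φ m) - V h (φ m) ∈ domAs φ lam p := fun m =>
      dom_sub φ hS.hpos (hWd _ _ (dom_basis φ _ m)) (hVp hh _ (dom_basis φ _ m)).1
    rw [e1]
    refine (sNorm_sum_le φ hS.hpos _ _ fun m _ => dom_smul φ hS.hpos _ (hd m)).trans ?_
    simp only [sNorm_smul, le_refl]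
  refine hS.app_tendsto hp hpk (hWd p) V ?_ (l := nhdsWithin 0 (Set.Ioi 0)) fun x hx => ?_
  · filter_upwards [self_mem_nhdsWithin] with h hh
    have hT := div_pos hθ0 hh
    exact hS.app_comp hp hpk (hS.app_free_symm hp hpk hT)
      (hS.app_prop hp hpk hT (stepCtrl_ctrl hh ω α hT).pwc)
  · rw [Metric.tendsto_nhds]
    intro ε hε
    have h1 := ((tendsto_trunc φ p hx).const_mul (1 + Real.exp (c * θ)))
    rw [mul_zero] at h1
    obtain ⟨N, hN1, hN2⟩ := ((h1.eventually (gt_mem_nhds (show 0 < ε / 2 by positivity))).and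
      (eventually_gt_atTop (max a b))).exists
    filter_upwards [(hfin N x).eventually (gt_mem_nhds (show 0 < ε / 2 by positivity)),
      self_mem_nhdsWithin] with h h2 hh
    rw [dist_zero_right, Real.norm_eq_abs, abs_of_nonneg (sNorm_nonneg φ _ _)]
    set z := x - trunc φ N x with hz
    have hzd : z ∈ domAs φ lam p := dom_sub φ hS.hpos hx (dom_trunc φ _ _ _)
    -- the rotation does not see the high modes
    have hWz : W z = z := by
      have e : ∀ n < N, ⟪φ n, z⟫ = 0 := fun n hn => by
        rw [inner_basis, hz, repr_sub, repr_trunc, if_pos hn, sub_self]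
      rw [hW, G, e a ((le_max_left _ _).trans_lt hN2), e b ((le_max_right _ _).trans_lt hN2)]
      simp
    have e1 : W x - V h x = (W (trunc φ N x) - V h (trunc φ N x)) + (z - V h z) := by
      have e2 : W x = W (trunc φ N x) + W z := by
        rw [hW, ← G_add, hz, add_sub_cancel]
      have e3 : V h x = V h (trunc φ N x) + V h z := by
        simp only [hV, ← map_add, hz, add_sub_cancel]
      rw [e2, e3, hWz]
      abel
    have hd1 : W (trunc φ N x) - V h (trunc φ N x) ∈ domAs φ lam p :=
      dom_sub φ hS.hpos (hWd _ _ (dom_trunc φ _ _ _)) (hVp hh _ (dom_trunc φ _ _ _)).1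
    have hd2 := hVp hh z hzd
    have h3 := sNorm_add_le φ hS.hpos hd1 (dom_sub φ hS.hpos hzd hd2.1)
    have h4 := sNorm_sub_le φ hS.hpos hzd hd2.1
    rw [e1]
    linarith [hd2.2]

end ResonanceLimit

/-! ### Isolated transitions -/

section Edges

variable {H : Type*} [NormedAddCommGroup H] [InnerProductSpace ℂ H] [CompleteSpace H]
  {φ : HilbertBasis ℕ ℂ H} {lam : ℕ → ℝ}
  {k c d r p : ℝ} {B : H → H} {Υ : (ℝ → ℝ) → ℝ → (H ≃ₗᵢ[ℂ] H)}

/-- The pair `a ≠ b` is coupled by `B`, and no other coupled pair has the same spectral gap. -/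
structure Edge (φ : HilbertBasis ℕ ℂ H) (lam : ℕ → ℝ) (B : H → H) (a b : ℕ) : Prop where
  ne : a ≠ b
  coupled : φ.repr (B (φ b)) a ≠ 0
  isolated : ∀ l j, ¬(l = a ∧ j = b) → ¬(l = b ∧ j = a) → φ.repr (B (φ j)) l ≠ 0 →
    |lam l - lam j| ≠ |lam a - lam b|

/-- Driving at the frequency of an isolated transition, all other time averages vanish. -/
lemma Edge.resonant (hS : Sys φ lam k B c d r Υ) {a b : ℕ} (h : Edge φ lam B a b) (α : ℝ) :
    Resonant φ lam B |lam a - lam b| α a b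
      (φ.repr (B (φ b)) a * mean |lam a - lam b| α (lam a - lam b)) := by
  intro l j
  split_ifs with h1 h2
  · rw [avg, h1.1, h1.2]
  · rw [avg, h2.1, h2.2, hS.B_skew_basis, map_mul, ← mean_neg, neg_sub]
    ring
  · rw [avg]
    by_contra h3
    exact h.isolated l j h1 h2 (left_ne_zero_of_mul h3)
      (mean_ne_zero_abs (abs_nonneg _) (right_ne_zero_of_mul h3))

lemma exists_exp_eq {z : ℂ} (hz : ‖z‖ = 1) : ∃ α : ℝ, Complex.exp (Complex.I * α) = z := by
  refine ⟨z.arg, ?_⟩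
  have := Complex.norm_mul_exp_arg_mul_I z
  rwa [hz, Complex.ofReal_one, one_mul, mul_comm] at this

/-- The transformations of the plane of `g, h` with determinant one are all approximable. -/
def Full (φ : HilbertBasis ℕ ℂ H) (lam : ℕ → ℝ) (Υ : (ℝ → ℝ) → ℝ → (H ≃ₗᵢ[ℂ] H)) (p : ℝ)
    (g h : H) : Prop :=
  ∀ α β : ℂ, ‖α‖ ^ 2 + ‖β‖ ^ 2 = 1 → App φ lam Υ p (G g h α β)

/-- Some exchange of the lines of `g` and `h`, and its inverse, are approximable. -/
def Weak (φ : HilbertBasis ℕ ℂ H) (lam : ℕ → ℝ) (Υ : (ℝ → ℝ) → ℝ → (H ≃ₗᵢ[ℂ] H)) (p : ℝ)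
    (g h : H) : Prop :=
  ∃ η : ℂ, ‖η‖ = 1 ∧ App φ lam Υ p (G g h 0 η) ∧ App φ lam Υ p (G g h 0 (-η))

lemma Full.weak {g h : H} (hf : Full φ lam Υ p g h) : Weak φ lam Υ p g h :=
  ⟨1, by simp, hf _ _ (by simp), hf _ _ (by simp)⟩

lemma Sys.app_G_comp (hS : Sys φ lam k B c d r Υ) (hp : 0 ≤ p) (hpk : p < k / 2) {g h : H}
    (hg : ‖g‖ = 1) (hh : ‖h‖ = 1) (hgh : ⟪g, h⟫ = 0) {α β α' β' : ℂ}
    (h₁ : App φ lam Υ p (G g h α β)) (h₂ : App φ lam Υ p (G g h α' β')) :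
    App φ lam Υ p (G g h (α * α' - β * starRingEnd ℂ β') (α * β' + β * starRingEnd ℂ α')) := by
  have := hS.app_comp hp hpk h₁ h₂
  simpa only [G_comp hg hh hgh] using this

/-- For a non-zero gap, the phase of the control gives access to all phases of the rotation. -/
lemma Edge.app_of_ne (hS : Sys φ lam k B c d r Υ) (hp : 0 ≤ p) (hpk : p < k / 2) {a b : ℕ}
    (h : Edge φ lam B a b) (hne : lam a ≠ lam b) {η : ℂ} (hη : ‖η‖ = 1) {τ : ℝ} (hτ : 0 < τ) :
    App φ lam Υ p (G (φ a) (φ b) (Real.cos τ) (η * Real.sin τ)) := by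
  set z := φ.repr (B (φ b)) a with hz
  have hz0 : 0 < ‖z‖ := norm_pos_iff.2 h.coupled
  have hω : 0 < |lam a - lam b| := abs_pos.2 (sub_ne_zero.2 hne)
  have hu : ‖(‖z‖ : ℂ) * η / z‖ = 1 := by
    rw [norm_div, norm_mul, hη, Complex.norm_real, norm_norm, mul_one, div_self hz0.ne']
  obtain ⟨α, hα⟩ : ∃ α : ℝ, z * mean |lam a - lam b| α (lam a - lam b)
      = ((‖z‖ / 2 : ℝ) : ℂ) * η := by
    obtain ⟨α, hα⟩ := exists_exp_eq hu
    rcases lt_or_gt_of_ne (sub_ne_zero.2 hne) with hlt | hgt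
    · refine ⟨α, ?_⟩
      rw [abs_of_neg hlt, mean, if_pos (by ring), if_neg (by linarith), hα]
      have hzz : z ≠ 0 := h.coupled
      push_cast
      field_simp
      ring
    · refine ⟨-α, ?_⟩
      rw [abs_of_pos hgt, mean, if_neg (by linarith), if_pos (by ring)]
      push_cast
      rw [mul_neg, neg_neg, hα]
      have hzz : z ≠ 0 := h.coupled
      field_simp
      ring
  exact hS.app_rotation hp hpk h.ne hω.le (half_pos hz0) hη hα (h.resonant hS α) hτ

/-- Products of quarter turns of various phases are diagonal; together with a rotation, they give
every transformation of determinant one. -/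
lemma Edge.full (hS : Sys φ lam k B c d r Υ) (hp : 0 ≤ p) (hpk : p < k / 2) {a b : ℕ}
    (h : Edge φ lam B a b) (hne : lam a ≠ lam b) : Full φ lam Υ p (φ a) (φ b) := by
  have hg := norm_basis φ a
  have hh := norm_basis φ b
  have hgh : ⟪φ a, φ b⟫ = 0 := by simp [inner_basis_basis, h.ne]
  have h1 : ∀ η : ℂ, ‖η‖ = 1 → App φ lam Υ p (G (φ a) (φ b) 0 η) := by
    intro η hη
    have := h.app_of_ne hS hp hpk hne hη (show 0 < Real.pi / 2 by positivity)
    simpa using this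
  have h2 : ∀ ζ : ℂ, ‖ζ‖ = 1 → App φ lam Υ p (G (φ a) (φ b) ζ 0) := by
    intro ζ hζ
    have := hS.app_G_comp hp hpk hg hh hgh (h1 (-ζ) (by rwa [norm_neg])) (h1 1 (by simp))
    simpa using this
  intro α β hαβ
  have hα1 : ‖α‖ ≤ 1 := by nlinarith [sq_nonneg ‖β‖, norm_nonneg α]
  obtain ⟨ζ, hζ, hζα⟩ : ∃ ζ : ℂ, ‖ζ‖ = 1 ∧ ζ * ‖α‖ = α := by
    by_cases h0 : α = 0
    · exact ⟨1, by simp, by simp [h0]⟩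
    · have : (‖α‖ : ℂ) ≠ 0 := by exact_mod_cast norm_ne_zero_iff.2 h0
      exact ⟨α / ‖α‖, by simp [h0], by field_simp⟩
  obtain ⟨η, hη, hηβ⟩ : ∃ η : ℂ, ‖η‖ = 1 ∧ ζ * (η * ‖β‖) = β := by
    have hζ0 : ζ ≠ 0 := fun h => by simp [h] at hζ
    by_cases h0 : β = 0
    · exact ⟨1, by simp, by simp [h0]⟩
    · have : (‖β‖ : ℂ) ≠ 0 := by exact_mod_cast norm_ne_zero_iff.2 h0
      exact ⟨β / ‖β‖ / ζ, by simp [h0, hζ], by field_simp⟩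
  have h3 := h.app_of_ne hS hp hpk hne hη
    -- the full turn makes the angle positive when `‖α‖ = 1`
    (show 0 < Real.arccos ‖α‖ + 2 * Real.pi by
      have := Real.arccos_nonneg ‖α‖
      positivity)
  rw [Real.cos_add_two_pi, Real.sin_add_two_pi, Real.cos_arccos (by linarith [norm_nonneg α]) hα1,
    Real.sin_arccos, show 1 - ‖α‖ ^ 2 = ‖β‖ ^ 2 by linarith, Real.sqrt_sq (norm_nonneg _)] at h3
  have h4 := hS.app_G_comp hp hpk hg hh hgh (h2 ζ hζ) h3
  simpa only [zero_mul, sub_zero, add_zero, hζα, hηβ] using h4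

/-- With a zero gap the phase of the rotation cannot be varied freely, but its sign can. -/
lemma Edge.weak (hS : Sys φ lam k B c d r Υ) (hp : 0 ≤ p) (hpk : p < k / 2) {a b : ℕ}
    (h : Edge φ lam B a b) : Weak φ lam Υ p (φ a) (φ b) := by
  by_cases hne : lam a = lam b
  · -- a degenerate pair is rotated by constant controls, of either sign
    set z := φ.repr (B (φ b)) a with hz
    have hz0 : 0 < ‖z‖ := norm_pos_iff.2 h.coupled
    have hzc : (‖z‖ : ℂ) ≠ 0 := by exact_mod_cast hz0.ne'
    have hzz : (‖z‖ : ℂ) * (z / ‖z‖) = z := mul_div_cancel₀ _ hzc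
    have hη : ‖z / ‖z‖‖ = 1 := by
      rw [norm_div, Complex.norm_real, norm_norm, div_self hz0.ne']
    have e1 : |lam a - lam b| = 0 := by simp [hne]
    have e2 : lam a - lam b = 0 := by simp [hne]
    have h1 := hS.app_rotation hp hpk h.ne (abs_nonneg _) hz0 hη
      (by rw [hzz, e1, e2, mean]; simp [hz]) (h.resonant hS 0)
      (show 0 < Real.pi / 2 by positivity)
    have h2 := hS.app_rotation hp hpk h.ne (abs_nonneg _) hz0
      (η := -(z / ‖z‖)) (by rwa [norm_neg])
      (by rw [mul_neg, hzz, e1, e2, mean, mul_comm Complex.I, Complex.exp_neg,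
            Complex.exp_pi_mul_I]
          norm_num [hz]) (h.resonant hS Real.pi)
      (show 0 < Real.pi / 2 by positivity)
    exact ⟨z / ‖z‖, hη, by simpa using h1, by simpa using h2⟩
  · exact (h.full hS hp hpk hne).weak

end Edges

/-! ### Control of planes -/

section Planes

variable {H : Type*} [NormedAddCommGroup H] [InnerProductSpace ℂ H] [CompleteSpace H]
  {φ : HilbertBasis ℕ ℂ H} {lam : ℕ → ℝ}
  {k c d r p : ℝ} {B : H → H} {Υ : (ℝ → ℝ) → ℝ → (H ≃ₗᵢ[ℂ] H)}

lemma G_swap (g h : H) (α β : ℂ) :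
    G h g α β = G g h (starRingEnd ℂ α) (-(starRingEnd ℂ β)) := by
  funext ψ
  simp only [G, map_neg, Complex.conj_conj]
  module

lemma Full.symm {g h : H} (hf : Full φ lam Υ p g h) : Full φ lam Υ p h g := by
  intro α β hαβ
  rw [G_swap]
  exact hf _ _ (by simpa using hαβ)

lemma Weak.symm {g h : H} (hf : Weak φ lam Υ p g h) : Weak φ lam Υ p h g := by
  obtain ⟨η, hη, h1, h2⟩ := hf
  refine ⟨starRingEnd ℂ η, by simpa using hη, ?_, ?_⟩
  · rw [G_swap]; simpa using h2
  · rw [G_swap]; simpa using h1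

lemma Full.phase {g h : H} (hf : Full φ lam Υ p g h) {z w : ℂ} (hz : ‖z‖ = 1) (hw : ‖w‖ = 1) :
    Full φ lam Υ p (z • g) (w • h) := by
  intro α β hαβ
  have hzz : starRingEnd ℂ z * z = 1 := by rw [Complex.conj_mul', hz]; norm_num
  have hww : starRingEnd ℂ w * w = 1 := by rw [Complex.conj_mul', hw]; norm_num
  have := hf α (β * starRingEnd ℂ w * z) (by
    rw [norm_mul, norm_mul, hz, RCLike.norm_conj, hw]; simpa using hαβ)
  convert this using 1
  funext ψ
  simp only [G, inner_smul_left, map_mul, Complex.conj_conj, smul_smul]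
  congr 1
  · congr 2
    linear_combination (α - 1) * ⟪g, ψ⟫ * hzz
  · congr 1
    linear_combination (starRingEnd ℂ α - 1) * ⟪h, ψ⟫ * hww

/-- Conjugation by an approximable plane transformation with approximable inverse. -/
lemma Full.conj (hS : Sys φ lam k B c d r Υ) (hp : 0 ≤ p) (hpk : p < k / 2) {x y g h : H}
    (hf : Full φ lam Υ p x y) (hg : ‖g‖ = 1) (hh : ‖h‖ = 1) (hgh : ⟪g, h⟫ = 0) {α β : ℂ}
    (hαβ : ‖α‖ ^ 2 + ‖β‖ ^ 2 = 1) (h₁ : App φ lam Υ p (G g h α β))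
    (h₂ : App φ lam Υ p (G g h (starRingEnd ℂ α) (-β))) :
    Full φ lam Υ p (G g h α β x) (G g h α β y) := by
  intro γ δ hγδ
  have := hS.app_comp hp hpk h₁ (hS.app_comp hp hpk (hf γ δ hγδ) h₂)
  convert this using 1
  funext ψ
  have hinv : G g h α β (G g h (starRingEnd ℂ α) (-β) ψ) = ψ := by
    rw [G_comp hg hh hgh]
    have e1 : α * starRingEnd ℂ α - β * starRingEnd ℂ (-β) = 1 := by
      rw [map_neg, mul_neg, sub_neg_eq_add, Complex.mul_conj', Complex.mul_conj']
      exact_mod_cast hαβ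
    have e2 : α * -β + β * starRingEnd ℂ (starRingEnd ℂ α) = 0 := by
      rw [Complex.conj_conj]; ring
    rw [e1, e2, G_one]
  rw [G.eq_1 x y, G_add, G_add, G_smul, G_smul, hinv, ← inner_G_adjoint, ← inner_G_adjoint]
  rfl

lemma G_self {g h : H} (hg : ‖g‖ = 1) (hgh : ⟪g, h⟫ = 0) (α β : ℂ) :
    G g h α β g = α • g - starRingEnd ℂ β • h := by
  have hhg : ⟪h, g⟫ = 0 := inner_eq_zero_symm.1 hgh
  have hgg : ⟪g, g⟫ = 1 := by rw [inner_self_eq_norm_sq_to_K, hg]; norm_num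
  rw [G, hhg, hgg]
  module

lemma G_orthogonal {g h x : H} (hg : ⟪g, x⟫ = 0) (hh : ⟪h, x⟫ = 0) (α β : ℂ) :
    G g h α β x = x := by
  simp [G, hg, hh]

/-- Exchanging `y` and `z` turns the plane of `x, y` into the plane of `x, z`. -/
lemma Full.trans_weak (hS : Sys φ lam k B c d r Υ) (hp : 0 ≤ p) (hpk : p < k / 2) {x y z : ℕ}
    (hxy : x ≠ y) (hxz : x ≠ z) (hyz : y ≠ z) (hf : Full φ lam Υ p (φ x) (φ y))
    (hw : Weak φ lam Υ p (φ y) (φ z)) : Full φ lam Υ p (φ x) (φ z) := by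
  obtain ⟨η, hη, h1, h2⟩ := hw
  have hη' : starRingEnd ℂ η * η = 1 := by rw [Complex.conj_mul', hη]; norm_num
  have hgh : ⟪φ y, φ z⟫ = 0 := by simp [inner_basis_basis, hyz]
  have := hf.conj hS hp hpk (norm_basis φ y) (norm_basis φ z) hgh
    (α := 0) (β := η) (by simp [hη]) h1 (by simpa using h2)
  rw [G_self (norm_basis φ y) hgh, G_orthogonal (by simp [inner_basis_basis, hxy.symm])
    (by simp [inner_basis_basis, hxz.symm])] at this
  have h3 := this.phase (z := 1) (w := -η) (by simp) (by simpa using hη)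
  rwa [one_smul, zero_smul, zero_sub, smul_neg, neg_smul, neg_neg, smul_smul, mul_comm, hη',
    one_smul] at h3

lemma NonDegenerate.edge {S : Set (ℕ × ℕ)} (hS : NonDegenerate φ lam B S) {a b : ℕ}
    (hab : (a, b) ∈ S) (hne : a ≠ b) (h : ⟪φ a, B (φ b)⟫ ≠ 0) : Edge φ lam B a b := by
  refine ⟨hne, by rwa [← inner_basis], fun l j h1 h2 h3 => ?_⟩
  rw [← inner_basis] at h3
  rw [abs_sub_comm (lam l)]
  refine (hS (a, b) hab (j, l) ?_ ?_ h3).symm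
  · rintro heq
    simp only [Prod.mk.injEq] at heq
    exact h2 ⟨heq.2, heq.1⟩
  · rintro heq
    simp only [Prod.mk.injEq] at heq
    exact h1 ⟨heq.2, heq.1⟩

/-- Dropping the diagonal steps, a coupling chain is a path of isolated transitions. -/
lemma Couples.path {S : Set (ℕ × ℕ)} (hS : NonDegenerate φ lam B S) {j l : ℕ}
    (h : Couples φ B S j l) : Relation.ReflTransGen (Edge φ lam B) j l := by
  obtain ⟨q, σ, hσS, h0, hl, hstep, hB⟩ := h
  have hone : ∀ m, Relation.ReflTransGen (Edge φ lam B) (σ m).1 (σ m).2 := by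
    intro m
    by_cases hne : (σ m).1 = (σ m).2
    · rw [hne]
    · exact Relation.ReflTransGen.single (hS.edge (hσS m) hne (hB m))
  have : ∀ m, Relation.ReflTransGen (Edge φ lam B) j (σ m).2 := by
    intro m
    induction m using Fin.induction with
    | zero => rw [← h0]; exact hone 0
    | succ i ih => exact (hstep i ▸ ih).trans (hone _)
  rw [← hl]
  exact this _

/-- Some isolated transition has a non-zero gap, the spectrum being unbounded. -/
lemma exists_edge (hS : Sys φ lam k B c d r Υ)
    (hpath : ∀ j l, Relation.ReflTransGen (Edge φ lam B) j l) :
    ∃ a b, Edge φ lam B a b ∧ lam a ≠ lam b := by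
  by_contra! hcon
  have hconst : ∀ l, lam l = lam 0 := by
    intro l
    induction hpath 0 l with
    | refl => rfl
    | tail _ h ih => rw [← hcon _ _ h, ih]
  obtain ⟨l, hl⟩ := (hS.htop.eventually_gt_atTop (lam 0)).exists
  exact absurd (hconst l) hl.ne'

/-- All coordinate planes are controlled. The path from `b` may cross `a`; the case `y = a` of the
invariant then remembers the level visited just before. -/
lemma full_basis (hS : Sys φ lam k B c d r Υ) (hp : 0 ≤ p) (hpk : p < k / 2)
    (hpath : ∀ j l, Relation.ReflTransGen (Edge φ lam B) j l) {x y : ℕ} (hxy : x ≠ y) :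
    Full φ lam Υ p (φ x) (φ y) := by
  obtain ⟨a, b, hab, hne⟩ := exists_edge hS hpath
  have key : ∀ y, (y ≠ a → Full φ lam Υ p (φ a) (φ y)) ∧
      (y = a → ∃ z, z ≠ a ∧ Full φ lam Υ p (φ a) (φ z) ∧ Weak φ lam Υ p (φ z) (φ a)) := by
    intro y
    induction hpath b y with
    | refl => exact ⟨fun _ => hab.full hS hp hpk hne, fun h => absurd h.symm hab.ne⟩
    | @tail u v _ huv ih =>
      have hw := huv.weak hS hp hpk
      by_cases hu : u = a
      · subst hu
        obtain ⟨z, hz, hf, hwz⟩ := ih.2 rfl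
        refine ⟨fun hv => ?_, fun hv => absurd hv.symm huv.ne⟩
        by_cases hvz : v = z
        · rwa [hvz]
        · have h1 := hf.symm.trans_weak hS hp hpk hz (Ne.symm hvz) huv.ne hw
          exact (h1.symm.trans_weak hS hp hpk hvz hv hz hwz).symm
      · refine ⟨fun hv => (ih.1 hu).trans_weak hS hp hpk (Ne.symm hu) (Ne.symm hv) huv.ne hw,
          fun hv => ⟨u, hu, ih.1 hu, hv ▸ hw⟩⟩
  by_cases hx : x = a
  · subst hx
    exact (key y).1 hxy.symm
  · by_cases hy : y = a
    · subst hy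
      exact ((key x).1 hx).symm
    · exact (((key y).1 hy).symm.trans_weak hS hp hpk hy hxy.symm (Ne.symm hx)
        ((key x).1 hx).weak).symm

/-- A unit vector supported on the first `N` levels may replace `φ x` in a controlled plane. -/
lemma full_span (hS : Sys φ lam k B c d r Υ) (hp : 0 ≤ p) (hpk : p < k / 2)
    (hfull : ∀ x y, x ≠ y → Full φ lam Υ p (φ x) (φ y)) (N : ℕ) :
    ∀ g : H, ‖g‖ = 1 → (∀ n, N ≤ n → φ.repr g n = 0) → ∀ M, N ≤ M →
      Full φ lam Υ p g (φ M) := by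
  induction N with
  | zero =>
    intro g hg h0
    have : g = 0 := ext_repr φ fun n => by simp [h0 n]
    simp [this] at hg
  | succ N ih =>
    intro g hg h0 M hM
    set β := φ.repr g N with hβ
    have hsum : g = trunc φ N g + β • φ N := by
      refine ext_repr φ fun n => ?_
      rw [repr_add, repr_trunc, repr_smul, repr_basis]
      rcases lt_trichotomy n N with h | h | h
      · simp [h, h.ne]
      · simp [h, hβ]
      · simp [h.ne', not_lt.2 h.le, h0 n h]
    have horth : ⟪trunc φ N g, φ N⟫ = 0 := by
      simp [inner_basis', repr_trunc]
    have hnorm : ‖trunc φ N g‖ ^ 2 + ‖β‖ ^ 2 = 1 := by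
      have h1 := norm_add_sq_eq_norm_sq_add_norm_sq_of_inner_eq_zero (𝕜 := ℂ)
        (trunc φ N g) (β • φ N) (by rw [inner_smul_right, horth, mul_zero])
      rw [← hsum, hg, norm_smul, norm_basis] at h1
      nlinarith
    have hNM : N ≠ M := by omega
    by_cases ht : trunc φ N g = 0
    · have hβ1 : ‖β‖ = 1 := by
        rw [ht, norm_zero] at hnorm
        nlinarith [norm_nonneg β]
      have := (hfull N M hNM).phase hβ1 (norm_one (α := ℂ))
      rwa [one_smul, ← zero_add (β • φ N), ← ht, ← hsum] at this
    · set α := ‖trunc φ N g‖ with hα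
      have hα0 : α ≠ 0 := norm_ne_zero_iff.2 ht
      have hαc : (α : ℂ) ≠ 0 := by exact_mod_cast hα0
      set g₀ := (α : ℂ)⁻¹ • trunc φ N g with hg₀
      have hg₀n : ‖g₀‖ = 1 := by
        rw [hg₀, norm_smul, norm_inv, Complex.norm_real, Real.norm_eq_abs,
          abs_of_nonneg (norm_nonneg _), inv_mul_cancel₀ hα0]
      have hg₀r : ∀ n, N ≤ n → φ.repr g₀ n = 0 := by
        intro n hn
        rw [hg₀, repr_smul, repr_trunc, if_neg (not_lt.2 hn), mul_zero]
      have hg₀N : ⟪g₀, φ N⟫ = 0 := by simp [inner_basis', hg₀r]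
      have hF := ih g₀ hg₀n hg₀r
      have hαβ : ‖(α : ℂ)‖ ^ 2 + ‖-(starRingEnd ℂ β)‖ ^ 2 = 1 := by
        rw [norm_neg, RCLike.norm_conj, Complex.norm_real, norm_norm]
        exact hnorm
      have := (hF M (by omega)).conj hS hp hpk hg₀n (norm_basis φ N) hg₀N hαβ
        (hF N le_rfl _ _ hαβ) (hF N le_rfl _ _ (by simpa using hαβ))
      rw [G_self hg₀n hg₀N, G_orthogonal (by simp [inner_basis', hg₀r M (by omega)])
        (by simp [inner_basis_basis, hNM])] at this
      rwa [map_neg, Complex.conj_conj, neg_smul, sub_neg_eq_add, hg₀, smul_smul,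
        mul_inv_cancel₀ hαc, one_smul, ← hsum] at this

end Planes

/-! ### Complex reflections -/

section Reflections

variable {H : Type*} [NormedAddCommGroup H] [InnerProductSpace ℂ H] [CompleteSpace H]
  {φ : HilbertBasis ℕ ℂ H} {lam : ℕ → ℝ}
  {k c d r p : ℝ} {B : H → H} {Υ : (ℝ → ℝ) → ℝ → (H ≃ₗᵢ[ℂ] H)}

/-- The complex reflection with factor `ζ` along the unit vector `g`. -/
def cplxRefl (g : H) (ζ : ℂ) (ψ : H) : H := ψ + ((ζ - 1) * ⟪g, ψ⟫) • g

/-- Complex reflections along vectors of `D(|A|^p)` are approximable: they are limits of the plane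
transformations `diag (ζ, conj ζ)` in the plane of `φ N` and of the truncation of `g` to the first
`N` levels, because the second coordinate leaves every vector of `D(|A|^p)` as `N` grows. -/
lemma app_refl (hS : Sys φ lam k B c d r Υ) (hp : 0 ≤ p) (hpk : p < k / 2)
    (hfull : ∀ x y, x ≠ y → Full φ lam Υ p (φ x) (φ y)) {g : H} (hg : ‖g‖ = 1)
    (hgd : g ∈ domAs φ lam p) {ζ : ℂ} (hζ : ‖ζ‖ = 1) : App φ lam Υ p (cplxRefl g ζ) := by
  set t : ℕ → H := fun N => trunc φ N g with ht
  have htend : Tendsto t atTop (nhds g) := tendsto_trunc_norm φ g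
  have hn : Tendsto (fun N => ‖t N‖) atTop (nhds 1) := hg ▸ htend.norm
  refine hS.app_tendsto hp hpk (l := atTop)
    (fun x hx => dom_add φ hS.hpos hx (dom_smul φ hS.hpos _ hgd))
    (fun N => G ((‖t N‖ : ℂ)⁻¹ • t N) (φ N) ζ 0) ?_ ?_
  · filter_upwards [hn.eventually (lt_mem_nhds one_half_lt_one)] with N hN
    have h0 : ‖t N‖ ≠ 0 := by linarith
    refine full_span hS hp hpk hfull N _ ?_ ?_ N le_rfl _ _ (by simp [hζ])
    · rw [norm_smul, norm_inv, Complex.norm_real, norm_norm, inv_mul_cancel₀ h0]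
    · intro n hn
      rw [repr_smul, ht, repr_trunc, if_neg (not_lt.2 hn), mul_zero]
  · intro x hx
    set a : ℕ → ℂ := fun N => (‖t N‖ : ℂ)⁻¹ * ((‖t N‖ : ℂ)⁻¹ * ⟪t N, x⟫) with ha
    have hat : Tendsto (fun N => ‖⟪g, x⟫ - a N‖) atTop (nhds 0) := by
      have h1 : Tendsto (fun N => ((‖t N‖ : ℝ) : ℂ)⁻¹) atTop (nhds 1) := by
        have := ((Complex.continuous_ofReal.tendsto 1).comp hn).inv₀ (by simp)
        simpa [Function.comp_def] using this
      have h2 := h1.mul (h1.mul (htend.inner (tendsto_const_nhds (x := x)) (𝕜 := ℂ)))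
      have h3 := ((tendsto_const_nhds (x := ⟪g, x⟫)).sub h2).norm
      simpa using h3
    have hab : Tendsto (fun N => ‖a N‖) atTop (nhds ‖⟪g, x⟫‖) := by
      have : Tendsto a atTop (nhds ⟪g, x⟫) := by
        rw [tendsto_iff_norm_sub_tendsto_zero]
        exact hat.congr fun N => norm_sub_rev _ _
      exact this.norm
    have hgt := tendsto_trunc φ p hgd
    have hxt := tendsto_trunc φ p hx
    have hxt' := hxt.comp (tendsto_add_atTop_nat 1)
    have hlim := (((hab.mul hgt).add (hat.mul_const (sNorm φ lam p g))).const_mul ‖ζ - 1‖).add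
      ((hxt.add hxt').const_mul ‖starRingEnd ℂ ζ - 1‖)
    refine squeeze_zero (fun _ => sNorm_nonneg φ p _) (fun N => ?_) (by simpa using hlim)
    have e : cplxRefl g ζ x - G ((‖t N‖ : ℂ)⁻¹ • t N) (φ N) ζ 0 x =
        (ζ - 1) • (a N • (g - t N) + (⟪g, x⟫ - a N) • g)
          - (starRingEnd ℂ ζ - 1) • ((x - trunc φ N x) - (x - trunc φ (N + 1) x)) := by
      have e1 : (x - trunc φ N x) - (x - trunc φ (N + 1) x) = ⟪φ N, x⟫ • φ N := by
        rw [trunc, trunc, Finset.sum_range_succ, inner_basis]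
        module
      rw [e1, cplxRefl, G, ha]
      simp only [inner_smul_left, map_inv₀, Complex.conj_ofReal, map_zero, smul_smul]
      module
    have d1 := dom_sub φ hS.hpos hgd (dom_trunc φ p N g)
    have d2 := dom_sub φ hS.hpos hx (dom_trunc φ p N x)
    have d3 := dom_sub φ hS.hpos hx (dom_trunc φ p (N + 1) x)
    have d4 := dom_smul φ hS.hpos (a N) d1
    have d5 := dom_smul φ hS.hpos (⟪g, x⟫ - a N) hgd
    rw [e]
    refine (sNorm_sub_le φ hS.hpos (dom_smul φ hS.hpos _ (dom_add φ hS.hpos d4 d5))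
      (dom_smul φ hS.hpos _ (dom_sub φ hS.hpos d2 d3))).trans ?_
    rw [sNorm_smul, sNorm_smul]
    refine add_le_add (mul_le_mul_of_nonneg_left ?_ (norm_nonneg _))
      (mul_le_mul_of_nonneg_left (sNorm_sub_le φ hS.hpos d2 d3) (norm_nonneg _))
    refine (sNorm_add_le φ hS.hpos d4 d5).trans ?_
    rw [sNorm_smul, sNorm_smul]

lemma inner_refl {g : H} (hg : ‖g‖ = 1) {ζ : ℂ} (hζ : ‖ζ‖ = 1) (x y : H) :
    ⟪cplxRefl g ζ x, cplxRefl g ζ y⟫ = ⟪x, y⟫ := by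
  have hgg : ⟪g, g⟫ = 1 := by rw [inner_self_eq_norm_sq_to_K, hg]; norm_num
  have hζζ : starRingEnd ℂ ζ * ζ = 1 := by rw [Complex.conj_mul', hζ]; norm_num
  simp only [cplxRefl, inner_add_left, inner_add_right, inner_smul_left, inner_smul_right, hgg,
    map_mul, map_sub, map_one, inner_conj_symm]
  linear_combination (⟪x, g⟫ * ⟪g, y⟫) * hζζ

/-- A complex reflection along `x - f` takes `x` to the vector `f` of the same norm; contrary
to a real reflection, its factor is adapted to the phase of the inner product. -/
lemma exists_refl {x f : H} (hnorm : ‖x‖ = ‖f‖) (hne : x ≠ f) :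
    ∃ ζ : ℂ, ‖ζ‖ = 1 ∧ cplxRefl ((‖x - f‖ : ℂ)⁻¹ • (x - f)) ζ x = f := by
  set z := ⟪x - f, x⟫ with hz
  have hw0 : 0 < ‖x - f‖ := norm_pos_iff.2 (sub_ne_zero.2 hne)
  have hwc : (‖x - f‖ : ℂ) ≠ 0 := by exact_mod_cast hw0.ne'
  have hsum : z + starRingEnd ℂ z = (‖x - f‖ : ℂ) ^ 2 := by
    have h1 : ⟪x - f, x - f⟫ = (‖x - f‖ : ℂ) ^ 2 := inner_self_eq_norm_sq_to_K _
    have h2 : ⟪x, x⟫ = ⟪f, f⟫ := by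
      rw [inner_self_eq_norm_sq_to_K, inner_self_eq_norm_sq_to_K, hnorm]
    rw [← h1, hz, inner_conj_symm]
    simp only [inner_sub_left, inner_sub_right]
    linear_combination h2
  have hz0 : z ≠ 0 := by
    intro h
    rw [h, map_zero, add_zero] at hsum
    exact pow_ne_zero 2 hwc hsum.symm
  refine ⟨-(starRingEnd ℂ z) / z, ?_, ?_⟩
  · rw [norm_div, norm_neg, RCLike.norm_conj, div_self (norm_ne_zero_iff.2 hz0)]
  · rw [cplxRefl, inner_smul_left, smul_smul, ← hz, map_inv₀, Complex.conj_ofReal]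
    have : (-(starRingEnd ℂ z) / z - 1) * ((‖x - f‖ : ℂ)⁻¹ * z) * (‖x - f‖ : ℂ)⁻¹ = -1 := by
      field_simp
      linear_combination -hsum
    rw [this]
    module

/-- A family can be moved onto any family of `D(|A|^p)` with the same inner products by a product
of reflections: the reflection treating one vector fixes those already in place. -/
lemma exists_app_family (hS : Sys φ lam k B c d r Υ) (hp : 0 ≤ p) (hpk : p < k / 2)
    (hfull : ∀ x y, x ≠ y → Full φ lam Υ p (φ x) (φ y)) {n : ℕ} (ψ f : Fin n → H)
    (hψ : ∀ j, ψ j ∈ domAs φ lam p) (hf : ∀ j, f j ∈ domAs φ lam p)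
    (hgram : ∀ i j, ⟪ψ i, ψ j⟫ = ⟪f i, f j⟫) (m : ℕ) :
    ∃ W : H → H, App φ lam Υ p W ∧ (∀ x y, ⟪W x, W y⟫ = ⟪x, y⟫) ∧
      ∀ j : Fin n, (j : ℕ) < m → W (ψ j) = f j := by
  induction m with
  | zero =>
    refine ⟨id, ?_, fun _ _ => rfl, fun j hj => absurd hj (Nat.not_lt_zero _)⟩
    have := hfull 0 1 (by norm_num) 1 0 (by simp)
    convert this using 1
    funext x
    rw [G_one, id]
  | succ m ih =>
    obtain ⟨W, hW, hWi, hWj⟩ := ih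
    by_cases hm : m < n
    swap
    · exact ⟨W, hW, hWi, fun j _ => hWj j (by omega)⟩
    set i : Fin n := ⟨m, hm⟩ with hi
    by_cases hx : W (ψ i) = f i
    · refine ⟨W, hW, hWi, fun j hj => ?_⟩
      rcases Nat.lt_succ_iff_lt_or_eq.1 hj with h | h
      · exact hWj j h
      · obtain rfl : j = i := Fin.ext h
        exact hx
    have hnorm : ‖W (ψ i)‖ = ‖f i‖ := by
      have h1 : ⟪W (ψ i), W (ψ i)⟫ = ⟪f i, f i⟫ := by rw [hWi, hgram]
      rw [inner_self_eq_norm_sq_to_K, inner_self_eq_norm_sq_to_K] at h1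
      exact (sq_eq_sq₀ (norm_nonneg _) (norm_nonneg _)).1 (by exact_mod_cast h1)
    obtain ⟨ζ, hζ, hmap⟩ := exists_refl hnorm hx
    set g := (‖W (ψ i) - f i‖ : ℂ)⁻¹ • (W (ψ i) - f i) with hg
    have hg1 : ‖g‖ = 1 := by
      rw [hg, norm_smul, norm_inv, Complex.norm_real, norm_norm,
        inv_mul_cancel₀ (norm_ne_zero_iff.2 (sub_ne_zero.2 hx))]
    have hgd : g ∈ domAs φ lam p :=
      dom_smul φ hS.hpos _ (dom_sub φ hS.hpos (hW.1 _ (hψ i)) (hf i))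
    refine ⟨fun x => cplxRefl g ζ (W x),
      hS.app_comp hp hpk (app_refl hS hp hpk hfull hg1 hgd hζ) hW,
      fun x y => by rw [inner_refl hg1 hζ, hWi], fun j hj => ?_⟩
    rcases Nat.lt_succ_iff_lt_or_eq.1 hj with h | h
    · have horth : ⟪g, f j⟫ = 0 := by
        rw [hg, inner_smul_left, inner_sub_left, ← hgram i j, ← hWj j h, hWi, sub_self, mul_zero]
      simp only [hWj j h, cplxRefl, horth, mul_zero, zero_smul, add_zero]
    · obtain rfl : j = i := Fin.ext h
      exact hmap

end Reflections

/-! ### Simultaneous controllability -/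

theorem stmt17 {H : Type*} [NormedAddCommGroup H] [InnerProductSpace ℂ H] [CompleteSpace H]
    (φ : HilbertBasis ℕ ℂ H) (lam : ℕ → ℝ)
    (hpos : ∀ n, 0 < lam n) (hmono : Monotone lam) (htop : Tendsto lam atTop atTop)
    (k : ℝ) (hk : 0 < k)
    (B : H → H) (hBlin : IsLinearMap ℂ B)
    (c : ℝ) (hc : 0 ≤ c)
    -- (i) k-weak-coupling inequality
    (hwc : ∀ ψ ∈ domAs φ lam k,
      |(⟪absApow φ lam k ψ, B ψ⟫).re| ≤ c * ∑' n, lam n ^ k * ‖φ.repr ψ n‖ ^ 2)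
    -- (ii) bound `‖Bψ‖ ≤ d ‖ψ‖_{r/2}`
    (d : ℝ) (hd : 0 < d) (r : ℝ) (hr : 0 ≤ r) (hrk : r < k)
    (hB : ∀ ψ ∈ domAs φ lam (r / 2), ‖B ψ‖ ≤ d * sNorm φ lam (r / 2) ψ)
    -- (iii) a non-degenerate connectedness chain
    (S : Set (ℕ × ℕ)) (hchain : ConnectednessChain φ B S)
    (hnondeg : NonDegenerate φ lam B S)
    -- the propagator assignment
    (Υ : (ℝ → ℝ) → ℝ → (H ≃ₗᵢ[ℂ] H))
    (hΥ0 : ∀ u, Υ u 0 = LinearIsometryEquiv.refl ℂ H)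
    -- concatenation over subdivision of controls
    (hconcat : ∀ (u₁ u₂ : ℝ → ℝ) (T₁ : ℝ), 0 ≤ T₁ → ∀ t : ℝ, 0 ≤ t → ∀ ψ : H,
      Υ (fun τ => if τ < T₁ then u₁ τ else u₂ (τ - T₁)) (T₁ + t) ψ = Υ u₂ t (Υ u₁ T₁ ψ))
    -- trajectories from `D(|A|^{k/2})` stay there, solve the equation (integrated
    -- form) and obey the energy estimate
    (htraj : ∀ T > (0 : ℝ), ∀ u : ℝ → ℝ, PiecewiseConstant u T →
      ∀ ψ ∈ domAs φ lam (k / 2), ∀ t ∈ Set.Icc (0 : ℝ) T,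
        Υ u t ψ ∈ domAs φ lam (k / 2) ∧
          Υ u t ψ = ψ + ∫ τ in (0 : ℝ)..t, (Aop φ lam (Υ u τ ψ) + u τ • B (Υ u τ ψ)) ∧
          sNorm φ lam (k / 2) (Υ u t ψ) ≤
            Real.exp (c * ∫ τ in (0 : ℝ)..T, |u τ|) * sNorm φ lam (k / 2) ψ) :
    -- approximate simultaneous controllability in the s/2-norm for every 0 ≤ s < k
    ∀ s : ℝ, 0 ≤ s → s < k →
      ∀ (n : ℕ) (ψ : Fin n → H), (∀ j, ψ j ∈ domAs φ lam (s / 2)) →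
        ∀ Uhat : H ≃ₗᵢ[ℂ] H, (∀ j, Uhat (ψ j) ∈ domAs φ lam (s / 2)) →
          ∀ ε > (0 : ℝ), ∃ T > (0 : ℝ), ∃ u : ℝ → ℝ, PiecewiseConstant u T ∧
            ∀ j, sNorm φ lam (s / 2) (Uhat (ψ j) - Υ u T (ψ j)) < ε := by

  intro s hs hsk n ψ hψ Uhat hU ε hε
  have hS : Sys φ lam k B c d r Υ :=
    ⟨hpos, htop, hk, hBlin, hc, hd, hr, hrk, hB, hΥ0, hconcat, htraj⟩
  have hp : 0 ≤ s / 2 := by linarith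
  have hpk : s / 2 < k / 2 := by linarith
  obtain ⟨W, hW, -, hWψ⟩ := exists_app_family hS hp hpk
    (fun x y hxy => full_basis hS hp hpk (fun j l => (hchain j l).path hnondeg) hxy)
    ψ (fun j => Uhat (ψ j)) hψ hU (fun i j => (Uhat.inner_map_map _ _).symm) n
  obtain ⟨T, hT, u, hu, hb⟩ := hW.2 (Set.range ψ) (Set.finite_range ψ)
    (by rintro _ ⟨j, rfl⟩; exact hψ j) ε hε
  refine ⟨T, hT, u, hu, fun j => ?_⟩
  have := hb (ψ j) ⟨j, rfl⟩
  rwa [hWψ j j.2] at this
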